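/- arXiv:math/0012187 — 2 statements merged into one kernel-verified Lean document; each statement's English description precedes it below -/
import Mathlib

section
/- Let D be a domain in ℂ^n with n ≥ 2 and fix 0 < r < t. For z' ∈ ℂ^{n-1} set K(z') := { z_n ∈ ℂ : |z_n| < t and (z', z_n) ∉ D }. Assume that K(0') is polar and that there is a neighborhood V of 0' in ℂ^{n-1} such that for almost every z' ∈ V (with respect to (2n-2)-dimensional Lebesgue measure) the set K(z') is polar. Then there exists a neighborhood V' of 0' with V' ⊂ V such that for every f ∈ L²_h(D) there exists a holomorphic function F on V' × {z_n : |z_n| < r} with F = f on (V' × {z_n : |z_n| < r}) ∩ D. -/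
open MeasureTheory Filter Topology Metric Set
open scoped ENNReal NNReal

/-- Truncated circle average of an `EReal`-valued function: the average over the circle of
center `c` and radius `R` of the function truncated below at `-n`. -/
noncomputable def circleAvgTrunc (u : ℂ → EReal) (c : ℂ) (R : ℝ) (n : ℕ) : ℝ :=
  (2 * Real.pi)⁻¹ * ∫ θ in (0:ℝ)..(2 * Real.pi),
    (max (u (c + R * Complex.exp (θ * Complex.I))) (-(n : ℝ) : EReal)).toReal

/-- `u` is subharmonic on `Ω ⊆ ℂ`: values in `[-∞, ∞)`, upper semicontinuous on `Ω`, and for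
every closed disc contained in `Ω` the value at the center is at most the mean over the
boundary circle (in the extended sense, via decreasing truncations). -/
def SubharmonicOn (u : ℂ → EReal) (Ω : Set ℂ) : Prop :=
  UpperSemicontinuousOn u Ω ∧ (∀ z ∈ Ω, u z < ⊤) ∧
    ∀ c ∈ Ω, ∀ R : ℝ, 0 < R → Metric.closedBall c R ⊆ Ω →
      u c ≤ ⨅ n : ℕ, (circleAvgTrunc u c R n : EReal)

/-- `u` is plurisubharmonic on `Ω`: values in `[-∞, ∞)`, upper semicontinuous on `Ω`, and its
restriction to every complex line is subharmonic. -/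
def PlurisubharmonicOn {E : Type*} [NormedAddCommGroup E] [NormedSpace ℂ E]
    (u : E → EReal) (Ω : Set E) : Prop :=
  UpperSemicontinuousOn u Ω ∧ (∀ z ∈ Ω, u z < ⊤) ∧
    ∀ a b : E, SubharmonicOn (fun lam : ℂ => u (a + lam • b)) {lam : ℂ | a + lam • b ∈ Ω}

/-- A set `P ⊆ ℂ` is polar. -/
def PolarSet (P : Set ℂ) : Prop :=
  ∀ z ∈ P, ∃ U : Set ℂ, IsOpen U ∧ IsConnected U ∧ z ∈ U ∧
    ∃ u : ℂ → EReal, SubharmonicOn u U ∧ (∃ x ∈ U, u x ≠ ⊥) ∧ ∀ x ∈ P ∩ U, u x = ⊥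

/-- A set `P ⊆ ℂⁿ` is pluripolar. -/
def PluripolarSet {E : Type*} [NormedAddCommGroup E] [NormedSpace ℂ E] (P : Set E) : Prop :=
  ∀ z ∈ P, ∃ U : Set E, IsOpen U ∧ IsConnected U ∧ z ∈ U ∧
    ∃ u : E → EReal, PlurisubharmonicOn u U ∧ (∃ x ∈ U, u x ≠ ⊥) ∧ ∀ x ∈ P ∩ U, u x = ⊥

/-- A domain `D` is pseudoconvex if `z ↦ -log dist(z, ∂D)` is plurisubharmonic on `D`. -/
def IsPseudoconvex {E : Type*} [NormedAddCommGroup E] [NormedSpace ℂ E] (D : Set E) : Prop :=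
  PlurisubharmonicOn (fun z => ((- Real.log (Metric.infDist z Dᶜ) : ℝ) : EReal)) D

/-- The square-integrable holomorphic functions on an open set `Ω`. -/
def L2h {E : Type*} [NormedAddCommGroup E] [NormedSpace ℂ E] [MeasureSpace E]
    (Ω : Set E) : Set (E → ℂ) :=
  {f | DifferentiableOn ℂ f Ω ∧ (∫⁻ z in Ω, (‖f z‖₊ : ℝ≥0∞) ^ 2) < ⊤}

/-- The Bergman kernel of `Ω` on the diagonal,
`K_Ω(z) = sup { |f(z)|²/‖f‖²_{L²(Ω)} : f ∈ L²ₕ(Ω), f ≢ 0 }`. -/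
noncomputable def bergmanKernel {E : Type*} [NormedAddCommGroup E] [NormedSpace ℂ E]
    [MeasureSpace E] (Ω : Set E) (z : E) : ℝ≥0∞ :=
  ⨆ (f : E → ℂ) (_ : f ∈ L2h Ω) (_ : ∃ w ∈ Ω, f w ≠ 0),
    (‖f z‖₊ : ℝ≥0∞) ^ 2 / ∫⁻ w in Ω, (‖f w‖₊ : ℝ≥0∞) ^ 2

/-- `D` is an `L²ₕ`-domain of holomorphy: there are no domains `D₀, D₁` with
`∅ ≠ D₀ ⊆ D₁ ∩ D`, `D₁ ⊄ D`, such that every `f ∈ L²ₕ(D)` extends holomorphically to `D₁`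
(agreeing with `f` on `D₀`). -/
def IsL2hDomainOfHolomorphy {E : Type*} [NormedAddCommGroup E] [NormedSpace ℂ E]
    [MeasureSpace E] (D : Set E) : Prop :=
  ¬ ∃ D0 D1 : Set E, IsOpen D0 ∧ IsConnected D0 ∧ IsOpen D1 ∧ IsConnected D1 ∧
      D0 ⊆ D1 ∩ D ∧ ¬ (D1 ⊆ D) ∧
      ∀ f ∈ L2h D, ∃ F : E → ℂ, DifferentiableOn ℂ F D1 ∧ Set.EqOn F f D0

/-- `w` is a regular boundary point of the domain `D ⊆ ℂ`. -/
def RegularBoundaryPt (D : Set ℂ) (w : ℂ) : Prop :=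
  ∃ U : Set ℂ, IsOpen U ∧ w ∈ U ∧ ∃ u : ℂ → EReal, SubharmonicOn u (U ∩ D) ∧
    (∀ z ∈ U ∩ D, u z < 0) ∧ Tendsto u (𝓝[U ∩ D] w) (𝓝 (0 : EReal))

/-- The (pluricomplex) Green function of a domain `D ⊆ ℂ` with logarithmic pole at `p`. -/
noncomputable def greenFn (D : Set ℂ) (p z : ℂ) : EReal :=
  sSup {v : EReal | ∃ u : ℂ → EReal, SubharmonicOn u D ∧ (∀ x ∈ D, u x < 0) ∧
    (∃ C : ℝ, ∀ᶠ x in 𝓝 p, u x ≤ ((Real.log ‖x - p‖ + C : ℝ) : EReal)) ∧ v = u z}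

/-- A polydisc in `ℂⁿ` with centre `c` and multiradius `r`. -/
def polydisc {n : ℕ} (c : Fin n → ℂ) (r : Fin n → ℝ) : Set (Fin n → ℂ) :=
  {z | ∀ i, ‖z i - c i‖ < r i}


def SmallCap (K : Set ℂ) : Prop :=
  ∀ ε : ℝ, 0 < ε → ∃ χ : ℂ → ℝ, ContDiff ℝ 1 χ ∧ HasCompactSupport χ ∧
    (∀ z, 0 ≤ χ z ∧ χ z ≤ 1) ∧ (∃ O, IsOpen O ∧ K ⊆ O ∧ ∀ z ∈ O, χ z = 1) ∧
    (∫ z, χ z ^ 2) ≤ ε ∧ (∫ z, ‖fderiv ℝ χ z‖ ^ 2) ≤ ε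

lemma integral_fderiv_zero {E : Type*} [NormedAddCommGroup E] [NormedSpace ℝ E]
    {H : ℂ → E} (hH : ContDiff ℝ 1 H) (hc : HasCompactSupport H) (v : ℂ) :
    ∫ z, fderiv ℝ H z v = 0 := by
  have hcd : Continuous (fun z => fderiv ℝ H z v) :=
    (hH.continuous_fderiv (by simp)).clm_apply continuous_const
  have hcs : HasCompactSupport (fun z => fderiv ℝ H z v) := by
    exact (hc.fderiv_apply (𝕜 := ℝ) v)
  have := integral_smul_fderiv_eq_neg_fderiv_smul_of_integrable (μ := (volume : Measure ℂ))
    (𝕜 := ℝ) (f := fun _ : ℂ => (1:ℝ)) (g := H) (v := v) (by simp)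
    (by simpa using hcd.integrable_of_hasCompactSupport hcs)
    (by simpa using hH.continuous.integrable_of_hasCompactSupport hc)
    (fun x _ => by fun_prop) (fun x _ => (hH.differentiable (by simp)) x)
  simpa using this

lemma polar_mem (ρ θ : ℝ) : Complex.polarCoord.symm (ρ, θ) = ρ * Complex.exp (θ * Complex.I) := by
  rw [Complex.exp_mul_I]; simp

lemma measurable_polar : Measurable (fun p : ℝ × ℝ => (p.1 : ℂ) * Complex.exp (p.2 * Complex.I)) := by
  fun_prop

lemma polar_integrable {E : Type*} [NormedAddCommGroup E] [NormedSpace ℝ E]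
    {f : ℂ → E} (hm : StronglyMeasurable f) (hf : Integrable f) :
    IntegrableOn (fun p : ℝ × ℝ => p.1 • f (p.1 * Complex.exp (p.2 * Complex.I)))
      (Ioi 0 ×ˢ Ioo (-Real.pi) Real.pi) := by
  refine ⟨?_, ?_⟩
  · exact (measurable_fst.stronglyMeasurable.smul
      (hm.comp_measurable measurable_polar)).aestronglyMeasurable
  · have h1 := Complex.lintegral_comp_polarCoord_symm (fun z => ‖f z‖ₑ)
    have h2 : ∫⁻ p, ‖f p‖ₑ < ⊤ := hf.2
    rw [← h1] at h2
    refine lt_of_le_of_lt (le_of_eq ?_) h2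
    refine setLIntegral_congr_fun (measurableSet_Ioi.prod measurableSet_Ioo) ?_
    rintro ⟨ρ, θ⟩ ⟨h, -⟩
    simp only [mem_Ioi] at h
    simp only [polar_mem, enorm_smul, smul_eq_mul]
    congr 1
    rw [Real.enorm_eq_ofReal h.le]

lemma polar_integral {E : Type*} [NormedAddCommGroup E] [NormedSpace ℝ E]
    {f : ℂ → E} (hm : StronglyMeasurable f) (hf : Integrable f) :
    ∫ z, f z = ∫ ρ in Ioi (0:ℝ), ρ • ∫ θ in (-Real.pi)..Real.pi,
      f (ρ * Complex.exp (θ * Complex.I)) := by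
  rw [← Complex.integral_comp_polarCoord_symm, polarCoord_target]
  have := polar_integrable hm hf
  simp_rw [← polar_mem] at this
  rw [Measure.volume_eq_prod] at this ⊢
  rw [setIntegral_prod _ this]
  refine integral_congr_ae (Eventually.of_forall fun ρ => ?_)
  simp only [polar_mem]
  rw [integral_smul, intervalIntegral.integral_of_le (by linarith [Real.pi_pos]),
    integral_Ioc_eq_integral_Ioo]

lemma SmallCap.mono {K L : Set ℂ} (h : SmallCap L) (hKL : K ⊆ L) : SmallCap K := by
  intro ε hε
  obtain ⟨χ, h1, h2, h3, ⟨O, hO, hLO, hO1⟩, h4⟩ := h ε hε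
  exact ⟨χ, h1, h2, h3, ⟨O, hO, hKL.trans hLO, hO1⟩, h4⟩

lemma SmallCap.empty : SmallCap ∅ := by
  intro ε hε
  refine ⟨fun _ => 0, contDiff_const, HasCompactSupport.zero, by simp, ⟨∅, isOpen_empty, by simp, by simp⟩,
    by simp [hε.le], ?_⟩
  simp [hε.le]

lemma int_sq {χ : ℂ → ℝ} (h1 : ContDiff ℝ 1 χ) (h2 : HasCompactSupport χ) :
    Integrable (fun z => χ z ^ 2) := by
  have hc : Continuous (fun z => χ z ^ 2) := h1.continuous.pow 2
  refine hc.integrable_of_hasCompactSupport ?_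
  refine h2.mono fun z hz => ?_
  simp only [Function.mem_support] at hz ⊢
  contrapose! hz
  simp [hz]

lemma int_dsq {χ : ℂ → ℝ} (h1 : ContDiff ℝ 1 χ) (h2 : HasCompactSupport χ) :
    Integrable (fun z => ‖fderiv ℝ χ z‖ ^ 2) := by
  have hc : Continuous (fun z => ‖fderiv ℝ χ z‖ ^ 2) :=
    (h1.continuous_fderiv (by simp)).norm.pow 2
  refine hc.integrable_of_hasCompactSupport ?_
  refine (h2.fderiv ℝ).mono fun z hz => ?_
  simp only [Function.mem_support] at hz ⊢
  contrapose! hz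
  simp [hz]

lemma SmallCap.union {K L : Set ℂ} (hK : SmallCap K) (hL : SmallCap L) : SmallCap (K ∪ L) := by
  intro ε hε
  obtain ⟨χ, h1, h2, h3, ⟨O, hO, hKO, hO1⟩, h4, h5⟩ := hK (ε / 4) (by positivity)
  obtain ⟨χ', h1', h2', h3', ⟨O', hO', hKO', hO1'⟩, h4', h5'⟩ := hL (ε / 4) (by positivity)
  have hC : ContDiff ℝ 1 (fun z => χ z + χ' z - χ z * χ' z) := by fun_prop
  have hS : HasCompactSupport (fun z => χ z + χ' z - χ z * χ' z) := by
    have := (h2.add h2').sub (h2.mul_right (f' := χ'))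
    exact this
  have e1 := int_sq h1 h2
  have e2 := int_sq h1' h2'
  have f1 := int_dsq h1 h2
  have f2 := int_dsq h1' h2'
  refine ⟨fun z => χ z + χ' z - χ z * χ' z, hC, hS, ?_, ⟨O ∪ O', hO.union hO', union_subset_union hKO hKO', ?_⟩, ?_, ?_⟩
  · intro z
    have := h3 z; have := h3' z
    constructor <;> nlinarith
  · rintro z (hz | hz)
    · simp [hO1 z hz]
    · simp [hO1' z hz]
  · calc _ ≤ ∫ z, (2 * χ z ^ 2 + 2 * χ' z ^ 2) := by
          refine integral_mono (int_sq hC hS) ((e1.const_mul 2).add (e2.const_mul 2)) fun z => ?_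
          have a := h3 z; have b := h3' z
          have q : 0 ≤ χ z * χ' z := mul_nonneg a.1 b.1
          have q2 : 0 ≤ χ z + χ' z - χ z * χ' z := by nlinarith
          have : (χ z + χ' z - χ z * χ' z)^2 ≤ (χ z + χ' z)^2 := by
            apply pow_le_pow_left₀ q2; linarith
          have := sq_nonneg (χ z - χ' z)
          simp only; nlinarith
      _ ≤ ε := by
          rw [integral_add (e1.const_mul 2) (e2.const_mul 2), integral_const_mul, integral_const_mul]
          linarith
  · calc _ ≤ ∫ z, (2 * ‖fderiv ℝ χ z‖ ^ 2 + 2 * ‖fderiv ℝ χ' z‖ ^ 2) := by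
          refine integral_mono (int_dsq hC hS) ((f1.const_mul 2).add (f2.const_mul 2)) fun z => ?_
          have a := h3 z; have b := h3' z
          have d := (h1.differentiable (by simp)) z
          have d' := (h1'.differentiable (by simp)) z
          have : fderiv ℝ (fun z => χ z + χ' z - χ z * χ' z) z
              = (1 - χ' z) • fderiv ℝ χ z + (1 - χ z) • fderiv ℝ χ' z := by
            have := ((d.hasFDerivAt.add d'.hasFDerivAt).sub (d.hasFDerivAt.mul d'.hasFDerivAt)).fderiv
            erw [this]
            module
          simp only [this]
          have n1 : ‖(1 - χ' z) • fderiv ℝ χ z + (1 - χ z) • fderiv ℝ χ' z‖ ≤ ‖fderiv ℝ χ z‖ + ‖fderiv ℝ χ' z‖ := by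
            refine (norm_add_le _ _).trans ?_
            rw [norm_smul, norm_smul, Real.norm_of_nonneg (by linarith), Real.norm_of_nonneg (by linarith)]
            have := norm_nonneg (fderiv ℝ χ z); have := norm_nonneg (fderiv ℝ χ' z)
            nlinarith
          have := pow_le_pow_left₀ (norm_nonneg _) n1 2
          have := sq_nonneg (‖fderiv ℝ χ z‖ - ‖fderiv ℝ χ' z‖)
          nlinarith
      _ ≤ ε := by
          rw [integral_add (f1.const_mul 2) (f2.const_mul 2), integral_const_mul, integral_const_mul]
          linarith


lemma polar_radial_integrable {E : Type*} [NormedAddCommGroup E] [NormedSpace ℝ E]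
    {f : ℂ → E} (hm : StronglyMeasurable f) (hf : Integrable f) :
    IntegrableOn (fun ρ : ℝ => ρ • ∫ θ in (-Real.pi)..Real.pi,
      f (ρ * Complex.exp (θ * Complex.I))) (Ioi 0) := by
  have := polar_integrable hm hf
  rw [Measure.volume_eq_prod, IntegrableOn, ← Measure.prod_restrict] at this
  have h2 := this.integral_prod_left
  refine h2.congr (Eventually.of_forall fun ρ => ?_)
  simp only
  rw [integral_smul, intervalIntegral.integral_of_le (by linarith [Real.pi_pos]),
    integral_Ioc_eq_integral_Ioo]

lemma exists_circle {K : Set ℂ} (hK : SmallCap K) {a b : ℝ} (ha : 0 < a) (hab : a < b) :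
    ∃ s ∈ Ioo a b, ∀ z ∈ K, ‖z‖ ≠ s := by
  by_contra! hcon
  have hpi := Real.pi_pos
  set C : ℝ := (2 * Real.pi * b) ^ 2 with hC
  have hCp : 0 ≤ C := sq_nonneg _
  have hba : 0 < b - a := by linarith
  obtain ⟨χ, h1, h2, h3, ⟨O, hO, hKO, hO1⟩, h4, h5⟩ := hK (a * (b - a) * (Real.pi / 4) / (2 * (1 + C)))
    (by positivity)
  have hcD : Continuous (fderiv ℝ χ) := h1.continuous_fderiv (by simp)
  set Q : ℂ → ℝ := fun z => χ z ^ 2 + C * ‖fderiv ℝ χ z‖ ^ 2 with hQ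
  have hQc : Continuous Q := by
    have := h1.continuous
    fun_prop
  have hQi : Integrable Q := (int_sq h1 h2).add ((int_dsq h1 h2).const_mul C)
  have hQ0 : ∀ z, 0 ≤ Q z := fun z => by simp only [hQ]; positivity
  have hce : ∀ s : ℝ, Continuous (fun θ : ℝ => (s:ℂ) * Complex.exp (θ * Complex.I)) := by
    intro s; fun_prop
  -- circle estimate
  have key : ∀ s ∈ Ioo a b, Real.pi / 4 ≤ ∫ θ in (-Real.pi)..Real.pi, Q (s * Complex.exp (θ * Complex.I)) := by
    intro s hs
    have hs0 : 0 < s := ha.trans hs.1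
    obtain ⟨z, hzK, hzs⟩ := hcon s hs
    set α := Complex.arg z
    have hz : (s:ℂ) * Complex.exp (α * Complex.I) = z := by
      rw [← hzs]; exact Complex.norm_mul_exp_arg_mul_I z
    set g : ℝ → ℝ := fun θ => χ (s * Complex.exp (θ * Complex.I)) with hg
    set d : ℝ → ℝ := fun θ => ‖fderiv ℝ χ (s * Complex.exp (θ * Complex.I))‖ with hd
    have hdc : Continuous d := by
      exact (hcD.comp (hce s)).norm
    have hgc : Continuous g := h1.continuous.comp (hce s)
    have hder : ∀ θ : ℝ, HasDerivAt g (fderiv ℝ χ (s * Complex.exp (θ * Complex.I))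
        (s * (Complex.exp (θ * Complex.I) * Complex.I))) θ := by
      intro θ
      have e1 : HasDerivAt (fun θ : ℝ => (s:ℂ) * Complex.exp (θ * Complex.I))
          (s * (Complex.exp (θ * Complex.I) * Complex.I)) θ := by
        have : HasDerivAt (fun θ : ℝ => (θ:ℂ) * Complex.I) (Complex.I) θ := by
          simpa using (Complex.ofRealCLM.hasDerivAt (x := θ)).mul_const Complex.I
        exact (this.cexp).const_mul _
      exact ((h1.differentiable (by simp)) _).hasFDerivAt.comp_hasDerivAt θ e1
    have hderb : ∀ θ : ℝ, ‖fderiv ℝ χ (s * Complex.exp (θ * Complex.I))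
        (s * (Complex.exp (θ * Complex.I) * Complex.I))‖ ≤ s * d θ := by
      intro θ
      refine (ContinuousLinearMap.le_opNorm _ _).trans (le_of_eq ?_)
      rw [norm_mul, norm_mul, Complex.norm_exp_ofReal_mul_I]
      simp [hd, abs_of_pos hs0, mul_comm]
    have hderc : Continuous (fun θ : ℝ => fderiv ℝ χ (s * Complex.exp (θ * Complex.I))
        (s * (Complex.exp (θ * Complex.I) * Complex.I))) :=
      (hcD.comp (hce s)).clm_apply (by fun_prop)
    have hosc : ∀ θ ∈ Icc (-Real.pi) Real.pi, 1 ≤ g θ + b * ∫ τ in (-Real.pi)..Real.pi, d τ := by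
      intro θ hθ
      have e1 := intervalIntegral.integral_eq_sub_of_hasDerivAt (a := θ) (b := α)
        (fun x _ => hder x) (hderc.intervalIntegrable _ _)
      have e2 : g α = 1 := by
        simp only [hg, hz]; exact hO1 z (hKO hzK)
      have e3 := intervalIntegral.norm_integral_le_integral_norm_uIoc (a := θ) (b := α) (μ := volume)
        (f := (fun θ : ℝ => fderiv ℝ χ (s * Complex.exp (θ * Complex.I))
        (s * (Complex.exp (θ * Complex.I) * Complex.I))))
      have e4 : ∫ τ in uIoc θ α, ‖fderiv ℝ χ (s * Complex.exp (τ * Complex.I))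
        (s * (Complex.exp (τ * Complex.I) * Complex.I))‖ ≤ ∫ τ in Ioc (-Real.pi) Real.pi, s * d τ := by
        calc _ ≤ ∫ τ in uIoc θ α, s * d τ := by
              apply setIntegral_mono
              · exact ((hderc.norm).intervalIntegrable θ α).def'
              · exact ((continuous_const.mul hdc).intervalIntegrable θ α).def'
              · intro τ; exact hderb τ
          _ ≤ _ := by
              apply setIntegral_mono_set
              · exact ((continuous_const.mul hdc).intervalIntegrable (-Real.pi) Real.pi).1
              · exact Eventually.of_forall fun τ => mul_nonneg hs0.le (norm_nonneg _)
              · apply LE.le.eventuallyLE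
                intro x hx
                rw [uIoc, mem_Ioc] at hx
                have a1 := Complex.neg_pi_lt_arg z
                have a2 := Complex.arg_le_pi z
                exact ⟨lt_of_le_of_lt (le_min hθ.1 a1.le) hx.1, hx.2.trans (max_le hθ.2 a2)⟩
      rw [integral_const_mul, ← intervalIntegral.integral_of_le (by linarith)] at e4
      have e5 : 0 ≤ ∫ τ in (-Real.pi)..Real.pi, d τ :=
        intervalIntegral.integral_nonneg (by linarith) fun x _ => norm_nonneg _
      have e6 : g α - g θ ≤ s * ∫ τ in (-Real.pi)..Real.pi, d τ := by
        rw [← e1]; exact (le_abs_self _).trans (e3.trans e4)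
      have : s * ∫ τ in (-Real.pi)..Real.pi, d τ ≤ b * ∫ τ in (-Real.pi)..Real.pi, d τ :=
        mul_le_mul_of_nonneg_right hs.2.le e5
      linarith
    have i1 : ∫ θ in (-Real.pi)..Real.pi, (1:ℝ) ≤ ∫ θ in (-Real.pi)..Real.pi, (g θ + b * ∫ τ in (-Real.pi)..Real.pi, d τ) :=
      intervalIntegral.integral_mono_on (by linarith) (by simp) 
        ((hgc.add continuous_const).intervalIntegrable _ _) hosc
    rw [intervalIntegral.integral_add (hgc.intervalIntegrable _ _) (by simp)] at i1
    simp only [intervalIntegral.integral_const, smul_eq_mul, mul_one] at i1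
    have i2 : ∫ θ in (-Real.pi)..Real.pi, (g θ + 2 * Real.pi * b * d θ) ≤ ∫ θ in (-Real.pi)..Real.pi,
        (1 / 2 + 4 * Q (s * Complex.exp (θ * Complex.I))) := by
      refine intervalIntegral.integral_mono_on (by linarith) ?_ ?_ ?_
      · exact (hgc.add (continuous_const.mul hdc)).intervalIntegrable _ _
      · exact (continuous_const.add (continuous_const.mul (hQc.comp (hce s)))).intervalIntegrable _ _
      · intro θ _
        simp only [hQ, hg, hd, hC]
        set x := χ (s * Complex.exp (θ * Complex.I))
        set y := ‖fderiv ℝ χ (s * Complex.exp (θ * Complex.I))‖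
        nlinarith [sq_nonneg (x - 1/8), sq_nonneg (2 * Real.pi * b * y - 1/8)]
    have j1 : IntervalIntegrable (fun θ => 2 * Real.pi * b * d θ) volume (-Real.pi) Real.pi :=
      (continuous_const.mul hdc).intervalIntegrable _ _
    have j2 : IntervalIntegrable (fun θ : ℝ => 4 * Q (s * Complex.exp (θ * Complex.I))) volume (-Real.pi) Real.pi :=
      (continuous_const.mul (hQc.comp (hce s))).intervalIntegrable _ _
    rw [intervalIntegral.integral_add (hgc.intervalIntegrable _ _) j1,
      intervalIntegral.integral_add (by simp) j2,
      intervalIntegral.integral_const_mul, intervalIntegral.integral_const_mul] at i2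
    simp only [intervalIntegral.integral_const, smul_eq_mul] at i2
    linarith
  have hp := polar_integral hQc.stronglyMeasurable hQi
  have hpi' := polar_radial_integrable hQc.stronglyMeasurable hQi
  have l1 : ∫ ρ in Ioo a b, a * (Real.pi / 4) ≤ ∫ z, Q z := by
    rw [hp]
    calc _ ≤ ∫ ρ in Ioo a b, ρ • ∫ θ in (-Real.pi)..Real.pi, Q (ρ * Complex.exp (θ * Complex.I)) := by
          refine setIntegral_mono_on (integrableOn_const (by simp)) (hpi'.mono_set ?_) measurableSet_Ioo ?_
          · intro x hx; exact ha.trans hx.1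
          · intro ρ hρ
            have := key ρ hρ
            rw [smul_eq_mul]
            exact mul_le_mul hρ.1.le this (by positivity) (ha.trans hρ.1).le
      _ ≤ _ := by
          refine setIntegral_mono_set hpi' ?_ ?_
          · refine (ae_restrict_iff' measurableSet_Ioi).2 (Eventually.of_forall fun ρ hρ => ?_)
            exact smul_nonneg (le_of_lt hρ) (intervalIntegral.integral_nonneg (by linarith) fun x _ => hQ0 _)
          · apply LE.le.eventuallyLE
            intro x hx; exact ha.trans hx.1
  have l2 : ∫ z, Q z ≤ (1 + C) * (a * (b - a) * (Real.pi / 4) / (2 * (1 + C))) := by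
    simp only [hQ]
    rw [integral_add (int_sq h1 h2) ((int_dsq h1 h2).const_mul C), integral_const_mul]
    nlinarith
  have l3 : (1 + C) * (a * (b - a) * (Real.pi / 4) / (2 * (1 + C))) = a * (b - a) * (Real.pi / 4) / 2 := by
    field_simp
  rw [l3] at l2
  simp only [integral_const, MeasurableSet.univ, measureReal_restrict_apply, univ_inter, Real.volume_real_Ioo_of_le hab.le, smul_eq_mul] at l1
  have : 0 < a * (b - a) * (Real.pi / 4) := by positivity
  nlinarith


noncomputable def dbar (φ : ℂ → ℝ) (z : ℂ) : ℂ :=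
  (fderiv ℝ φ z 1 : ℂ) + Complex.I * (fderiv ℝ φ z Complex.I : ℂ)

lemma dbar_cont {φ : ℂ → ℝ} (h1 : ContDiff ℝ 1 φ) : Continuous (dbar φ) := by
  have hc : ∀ v, Continuous (fun z => fderiv ℝ φ z v) := fun v =>
    (h1.continuous_fderiv (by simp)).clm_apply continuous_const
  have a := hc 1
  have b := hc Complex.I
  unfold dbar
  fun_prop

lemma dbar_supp {φ : ℂ → ℝ} (h1 : HasCompactSupport φ) : HasCompactSupport (dbar φ) := by
  refine (h1.fderiv ℝ).mono fun z hz => ?_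
  simp only [Function.mem_support] at hz ⊢
  contrapose! hz
  simp [dbar, hz]

lemma dbar_norm (φ : ℂ → ℝ) (z : ℂ) : ‖dbar φ z‖ ≤ 2 * ‖fderiv ℝ φ z‖ := by
  refine (norm_add_le _ _).trans ?_
  rw [norm_mul, Complex.norm_I, one_mul, Complex.norm_real, Complex.norm_real]
  have h1 := (fderiv ℝ φ z).le_opNorm 1
  have h2 := (fderiv ℝ φ z).le_opNorm Complex.I
  simp only [norm_one, Complex.norm_I, mul_one] at h1 h2
  linarith

lemma dbar_of_zero {φ : ℂ → ℝ} {z : ℂ} (h : φ =ᶠ[𝓝 z] fun _ => 0) : dbar φ z = 0 := by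
  simp [dbar, h.fderiv_eq]

lemma weak_hol {O : Set ℂ} (hO : IsOpen O) {G : ℂ → ℂ} (hG : DifferentiableOn ℂ G O)
    {φ : ℂ → ℝ} (h1 : ContDiff ℝ 1 φ) (h2 : HasCompactSupport φ)
    (h3 : ∀ z ∉ O, φ =ᶠ[𝓝 z] fun _ => 0) : ∫ z, G z * dbar φ z = 0 := by
  set H : ℂ → ℂ := fun z => (φ z : ℂ) * G z with hH
  have hcφ : ContDiff ℝ 1 (fun z => (φ z : ℂ)) := Complex.ofRealCLM.contDiff.comp h1
  have hHC : ContDiff ℝ 1 H := by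
    rw [contDiff_iff_contDiffAt]
    intro z
    by_cases hz : z ∈ O
    · have : ContDiffAt ℝ 1 G z :=
        ((hG.contDiffOn (n := 1) hO).contDiffAt (hO.mem_nhds hz)).restrict_scalars ℝ
      exact hcφ.contDiffAt.mul this
    · have : H =ᶠ[𝓝 z] fun _ => 0 := by
        filter_upwards [h3 z hz] with w hw
        simp [hH, hw]
      exact contDiffAt_const.congr_of_eventuallyEq this
  have hHS : HasCompactSupport H := by
    refine h2.mono fun z hz => ?_
    simp only [Function.mem_support] at hz ⊢
    contrapose! hz
    simp [hH, hz]
  have e1 := integral_fderiv_zero hHC hHS 1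
  have e2 := integral_fderiv_zero hHC hHS Complex.I
  have hi : ∀ v, Integrable (fun z => fderiv ℝ H z v) := fun v =>
    ((hHC.continuous_fderiv (by simp)).clm_apply continuous_const).integrable_of_hasCompactSupport
      (hHS.fderiv_apply (𝕜 := ℝ) v)
  have e3 : ∀ z, G z * dbar φ z = fderiv ℝ H z 1 + Complex.I * fderiv ℝ H z Complex.I := by
    intro z
    by_cases hz : z ∈ O
    · have g1 : HasFDerivAt G ((fderiv ℂ G z).restrictScalars ℝ) z :=
        ((hG.differentiableAt (hO.mem_nhds hz)).hasFDerivAt).restrictScalars ℝ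
      have g2 : HasFDerivAt (fun z => (φ z : ℂ)) (Complex.ofRealCLM.comp (fderiv ℝ φ z)) z :=
        Complex.ofRealCLM.hasFDerivAt.comp z ((h1.differentiable (by simp)) z).hasFDerivAt
      have g3 := (g2.mul g1).fderiv
      have g4 : (fun z => (φ z : ℂ)) * G = H := rfl
      have g5 : fderiv ℂ G z Complex.I = Complex.I * fderiv ℂ G z 1 := by
        rw [← smul_eq_mul, ← map_smul]; simp
      rw [g4] at g3
      rw [g3]
      simp only [dbar, add_apply, smul_apply, ContinuousLinearMap.comp_apply,
        ContinuousLinearMap.coe_restrictScalars', smul_eq_mul, Complex.ofRealCLM_apply, g5]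
      linear_combination -(φ z : ℂ) * (fderiv ℂ G z) 1 * Complex.I_mul_I
    · have : H =ᶠ[𝓝 z] fun _ => 0 := by
        filter_upwards [h3 z hz] with w hw
        simp [hH, hw]
      rw [dbar_of_zero (h3 z hz), this.fderiv_eq]
      simp
  simp_rw [e3]
  rw [integral_add (hi 1) ((hi _).const_mul _), integral_const_mul, e1, e2]
  simp

/-- radial polar computation -/
lemma radial_circle {O : Set ℂ} (hO : IsOpen O) {G : ℂ → ℂ} (hG : DifferentiableOn ℂ G O)
    {s s2 : ℝ} (hs : 0 < s) (hs2 : s < s2) (hann : ∀ z : ℂ, s ≤ ‖z‖ → ‖z‖ ≤ s2 → z ∈ O)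
    {g0 : ℂ → ℂ} (hg0 : g0 = O.indicator G) (hm : StronglyMeasurable g0)
    {B : ℝ → ℝ} (hB : ContDiff ℝ 1 B) (hB01 : ∀ y, 0 ≤ B y ∧ B y ≤ 1) (hB1 : ∀ y ≤ s ^ 2, B y = 1)
    (hB0 : ∀ y, s2 ^ 2 ≤ y → B y = 0)
    (hi : Integrable (fun z => g0 z * (2 * deriv B (‖z‖ ^ 2) * z))) :
    ∫ z, g0 z * (2 * deriv B (‖z‖ ^ 2) * z) = Complex.I * ∮ z in C(0, s), G z := by
  have hdB : Continuous (deriv B) := hB.continuous_deriv (by simp)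
  have hdz : ∀ y, y ∉ Ioo (s ^ 2) (s2 ^ 2) → deriv B y = 0 := by
    intro y hy
    by_cases h : y ≤ s ^ 2
    · refine IsLocalMax.deriv_eq_zero (Eventually.of_forall fun x => ?_)
      rw [hB1 y h]; exact (hB01 x).2
    · have : s2 ^ 2 ≤ y := by
        by_contra h'
        exact hy ⟨not_le.1 h, not_le.1 h'⟩
      refine IsLocalMin.deriv_eq_zero (Eventually.of_forall fun x => ?_)
      rw [hB0 y this]; exact (hB01 x).1
  have hms : StronglyMeasurable (fun z => g0 z * (2 * deriv B (‖z‖ ^ 2) * z)) := by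
    refine hm.mul (Continuous.stronglyMeasurable ?_)
    fun_prop
  rw [polar_integral hms hi]
  have hrad : ∀ ρ ∈ Ioi (0:ℝ), ρ • ∫ θ in (-Real.pi)..Real.pi, (fun z => g0 z * (2 * deriv B (‖z‖ ^ 2) * z)) (ρ * Complex.exp (θ * Complex.I))
      = ((2 * ρ * deriv B (ρ ^ 2) : ℝ) : ℂ) * (-Complex.I * ∮ z in C(0, s), G z) := by
    intro ρ hρ
    simp only [mem_Ioi] at hρ
    have hn : ∀ θ : ℝ, ‖(ρ:ℂ) * Complex.exp (θ * Complex.I)‖ = ρ := by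
      intro θ
      rw [norm_mul, Complex.norm_exp_ofReal_mul_I]; simp [abs_of_pos hρ]
    simp only [hn]
    by_cases h : ρ ∈ Ioo s s2
    · have h1 : ∀ θ : ℝ, g0 (ρ * Complex.exp (θ * Complex.I)) = G (ρ * Complex.exp (θ * Complex.I)) := by
        intro θ
        rw [hg0, indicator_of_mem]
        exact hann _ (by rw [hn]; exact h.1.le) (by rw [hn]; exact h.2.le)
      have h2 : ∮ z in C(0, ρ), G z = ∮ z in C(0, s), G z := by
        refine Complex.circleIntegral_eq_of_differentiable_on_annulus_off_countable hs h.1.le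
          countable_empty ?_ ?_
        · refine hG.continuousOn.mono fun z hz => ?_
          simp only [Set.mem_sdiff, mem_closedBall, mem_ball, dist_zero_right, not_lt] at hz
          exact hann z hz.2 (hz.1.trans h.2.le)
        · intro z hz
          simp only [Set.mem_sdiff, mem_closedBall, mem_ball, dist_zero_right, not_le] at hz
          exact hG.differentiableAt (hO.mem_nhds (hann z hz.1.2.le (hz.1.1.le.trans h.2.le)))
      have h3 : ∮ z in C(0, ρ), G z = ∫ θ in (-Real.pi)..Real.pi,
          Complex.I * (G (ρ * Complex.exp (θ * Complex.I)) * (ρ * Complex.exp (θ * Complex.I))) := by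
        rw [circleIntegral]
        simp only [deriv_circleMap, circleMap, zero_add, smul_eq_mul]
        have hper : Function.Periodic (fun θ : ℝ => (ρ * Complex.exp (θ * Complex.I) * Complex.I) * G (ρ * Complex.exp (θ * Complex.I))) (2 * Real.pi) := by
          have := periodic_circleMap 0 ρ
          intro θ
          have h := this θ
          simp only [circleMap, zero_add] at h
          simp only [h]
        have := hper.intervalIntegral_add_eq 0 (-Real.pi)
        rw [zero_add, show -Real.pi + 2 * Real.pi = Real.pi by ring] at this
        rw [this]
        congr 1
        ext θ; ring
      rw [intervalIntegral.integral_const_mul] at h3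
      simp only [h1]
      have h4 : ∀ θ : ℝ, G (ρ * Complex.exp (θ * Complex.I)) * (2 * (deriv B (ρ ^ 2)) * (ρ * Complex.exp (θ * Complex.I)))
        = (2 * (deriv B (ρ ^ 2)) : ℂ) * (G (ρ * Complex.exp (θ * Complex.I)) * (ρ * Complex.exp (θ * Complex.I))) := by
        intro θ; ring
      simp_rw [h4]
      rw [intervalIntegral.integral_const_mul, ← h2, h3, Complex.real_smul]
      push_cast
      linear_combination (2 * ρ * (deriv B (ρ ^ 2)) : ℂ) * (∫ θ in (-Real.pi)..Real.pi, (G (ρ * Complex.exp (θ * Complex.I)) * (ρ * Complex.exp (θ * Complex.I)))) * Complex.I_mul_I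
    · have : deriv B (ρ ^ 2) = 0 := by
        apply hdz
        contrapose! h
        constructor
        · exact lt_of_pow_lt_pow_left₀ 2 hρ.le h.1
        · exact lt_of_pow_lt_pow_left₀ 2 (hs.trans hs2).le h.2
      simp [this]
  rw [setIntegral_congr_fun measurableSet_Ioi hrad, integral_mul_const, integral_complex_ofReal]
  have hfin : ∫ ρ in Ioi (0:ℝ), 2 * ρ * deriv B (ρ ^ 2) = -1 := by
    have hsub : Ioc s s2 ⊆ Ioi (0:ℝ) := fun x hx => hs.trans hx.1
    rw [setIntegral_eq_of_subset_of_forall_sdiff_eq_zero measurableSet_Ioi hsub, 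
      ← intervalIntegral.integral_of_le hs2.le]
    · have hd : ∀ ρ : ℝ, HasDerivAt (fun ρ : ℝ => B (ρ ^ 2)) (2 * ρ * deriv B (ρ ^ 2)) ρ := by
        intro ρ
        have := ((hB.differentiable (by simp)) (ρ ^ 2)).hasDerivAt.comp ρ (hasDerivAt_pow 2 ρ)
        refine HasDerivAt.congr_deriv this ?_
        simp; ring
      rw [intervalIntegral.integral_eq_sub_of_hasDerivAt (fun x _ => hd x), hB0 _ le_rfl, hB1 _ le_rfl]
      · simp
      · apply Continuous.intervalIntegrable
        fun_prop
    · intro ρ hρ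
      have : deriv B (ρ ^ 2) = 0 := by
        apply hdz
        intro h
        apply hρ.2
        have hρ0 : (0:ℝ) < ρ := hρ.1
        constructor
        · exact lt_of_pow_lt_pow_left₀ 2 hρ0.le h.1
        · exact (lt_of_pow_lt_pow_left₀ 2 (hs.trans hs2).le h.2).le
      simp [this]
  rw [hfin]
  simp


lemma meas_indicator {X : Type*} [TopologicalSpace X] [MeasurableSpace X] [BorelSpace X] {O : Set X} (hO : IsOpen O) {G : X → ℂ}
    (hG : ContinuousOn G O) : Measurable (O.indicator G) := by
  classical
  have := hG.measurable_piecewise (g := fun _ => (0:ℂ)) continuousOn_const hO.measurableSet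
  exact (piecewise_eq_indicator (s := O) (f := G)) ▸ this

lemma circle_zero {O : Set ℂ} (hO : IsOpen O) {G : ℂ → ℂ} (hG : DifferentiableOn ℂ G O)
    (hL2 : ∫⁻ z in O, ‖G z‖ₑ ^ 2 < ⊤) {s t : ℝ} (hs : 0 < s) (hst : s < t)
    (hsO : sphere 0 s ⊆ O) (hK : SmallCap (closedBall 0 t \ O)) :
    ∮ z in C(0, s), G z = 0 := by
  -- annulus
  obtain ⟨s2, hs2, hs2t, hann⟩ : ∃ s2, s < s2 ∧ s2 < t ∧ ∀ z : ℂ, s ≤ ‖z‖ → ‖z‖ ≤ s2 → z ∈ O := by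
    obtain ⟨δ, hδ, hδO⟩ := (isCompact_sphere (0:ℂ) s).exists_thickening_subset_open hO hsO
    refine ⟨s + min (δ / 2) ((t - s) / 2), ?_, ?_, ?_⟩
    · have : 0 < min (δ / 2) ((t - s) / 2) := lt_min (by linarith) (by linarith)
      linarith
    · have := min_le_right (δ / 2) ((t - s) / 2)
      linarith
    · intro z h1 h2
      apply hδO
      rw [mem_thickening_iff]
      have hz : 0 < ‖z‖ := hs.trans_le h1
      refine ⟨((s / ‖z‖ : ℝ) : ℂ) * z, ?_, ?_⟩
      · rw [mem_sphere_zero_iff_norm, norm_mul, Complex.norm_real, Real.norm_of_nonneg (by positivity)]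
        field_simp
      · have : z - ((s / ‖z‖ : ℝ) : ℂ) * z = ((1 - s / ‖z‖ : ℝ) : ℂ) * z := by push_cast; ring
        have h3 : 0 ≤ 1 - s / ‖z‖ := by
          rw [sub_nonneg, div_le_one hz]; exact h1
        rw [dist_eq_norm, this, norm_mul, Complex.norm_real, Real.norm_of_nonneg h3, sub_mul, div_mul_cancel₀ _ hz.ne']
        have := min_le_left (δ / 2) ((t - s) / 2)
        linarith
  have hs20 : 0 < s2 := hs.trans hs2
  have hsq : s ^ 2 < s2 ^ 2 := by gcongr
  set g0 := O.indicator G with hg0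
  have hm : Measurable g0 := meas_indicator hO hG.continuousOn
  have hg2 : Integrable (fun z => ‖g0 z‖ ^ 2) := by
    refine ⟨(hm.norm.pow_const 2).aestronglyMeasurable, ?_⟩
    rw [HasFiniteIntegral]
    refine lt_of_le_of_lt (le_of_eq ?_) hL2
    rw [← lintegral_indicator hO.measurableSet]
    congr 1; ext z
    by_cases hz : z ∈ O
    · simp [hg0, hz, enorm_pow]
    · simp [hg0, hz]
  set B : ℝ → ℝ := fun y => Real.smoothTransition ((s2 ^ 2 - y) / (s2 ^ 2 - s ^ 2)) with hBdef
  have hB : ContDiff ℝ 1 B := by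
    exact Real.smoothTransition.contDiff.comp ((contDiff_const.sub contDiff_id).div_const _)
  have hB01 : ∀ y, 0 ≤ B y ∧ B y ≤ 1 := fun y => ⟨Real.smoothTransition.nonneg _, Real.smoothTransition.le_one _⟩
  have hB1 : ∀ y ≤ s ^ 2, B y = 1 := by
    intro y hy
    apply Real.smoothTransition.one_of_one_le
    rw [le_div_iff₀ (by linarith)]; linarith
  have hB0 : ∀ y, s2 ^ 2 ≤ y → B y = 0 := by
    intro y hy
    apply Real.smoothTransition.zero_of_nonpos
    apply div_nonpos_of_nonpos_of_nonneg <;> linarith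
  set b : ℂ → ℝ := fun z => B (‖z‖ ^ 2) with hb
  have hbC : ContDiff ℝ 1 b := hB.comp (contDiff_norm_sq ℝ)
  have hb0 : ∀ z : ℂ, s2 ≤ ‖z‖ → b z = 0 := fun z hz => hB0 _ (by gcongr)
  have hb01 : ∀ z, 0 ≤ b z ∧ b z ≤ 1 := fun z => hB01 _
  have hbS : HasCompactSupport b := by
    refine HasCompactSupport.intro (isCompact_closedBall (0:ℂ) s2) fun z hz => hb0 z ?_
    simp only [mem_closedBall, dist_zero_right, not_le] at hz
    exact hz.le
  have hdb : ∀ z, dbar b z = 2 * deriv B (‖z‖ ^ 2) * z := by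
    intro z
    have h1 : HasFDerivAt b (deriv B (‖z‖ ^ 2) • (2 • (innerSL ℝ z : ℂ →L[ℝ] ℝ))) z :=
      HasDerivAt.comp_hasFDerivAt (h₂ := B) z ((hB.differentiable (by simp)) (‖z‖ ^ 2)).hasDerivAt
      ((hasStrictFDerivAt_norm_sq z).hasFDerivAt)
    rw [dbar, h1.fderiv]
    simp [Complex.inner]
    apply Complex.ext <;> simp <;> ring
  have hdbO : ∀ z ∉ O, dbar b z = 0 := by
    intro z hz
    have : ¬ (s ≤ ‖z‖ ∧ ‖z‖ ≤ s2) := fun h => hz (hann z h.1 h.2)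
    by_cases h : ‖z‖ < s
    · have : b =ᶠ[𝓝 z] fun _ => 1 := by
        filter_upwards [(isOpen_lt continuous_norm continuous_const).mem_nhds h] with w hw
        exact hB1 _ (by have : ‖w‖ < s := hw
                        gcongr)
      simp [dbar, this.fderiv_eq]
    · have h' : s2 < ‖z‖ := by
        by_contra h2
        exact this ⟨not_lt.1 h, not_lt.1 h2⟩
      apply dbar_of_zero
      filter_upwards [(isOpen_lt continuous_const continuous_norm).mem_nhds h'] with w hw
      exact hb0 w (le_of_lt hw)
  have hprod : ∀ ψ : ℂ → ℂ, Continuous ψ → HasCompactSupport ψ → Integrable (fun z => g0 z * ψ z) := by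
    intro ψ h1 h2
    have : Integrable (fun z => ‖ψ z‖ ^ 2) := by
      refine (h1.norm.pow 2).integrable_of_hasCompactSupport (h2.mono fun z hz => ?_)
      simp only [Function.mem_support] at hz ⊢
      contrapose! hz
      simp [hz]
    refine (hg2.add this).mono' (hm.aestronglyMeasurable.mul h1.aestronglyMeasurable) (Eventually.of_forall fun z => ?_)
    simp only [norm_mul, Pi.add_apply]
    nlinarith [sq_nonneg (‖g0 z‖ - ‖ψ z‖), sq_nonneg (‖g0 z‖ + ‖ψ z‖)]
  obtain ⟨M, hM0, hM⟩ : ∃ M : ℝ, 0 ≤ M ∧ ∀ z, ‖dbar b z‖ ≤ M := by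
    obtain ⟨M, hM⟩ := (dbar_cont hbC).bounded_above_of_compact_support (dbar_supp hbS)
    exact ⟨M, (norm_nonneg _).trans (hM 0), hM⟩
  have hib := hprod _ (dbar_cont hbC) (dbar_supp hbS)
  set A := ∫ z, ‖g0 z‖ ^ 2 with hA
  have hA0 : 0 ≤ A := integral_nonneg fun z => by positivity
  have hest : ∀ κ : ℝ, 0 < κ → ‖∫ z, g0 z * dbar b z‖ ≤ κ * (A + M ^ 2 + 4) := by
    intro κ hκ
    obtain ⟨χ, h1, h2, h3, ⟨W, hW, hKW, hW1⟩, h4, h5⟩ := hK (κ ^ 2) (by positivity)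
    set φ : ℂ → ℝ := fun z => (1 - χ z) * b z with hφ
    have hφC : ContDiff ℝ 1 φ := (contDiff_const.sub h1).mul hbC
    have hφS : HasCompactSupport φ := hbS.mul_left (f := fun z => 1 - χ z)
    have hφ0 : ∀ z ∉ O, φ =ᶠ[𝓝 z] fun _ => 0 := by
      intro z hz
      by_cases h : ‖z‖ ≤ t
      · have : z ∈ W := hKW ⟨by simpa using h, hz⟩
        filter_upwards [hW.mem_nhds this] with w hw
        simp [hφ, hW1 w hw]
      · have h' : s2 < ‖z‖ := hs2t.trans (not_le.1 h)
        filter_upwards [(isOpen_lt continuous_const continuous_norm).mem_nhds h'] with w hw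
        simp [hφ, hb0 w (le_of_lt hw)]
    have hw := weak_hol hO hG hφC hφS hφ0
    have hdφ : ∀ z, dbar φ z = (1 - χ z) * dbar b z - b z * dbar χ z := by
      intro z
      have d1 := ((h1.differentiable (by simp)) z).hasFDerivAt
      have d2 := ((hbC.differentiable (by simp)) z).hasFDerivAt
      have d3 : HasFDerivAt φ _ z := (d1.const_sub 1).mul d2
      simp only [dbar, d3.fderiv]
      simp
      ring
    have hw' : ∫ z, g0 z * dbar φ z = 0 := by
      rw [← hw]
      congr 1; ext z
      by_cases hz : z ∈ O
      · simp [hg0, hz]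
      · simp [dbar_of_zero (hφ0 z hz)]
    have hiφ := hprod _ (dbar_cont hφC) (dbar_supp hφS)
    have hsplit : ∫ z, g0 z * dbar b z = ∫ z, g0 z * (χ z * dbar b z + b z * dbar χ z) := by
      rw [← sub_zero (∫ z, g0 z * dbar b z), ← hw', ← integral_sub hib hiφ]
      congr 1; ext z
      rw [hdφ]; ring
    rw [hsplit]
    have i1 := int_sq h1 h2
    have i2 := int_dsq h1 h2
    calc _ ≤ ∫ z, (κ * ‖g0 z‖ ^ 2 + (M ^ 2 / κ * χ z ^ 2 + 4 / κ * ‖fderiv ℝ χ z‖ ^ 2)) := by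
          refine norm_integral_le_of_norm_le ((hg2.const_mul κ).add ((i1.const_mul _).add (i2.const_mul _)))
            (Eventually.of_forall fun z => ?_)
          have q1 : ‖(χ z : ℂ) * dbar b z + b z * dbar χ z‖ ≤ M * χ z + 2 * ‖fderiv ℝ χ z‖ := by
            refine (norm_add_le _ _).trans ?_
            rw [norm_mul, norm_mul, Complex.norm_real, Complex.norm_real, Real.norm_of_nonneg (h3 z).1, Real.norm_of_nonneg (hb01 z).1]
            have a1 := hM z
            have a2 := dbar_norm χ z
            have a3 := norm_nonneg (dbar χ z)
            have a4 := mul_le_mul_of_nonneg_left a1 (h3 z).1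
            have a5 := mul_le_mul_of_nonneg_right (hb01 z).2 a3
            linarith
          rw [norm_mul]
          set x := ‖g0 z‖
          set y := M * χ z
          set w := 2 * ‖fderiv ℝ χ z‖ with hwdef
          have q2 : x * ‖(χ z : ℂ) * dbar b z + b z * dbar χ z‖ ≤ x * (y + w) :=
            mul_le_mul_of_nonneg_left q1 (norm_nonneg _)
          have q3 : M ^ 2 / κ * χ z ^ 2 + 4 / κ * ‖fderiv ℝ χ z‖ ^ 2 = (y ^ 2 + w ^ 2) / κ := by
            simp only [y, hwdef]; field_simp; ring
          rw [q3]
          refine q2.trans ?_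
          have q4 : κ * x ^ 2 + (y ^ 2 + w ^ 2) / κ - x * (y + w) = ((κ * x - 2 * y) ^ 2 + (κ * x - 2 * w) ^ 2 + 2 * (κ * x) ^ 2) / (4 * κ) := by
            field_simp; ring
          have : 0 ≤ ((κ * x - 2 * y) ^ 2 + (κ * x - 2 * w) ^ 2 + 2 * (κ * x) ^ 2) / (4 * κ) := by positivity
          linarith
      _ ≤ κ * (A + M ^ 2 + 4) := by
          have i3 : Integrable (fun z => M ^ 2 / κ * χ z ^ 2 + 4 / κ * ‖fderiv ℝ χ z‖ ^ 2) := (i1.const_mul _).add (i2.const_mul _)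
          rw [integral_add (hg2.const_mul κ) i3, integral_add (i1.const_mul _) (i2.const_mul _),
            integral_const_mul, integral_const_mul, integral_const_mul]
          have r1 : M ^ 2 / κ * ∫ z, χ z ^ 2 ≤ M ^ 2 / κ * κ ^ 2 := mul_le_mul_of_nonneg_left h4 (by positivity)
          have r2 : 4 / κ * ∫ z, ‖fderiv ℝ χ z‖ ^ 2 ≤ 4 / κ * κ ^ 2 := mul_le_mul_of_nonneg_left h5 (by positivity)
          have r3 : M ^ 2 / κ * κ ^ 2 = M ^ 2 * κ := by field_simp
          have r4 : 4 / κ * κ ^ 2 = 4 * κ := by field_simp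
          rw [r3] at r1; rw [r4] at r2
          rw [← hA]
          linarith
  have hzero : ∫ z, g0 z * dbar b z = 0 := by
    rw [← norm_le_zero_iff]
    refine le_of_forall_pos_le_add fun ε hε => ?_
    have hp : 0 < A + M ^ 2 + 4 := by positivity
    have := hest (ε / (A + M ^ 2 + 4)) (by positivity)
    rw [div_mul_cancel₀ _ hp.ne'] at this
    linarith
  simp_rw [hdb] at hzero hib
  have := radial_circle hO hG hs hs2 hann hg0 hm.stronglyMeasurable hB hB01 hB1 hB0 hib
  rw [hzero] at this
  simpa using this.symm


lemma lap_nonpos {h : ℂ → ℝ} (hh : ContDiff ℝ 2 h) {c : ℂ} {ρ0 : ℝ} (hρ0 : 0 < ρ0)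
    (hsup : ∀ ρ : ℝ, 0 < ρ → ρ < ρ0 → ∫ θ in (-Real.pi)..Real.pi, h (c + ρ * Complex.exp (θ * Complex.I)) ≤ 2 * Real.pi * h c) :
    fderiv ℝ (fderiv ℝ h) c 1 1 + fderiv ℝ (fderiv ℝ h) c Complex.I Complex.I ≤ 0 := by
  have hpi := Real.pi_pos
  have hsym : IsSymmSndFDerivAt ℝ h c := hh.contDiffAt.isSymmSndFDerivAt (by simp)
  have hd1 : Differentiable ℝ h := hh.differentiable (by simp)
  have hd2 : Differentiable ℝ (fderiv ℝ h) := (hh.fderiv_right (m := 1) (by norm_num)).differentiable (by simp)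
  set L := fderiv ℝ h c with hL
  set Q := fderiv ℝ (fderiv ℝ h) c with hQ
  refine le_of_forall_pos_le_add fun ε' hε' => ?_
  set ε := ε' / 4 with hε
  have hε0 : 0 < ε := by positivity
  have h1 := (hd2 c).hasFDerivAt.isLittleO.def hε0
  rw [Metric.eventually_nhds_iff_ball] at h1
  obtain ⟨η, hη, h1⟩ := h1
  set ρ := min (η / 2) (ρ0 / 2) with hρ
  have hρp : 0 < ρ := lt_min (by linarith) (by linarith)
  have hρη : ρ < η := (min_le_left _ _).trans_lt (by linarith)
  have hρρ0 : ρ < ρ0 := (min_le_right _ _).trans_lt (by linarith)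
  have hT : ∀ v : ℂ, ‖v‖ ≤ ρ → |h (c + v) - h c - L v - (1/2) * Q v v| ≤ ε * ρ ^ 2 := by
    intro v hv
    set q : ℂ → ℝ := fun v => h (c + v) - h c - L v - (1/2) * Q v v with hq
    have hqd : ∀ v ∈ closedBall (0:ℂ) ρ, HasFDerivWithinAt q (fderiv ℝ h (c + v) - fderiv ℝ h c - Q v) (closedBall 0 ρ) v := by
      intro v _
      apply HasFDerivAt.hasFDerivWithinAt
      have a1 : HasFDerivAt (fun v => h (c + v)) (fderiv ℝ h (c + v)) v := by
        have := (hd1 (c + v)).hasFDerivAt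
        exact (HasFDerivAt.comp v this ((hasFDerivAt_id v).const_add c)).congr_fderiv (by ext; simp)
      have a2 : HasFDerivAt (fun v => Q v v) _ v := (Q.hasFDerivAt (x := v)).clm_apply (hasFDerivAt_id v)
      have a3 := ((a1.sub_const (h c)).sub L.hasFDerivAt).sub (a2.const_mul (1/2))
      refine a3.congr_fderiv ?_
      ext w
      simp
      have := hsym v w
      rw [← hQ] at this
      rw [← this]
      ring
    have hb : ∀ v ∈ closedBall (0:ℂ) ρ, ‖fderiv ℝ h (c + v) - fderiv ℝ h c - Q v‖ ≤ ε * ρ := by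
      intro v hv
      rw [mem_closedBall_zero_iff] at hv
      have := h1 (c + v) (by simpa using hv.trans_lt hρη)
      simp only [add_sub_cancel_left] at this
      refine this.trans ?_
      gcongr
    have := Convex.norm_image_sub_le_of_norm_hasFDerivWithin_le hqd hb (convex_closedBall _ _)
      (mem_closedBall_self hρp.le) (mem_closedBall_zero_iff.2 hv)
    simp only [hq, add_zero, sub_self, map_zero, mul_zero, sub_zero, Real.norm_eq_abs] at this
    refine this.trans ?_
    rw [sq, ← mul_assoc]
    gcongr
  have hpt : ∀ θ : ℝ, h c + ρ * (Real.cos θ * L 1 + Real.sin θ * L Complex.I)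
      + ρ ^ 2 / 2 * (Real.cos θ ^ 2 * Q 1 1 + 2 * (Real.sin θ * Real.cos θ * Q 1 Complex.I) + Real.sin θ ^ 2 * Q Complex.I Complex.I) - ε * ρ ^ 2
      ≤ h (c + ρ * Complex.exp (θ * Complex.I)) := by
    intro θ
    have hv : (ρ : ℂ) * Complex.exp (θ * Complex.I) = (ρ * Real.cos θ) • (1:ℂ) + (ρ * Real.sin θ) • Complex.I := by
      rw [Complex.exp_mul_I]
      simp
      ring
    have := (abs_le.1 (hT (ρ * Complex.exp (θ * Complex.I)) (by
      rw [norm_mul, Complex.norm_exp_ofReal_mul_I, mul_one, Complex.norm_real, Real.norm_of_nonneg hρp.le]))).1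
    rw [hv] at this ⊢
    simp only [map_add, map_smul, add_apply, smul_apply, smul_eq_mul] at this
    have hs := hsym 1 Complex.I
    rw [← hQ] at hs
    rw [← hs] at this
    nlinarith
  have hcomp := intervalIntegral.integral_mono_on (a := -Real.pi) (b := Real.pi) (by linarith) (μ := volume)
    (by apply Continuous.intervalIntegrable; fun_prop)
    (by apply Continuous.intervalIntegrable
        have := hh.continuous
        fun_prop) (fun θ _ => hpt θ)
  have := hcomp.trans (hsup ρ hρp hρρ0)
  have hint : ∫ θ in (-Real.pi)..Real.pi, (h c + ρ * (Real.cos θ * L 1 + Real.sin θ * L Complex.I)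
      + ρ ^ 2 / 2 * (Real.cos θ ^ 2 * Q 1 1 + 2 * (Real.sin θ * Real.cos θ * Q 1 Complex.I) + Real.sin θ ^ 2 * Q Complex.I Complex.I) - ε * ρ ^ 2)
      = 2 * Real.pi * h c + ρ ^ 2 / 2 * Real.pi * (Q 1 1 + Q Complex.I Complex.I) - 2 * Real.pi * ε * ρ ^ 2 := by
    have ii : ∀ f : ℝ → ℝ, Continuous f → IntervalIntegrable f volume (-Real.pi) Real.pi := fun f hf => hf.intervalIntegrable _ _
    rw [intervalIntegral.integral_sub (ii _ (by fun_prop)) (ii _ (by fun_prop)),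
      intervalIntegral.integral_add (ii _ (by fun_prop)) (ii _ (by fun_prop)),
      intervalIntegral.integral_add (ii _ (by fun_prop)) (ii _ (by fun_prop)),
      intervalIntegral.integral_const_mul, intervalIntegral.integral_const_mul,
      intervalIntegral.integral_add (ii _ (by fun_prop)) (ii _ (by fun_prop)),
      intervalIntegral.integral_add (ii _ (by fun_prop)) (ii _ (by fun_prop)),
      intervalIntegral.integral_add (ii _ (by fun_prop)) (ii _ (by fun_prop)),
      intervalIntegral.integral_mul_const, intervalIntegral.integral_mul_const, intervalIntegral.integral_mul_const,
      intervalIntegral.integral_mul_const, intervalIntegral.integral_const_mul, intervalIntegral.integral_mul_const,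
      integral_cos_sq, integral_sin_sq, integral_cos, integral_sin, integral_sin_mul_cos₁]
    simp
    ring
  rw [hint] at this
  have h3 : ρ ^ 2 * Real.pi * (Q 1 1 + Q Complex.I Complex.I) ≤ ρ ^ 2 * Real.pi * ε' := by
    rw [hε] at this
    nlinarith
  have := le_of_mul_le_mul_left h3 (by positivity)
  linarith


lemma norm_polar (ρ θ : ℝ) : ‖(ρ:ℂ) * Complex.exp (θ * Complex.I)‖ = |ρ| := by
  rw [norm_mul, Complex.norm_exp_ofReal_mul_I, mul_one, Complex.norm_real, Real.norm_eq_abs]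

lemma mollify {g : ℂ → ℝ} {B δ R : ℝ} {x0 : ℂ} (hgm : Measurable g) (hg1 : ∀ z, 1 ≤ g z) (hgB : ∀ z, g z ≤ B)
    (hsup : ∀ c : ℂ, ∀ ρ : ℝ, 0 < ρ → closedBall c ρ ⊆ closedBall x0 (4 * R) →
      ∫ θ in (-Real.pi)..Real.pi, g (c + ρ * Complex.exp (θ * Complex.I)) ≤ 2 * Real.pi * g c)
    (hδ : 0 < δ) (hδR : δ < R) :
    ∃ h : ℂ → ℝ, ContDiff ℝ 2 h ∧ (∀ z, 1 ≤ h z) ∧ (∀ z ∈ closedBall x0 (3 * R), h z ≤ g z) ∧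
      (∀ z ∈ closedBall x0 (3 * R), fderiv ℝ (fderiv ℝ h) z 1 1 + fderiv ℝ (fderiv ℝ h) z Complex.I Complex.I ≤ 0) ∧
      ∀ z : ℂ, ∀ L : ℝ, (∀ w ∈ ball z δ, L ≤ g w) → L ≤ h z := by
  have hpi := Real.pi_pos
  set κ1 : ℝ → ℝ := fun y => Real.smoothTransition (1 - y / δ ^ 2) with hκ1
  set k1 : ℂ → ℝ := fun z => κ1 (‖z‖ ^ 2) with hk1
  have hκ1z : ∀ y, δ ^ 2 ≤ y → κ1 y = 0 := by
    intro y hy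
    apply Real.smoothTransition.zero_of_nonpos
    rw [sub_nonpos, le_div_iff₀ (by positivity)]; linarith
  have hκ1n : ∀ y, 0 ≤ κ1 y := fun y => Real.smoothTransition.nonneg _
  have hk1z : ∀ z : ℂ, δ ≤ ‖z‖ → k1 z = 0 := fun z hz => hκ1z _ (by gcongr)
  have hk1C : ContDiff ℝ 2 k1 := by
    have : ContDiff ℝ 2 κ1 := Real.smoothTransition.contDiff.comp (contDiff_const.sub (contDiff_id.div_const _))
    exact this.comp (contDiff_norm_sq ℝ)
  have hk1S : HasCompactSupport k1 := by
    refine HasCompactSupport.intro (isCompact_closedBall (0:ℂ) δ) fun z hz => hk1z z ?_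
    simp only [mem_closedBall, dist_zero_right, not_le] at hz
    exact hz.le
  have hpos : 0 < ∫ z, k1 z := by
    refine hk1C.continuous.integral_pos_of_hasCompactSupport_nonneg_nonzero hk1S (fun z => hκ1n _) (x := 0) ?_
    simp [hk1, hκ1]
  set k0 := (∫ z, k1 z)⁻¹ with hk0
  have hk0p : 0 < k0 := inv_pos.2 hpos
  set k : ℂ → ℝ := fun z => k0 * k1 z with hk
  have hkn : ∀ z, 0 ≤ k z := fun z => mul_nonneg hk0p.le (hκ1n _)
  have hkz : ∀ z : ℂ, δ ≤ ‖z‖ → k z = 0 := fun z hz => by simp [hk, hk1z z hz]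
  have hkC : ContDiff ℝ 2 k := contDiff_const.mul hk1C
  have hkS : HasCompactSupport k := hk1S.mul_left (f := fun _ => k0)
  have hki : Integrable k := hkC.continuous.integrable_of_hasCompactSupport hkS
  have hkneg : ∀ z, k (-z) = k z := fun z => by simp [hk, hk1]
  have hk1' : ∫ z, k z = 1 := by
    simp only [hk]
    rw [integral_const_mul, hk0, inv_mul_cancel₀ hpos.ne']
  have hkrad : ∀ ρ θ : ℝ, k (ρ * Complex.exp (θ * Complex.I)) = k0 * κ1 (ρ ^ 2) := by
    intro ρ θ; simp only [hk, hk1, norm_polar, sq_abs]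
  have hmeas : ∀ z, Measurable (fun w => k w * g (z + w)) := fun z =>
    hkC.continuous.measurable.mul (hgm.comp (measurable_const_add z))
  have hint : ∀ z, Integrable (fun w => k w * g (z + w)) := by
    intro z
    refine (hki.mul_const B).mono' (hmeas z).aestronglyMeasurable (Eventually.of_forall fun w => ?_)
    rw [Real.norm_of_nonneg (mul_nonneg (hkn w) (by linarith [hg1 (z + w)]))]
    exact mul_le_mul_of_nonneg_left (hgB _) (hkn w)
  set h : ℂ → ℝ := fun z => ∫ w, k w * g (z + w) with hh
  have hlow : ∀ z : ℂ, ∀ L : ℝ, (∀ w ∈ ball z δ, L ≤ g w) → L ≤ h z := by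
    intro z L hL
    calc L = ∫ w, k w * L := by rw [integral_mul_const, hk1', one_mul]
      _ ≤ h z := by
        refine integral_mono (hki.mul_const L) (hint z) fun w => ?_
        by_cases hw : ‖w‖ < δ
        · exact mul_le_mul_of_nonneg_left (hL _ (by simpa using hw)) (hkn w)
        · simp [hkz w (not_lt.1 hw)]
  have hhC : ContDiff ℝ 2 h := by
    have hloc : LocallyIntegrable g := by
      refine (locallyIntegrable_const B).mono hgm.aestronglyMeasurable (Eventually.of_forall fun z => ?_)
      have := hg1 z
      rw [Real.norm_of_nonneg (by linarith), Real.norm_eq_abs]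
      exact (hgB z).trans (le_abs_self _)
    have := hkS.contDiff_convolution_left (n := 2) (ContinuousLinearMap.lsmul ℝ ℝ) (μ := volume) hkC hloc
    have heq : h = convolution k g (ContinuousLinearMap.lsmul ℝ ℝ) volume := ?_
    · rw [heq]; exact this
    ext z
    rw [convolution_def]
    simp only [hh]
    rw [← integral_neg_eq_self]
    congr 1; ext w
    simp [hkneg, sub_eq_add_neg]
  refine ⟨h, hhC, fun z => hlow z 1 fun w _ => hg1 w, ?_, ?_, hlow⟩
  · intro z hz
    have e1 := polar_integral (hmeas z).stronglyMeasurable (hint z)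
    have e2 := polar_integral (hkC.continuous.measurable.mul_const (g z)).stronglyMeasurable (hki.mul_const (g z))
    rw [integral_mul_const, hk1', one_mul] at e2
    simp only [hh]
    rw [e1, e2]
    refine setIntegral_mono_on (polar_radial_integrable (hmeas z).stronglyMeasurable (hint z))
      (polar_radial_integrable (hkC.continuous.measurable.mul_const (g z)).stronglyMeasurable (hki.mul_const (g z)))
      measurableSet_Ioi fun ρ hρ => ?_
    have hρ : 0 < ρ := hρ
    simp only [smul_eq_mul, hkrad]
    apply mul_le_mul_of_nonneg_left _ hρ.le
    by_cases hρδ : ρ < δ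
    · rw [intervalIntegral.integral_const_mul, intervalIntegral.integral_const]
      have := hsup z ρ hρ (closedBall_subset_closedBall' (by
        have := mem_closedBall.1 hz
        linarith))
      have h2 : 0 ≤ k0 * κ1 (ρ ^ 2) := mul_nonneg hk0p.le (hκ1n _)
      have := mul_le_mul_of_nonneg_left this h2
      refine this.trans (le_of_eq ?_)
      rw [smul_eq_mul]; ring
    · have : κ1 (ρ ^ 2) = 0 := hκ1z _ (by have := not_lt.1 hρδ; gcongr)
      simp [this]
  · intro z hz
    refine lap_nonpos hhC (ρ0 := R - δ) (by linarith) fun ρ hρ hρR => ?_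
    have hm2 : Measurable (fun p : ℝ × ℂ => k p.2 * g (z + ρ * Complex.exp (p.1 * Complex.I) + p.2)) := by
      have := hkC.continuous.measurable
      fun_prop
    have hi2 : Integrable (fun p : ℝ × ℂ => k p.2 * g (z + ρ * Complex.exp (p.1 * Complex.I) + p.2))
        ((volume.restrict (Ioc (-Real.pi) Real.pi)).prod volume) := by
      have : Integrable (fun p : ℝ × ℂ => k p.2 * B) ((volume.restrict (Ioc (-Real.pi) Real.pi)).prod volume) :=
        (hki.mul_const B).comp_snd _
      refine this.mono' hm2.aestronglyMeasurable (Eventually.of_forall fun p => ?_)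
      rw [Real.norm_of_nonneg (mul_nonneg (hkn _) (by linarith [hg1 (z + ρ * Complex.exp (p.1 * Complex.I) + p.2)]))]
      exact mul_le_mul_of_nonneg_left (hgB _) (hkn _)
    rw [intervalIntegral.integral_of_le (by linarith)]
    simp only [hh]
    rw [integral_integral_swap hi2, ← integral_const_mul]
    refine integral_mono hi2.integral_prod_right ((hint z).const_mul _) fun w => ?_
    simp only
    rw [← intervalIntegral.integral_of_le (by linarith), intervalIntegral.integral_const_mul]
    by_cases hw : ‖w‖ < δ
    · have := hsup (z + w) ρ hρ (closedBall_subset_closedBall' (by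
        have := mem_closedBall.1 hz
        have h2 : dist (z + w) x0 ≤ dist (z + w) z + dist z x0 := dist_triangle _ _ _
        have h3 : dist (z + w) z = ‖w‖ := by simp
        linarith))
      have := mul_le_mul_of_nonneg_left this (hkn w)
      refine le_trans (le_of_eq ?_) (this.trans (le_of_eq ?_))
      · congr 2; ext θ; congr 1; ring
      · ring
    · simp [hkz w (not_lt.1 hw)]


lemma fderiv_He {h ψ : ℂ → ℝ} (hh : ContDiff ℝ 2 h) (h1 : ∀ z, 1 ≤ h z) (hψ : ContDiff ℝ 1 ψ) (e z : ℂ) :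
    fderiv ℝ (fun z => ψ z ^ 2 * (fderiv ℝ h z e / h z)) z e =
      2 * ψ z * fderiv ℝ ψ z e * (fderiv ℝ h z e / h z)
      + ψ z ^ 2 * (fderiv ℝ (fderiv ℝ h) z e e / h z - (fderiv ℝ h z e / h z) ^ 2) := by
  have hz : h z ≠ 0 := by linarith [h1 z]
  have d1 : HasFDerivAt ψ (fderiv ℝ ψ z) z := (hψ.differentiable (by simp) z).hasFDerivAt
  have d2 : HasFDerivAt h (fderiv ℝ h z) z := (hh.differentiable (by simp) z).hasFDerivAt
  have d3 : HasFDerivAt (fderiv ℝ h) (fderiv ℝ (fderiv ℝ h) z) z :=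
    ((hh.fderiv_right (m := 1) (by norm_num)).differentiable (by simp) z).hasFDerivAt
  have d4 := d3.clm_apply (hasFDerivAt_const e z)
  have d6 : HasFDerivAt (fun z => (h z)⁻¹) ((-(h z ^ 2)⁻¹ : ℝ) • fderiv ℝ h z) z := HasDerivAt.comp_hasFDerivAt (h₂ := fun y : ℝ => y⁻¹) z (hasDerivAt_inv hz) d2
  have d5 : HasFDerivAt (𝕜 := ℝ) (fun z => ψ z ^ 2 * (fderiv ℝ h z e * (h z)⁻¹)) _ z := (d1.pow 2).mul (d4.mul d6)
  have e5 : (fun z => ψ z ^ 2 * (fderiv ℝ h z e / h z)) = (fun z => ψ z ^ 2 * (fderiv ℝ h z e * (h z)⁻¹)) := by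
    simp only [div_eq_mul_inv]
  rw [e5, d5.fderiv]
  simp
  field_simp
  ring

lemma caccioppoli {h ψ : ℂ → ℝ} (hh : ContDiff ℝ 2 h) (h1 : ∀ z, 1 ≤ h z) (hψ : ContDiff ℝ 1 ψ)
    (hψS : HasCompactSupport ψ)
    (hlap : ∀ z, ψ z ≠ 0 → fderiv ℝ (fderiv ℝ h) z 1 1 + fderiv ℝ (fderiv ℝ h) z Complex.I Complex.I ≤ 0) :
    ∫ z, ψ z ^ 2 * ((fderiv ℝ h z 1 / h z) ^ 2 + (fderiv ℝ h z Complex.I / h z) ^ 2) ≤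
      4 * ∫ z, (fderiv ℝ ψ z 1 ^ 2 + fderiv ℝ ψ z Complex.I ^ 2) := by
  have hne : ∀ z, h z ≠ 0 := fun z => by linarith [h1 z]
  have c1 : ∀ e : ℂ, ContDiff ℝ 1 (fun z => fderiv ℝ h z e) := fun e =>
    (hh.fderiv_right (m := 1) (by norm_num)).clm_apply contDiff_const
  have c2 : ∀ e : ℂ, ContDiff ℝ 1 (fun z => fderiv ℝ h z e / h z) := fun e =>
    (c1 e).div (hh.of_le (by norm_num)) hne
  have c3 : ∀ e : ℂ, ContDiff ℝ 1 (fun z => ψ z ^ 2 * (fderiv ℝ h z e / h z)) := fun e => (hψ.pow 2).mul (c2 e)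
  have sq : HasCompactSupport (fun z => ψ z ^ 2) := by
    refine hψS.mono fun z hz => ?_
    simp only [Function.mem_support] at hz ⊢
    contrapose! hz
    simp [hz]
  have s3 : ∀ e : ℂ, HasCompactSupport (fun z => ψ z ^ 2 * (fderiv ℝ h z e / h z)) := fun e => sq.mul_right
  have z3 : ∀ e : ℂ, ∫ z, fderiv ℝ (fun z => ψ z ^ 2 * (fderiv ℝ h z e / h z)) z e = 0 := fun e =>
    integral_fderiv_zero (c3 e) (s3 e) e
  have i3 : ∀ e : ℂ, Integrable (fun z => fderiv ℝ (fun z => ψ z ^ 2 * (fderiv ℝ h z e / h z)) z e) := fun e =>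
    Continuous.integrable_of_hasCompactSupport (((c3 e).continuous_fderiv (by simp)).clm_apply continuous_const)
      ((s3 e).fderiv_apply (𝕜 := ℝ) e)
  have i1 : Integrable (fun z => ψ z ^ 2 * ((fderiv ℝ h z 1 / h z) ^ 2 + (fderiv ℝ h z Complex.I / h z) ^ 2)) :=
    Continuous.integrable_of_hasCompactSupport ((hψ.continuous.pow 2).mul (((c2 1).continuous.pow 2).add ((c2 Complex.I).continuous.pow 2)))
      sq.mul_right
  have i2 : ∀ e : ℂ, Integrable (fun z => fderiv ℝ ψ z e ^ 2) := by
    intro e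
    refine Continuous.integrable_of_hasCompactSupport (((hψ.continuous_fderiv (by simp)).clm_apply continuous_const).pow 2)
      ((hψS.fderiv_apply (𝕜 := ℝ) e).mono fun z hz => ?_)
    simp only [Function.mem_support] at hz ⊢
    contrapose! hz
    simp [hz]
  have i4 : Integrable (fun z => fderiv ℝ ψ z 1 ^ 2 + fderiv ℝ ψ z Complex.I ^ 2) := (i2 1).add (i2 Complex.I)
  have i5 : Integrable (fun z => fderiv ℝ (fun z => ψ z ^ 2 * (fderiv ℝ h z 1 / h z)) z 1
      + fderiv ℝ (fun z => ψ z ^ 2 * (fderiv ℝ h z Complex.I / h z)) z Complex.I) := (i3 1).add (i3 Complex.I)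
  have key : ∫ z, ψ z ^ 2 * ((fderiv ℝ h z 1 / h z) ^ 2 + (fderiv ℝ h z Complex.I / h z) ^ 2) ≤
      ∫ z, (4 * (fderiv ℝ ψ z 1 ^ 2 + fderiv ℝ ψ z Complex.I ^ 2)
        - 2 * (fderiv ℝ (fun z => ψ z ^ 2 * (fderiv ℝ h z 1 / h z)) z 1
      + fderiv ℝ (fun z => ψ z ^ 2 * (fderiv ℝ h z Complex.I / h z)) z Complex.I)) := by
    refine integral_mono i1 ((i4.const_mul 4).sub (i5.const_mul 2)) fun z => ?_
    simp only
    rw [fderiv_He hh h1 hψ, fderiv_He hh h1 hψ]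
    have hl : ψ z ^ 2 * (fderiv ℝ (fderiv ℝ h) z 1 1 / h z + fderiv ℝ (fderiv ℝ h) z Complex.I Complex.I / h z) ≤ 0 := by
      by_cases hz : ψ z = 0
      · simp [hz]
      · rw [← add_div]
        exact mul_nonpos_of_nonneg_of_nonpos (sq_nonneg _)
          (div_nonpos_of_nonpos_of_nonneg (hlap z hz) (by linarith [h1 z]))
    set a := fderiv ℝ h z 1 / h z
    set b := fderiv ℝ h z Complex.I / h z
    nlinarith [sq_nonneg (ψ z * a - 2 * fderiv ℝ ψ z 1), sq_nonneg (ψ z * b - 2 * fderiv ℝ ψ z Complex.I)]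
  rw [integral_sub (i4.const_mul 4) (i5.const_mul 2), integral_const_mul, integral_const_mul,
    integral_add (i3 1) (i3 Complex.I), z3, z3] at key
  simpa using key

lemma opnorm_sq_le (L : ℂ →L[ℝ] ℝ) : ‖L‖ ^ 2 ≤ L 1 ^ 2 + L Complex.I ^ 2 := by
  have h : ‖L‖ ≤ Real.sqrt (L 1 ^ 2 + L Complex.I ^ 2) := by
    refine L.opNorm_le_bound (Real.sqrt_nonneg _) fun z => ?_
    have hz : L z = z.re * L 1 + z.im * L Complex.I := by
      have h0 : z = z.re • (1:ℂ) + z.im • Complex.I := by apply Complex.ext <;> simp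
      calc L z = L (z.re • (1:ℂ) + z.im • Complex.I) := congrArg L h0
        _ = _ := by rw [map_add, map_smul, map_smul]; rfl
    rw [hz, Real.norm_eq_abs, ← Real.sqrt_sq (norm_nonneg z), ← Real.sqrt_mul (by positivity)]
    apply Real.abs_le_sqrt
    rw [Complex.sq_norm, Complex.normSq_apply]
    nlinarith [sq_nonneg (z.re * L Complex.I - z.im * L 1)]
  calc ‖L‖ ^ 2 ≤ (Real.sqrt (L 1 ^ 2 + L Complex.I ^ 2)) ^ 2 := by gcongr
    _ = _ := Real.sq_sqrt (by positivity)


lemma deriv_theta_bdd : ∃ C : ℝ, 0 ≤ C ∧ ∀ x, |deriv (fun x : ℝ => Real.smoothTransition (2 * x - 1)) x| ≤ C := by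
  set Θ : ℝ → ℝ := fun x : ℝ => Real.smoothTransition (2 * x - 1) with hΘ
  have hC : ContDiff ℝ 1 Θ := Real.smoothTransition.contDiff.comp ((contDiff_const.mul contDiff_id).sub contDiff_const)
  obtain ⟨C, hCb⟩ := (isCompact_Icc (a := (1/2 : ℝ)) (b := 1)).exists_bound_of_continuousOn
    ((hC.continuous_deriv (by simp)).continuousOn)
  refine ⟨C, (norm_nonneg _).trans (hCb 1 (by constructor <;> norm_num)), fun x => ?_⟩
  have h0 : 0 ≤ C := (norm_nonneg _).trans (hCb 1 (by constructor <;> norm_num))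
  by_cases hx : x ∈ Icc (1/2 : ℝ) 1
  · exact hCb x hx
  · rw [mem_Icc, not_and_or, not_le, not_le] at hx
    rcases hx with hx | hx
    · have : Θ =ᶠ[𝓝 x] fun _ => 0 := by
        filter_upwards [Iio_mem_nhds hx] with y hy
        have : y < 1/2 := hy
        exact Real.smoothTransition.zero_of_nonpos (by linarith)
      rw [this.deriv_eq]; simpa using h0
    · have : Θ =ᶠ[𝓝 x] fun _ => 1 := by
        filter_upwards [Ioi_mem_nhds hx] with y hy
        have : 1 < y := hy
        exact Real.smoothTransition.one_of_one_le (by linarith)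
      rw [this.deriv_eq]; simpa using h0

lemma key_cap (x0 : ℂ) {R : ℝ} (hR : 0 < R) : ∃ C : ℝ, 0 ≤ C ∧ ∀ (g : ℂ → ℝ) (B N m : ℝ) (K' : Set ℂ),
    Measurable g → (∀ z, 1 ≤ g z) → (∀ z, g z ≤ B) →
    (∀ c : ℂ, ∀ ρ : ℝ, 0 < ρ → closedBall c ρ ⊆ closedBall x0 (4 * R) →
      ∫ θ in (-Real.pi)..Real.pi, g (c + ρ * Complex.exp (θ * Complex.I)) ≤ 2 * Real.pi * g c) →
    0 < N → IsCompact K' → K' ⊆ closedBall x0 R → (∃ W, IsOpen W ∧ K' ⊆ W ∧ ∀ z ∈ W, Real.exp N ≤ g z) →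
    (volume {z | z ∈ closedBall x0 (3 * R) ∧ Real.exp (N / 2) ≤ g z}).toReal ≤ m →
    ∃ χ : ℂ → ℝ, ContDiff ℝ 1 χ ∧ HasCompactSupport χ ∧
    (∀ z, 0 ≤ χ z ∧ χ z ≤ 1) ∧ (∃ O, IsOpen O ∧ K' ⊆ O ∧ ∀ z ∈ O, χ z = 1) ∧
    (∫ z, χ z ^ 2) ≤ m ∧ (∫ z, ‖fderiv ℝ χ z‖ ^ 2) ≤ C / N ^ 2 + C * m := by
  obtain ⟨Cθ, hCθ0, hCθ⟩ := deriv_theta_bdd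
  set Θ : ℝ → ℝ := fun x : ℝ => Real.smoothTransition (2 * x - 1) with hΘ
  have hΘC : ContDiff ℝ 1 Θ := Real.smoothTransition.contDiff.comp ((contDiff_const.mul contDiff_id).sub contDiff_const)
  have hΘ01 : ∀ x, 0 ≤ Θ x ∧ Θ x ≤ 1 := fun x => ⟨Real.smoothTransition.nonneg _, Real.smoothTransition.le_one _⟩
  let bump : ContDiffBump x0 := ⟨2 * R, 3 * R, by linarith, by linarith⟩
  set ψ : ℂ → ℝ := fun z => bump z with hψdef
  have hψC : ContDiff ℝ 1 ψ := bump.contDiff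
  have hψS : HasCompactSupport ψ := bump.hasCompactSupport
  have hψ01 : ∀ z, 0 ≤ ψ z ∧ ψ z ≤ 1 := fun z => ⟨bump.nonneg, bump.le_one⟩
  have hψ1 : ∀ z ∈ closedBall x0 (2 * R), ψ z = 1 := fun z hz => bump.one_of_mem_closedBall hz
  have hψ0 : ∀ z, 3 * R ≤ dist z x0 → ψ z = 0 := fun z hz => bump.zero_of_le_dist hz
  obtain ⟨A, hA⟩ := (hψC.continuous_fderiv (by simp)).bounded_above_of_compact_support (hψS.fderiv ℝ)
  have hA0 : 0 ≤ A := (norm_nonneg _).trans (hA 0)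
  set T0 := ∫ z, (fderiv ℝ ψ z 1 ^ 2 + fderiv ℝ ψ z Complex.I ^ 2) with hT0
  have hT00 : 0 ≤ T0 := integral_nonneg fun z => by positivity
  refine ⟨8 * Cθ ^ 2 * T0 + 4 * A ^ 2, by positivity, ?_⟩
  intro g B N m K' hgm hg1 hgB hsup hN hK' hK'R ⟨W, hW, hK'W, hWg⟩ hm
  obtain ⟨δ', hδ', hδ'W⟩ := hK'.exists_thickening_subset_open hW hK'W
  set δ := min (δ' / 2) (R / 2) with hδ
  have hδ0 : 0 < δ := lt_min (by linarith) (by linarith)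
  have hδ1 : δ ≤ δ' / 2 := min_le_left _ _
  have hδ2 : δ ≤ R / 2 := min_le_right _ _
  obtain ⟨h, hhC, hh1, hhg, hlap, hlow⟩ := mollify hgm hg1 hgB hsup hδ0 (by linarith)
  have hne : ∀ z, h z ≠ 0 := fun z => by linarith [hh1 z]
  have hhp : ∀ z, 0 < h z := fun z => by linarith [hh1 z]
  have hcac := caccioppoli hhC hh1 hψC hψS (fun z hz => hlap z (by
    rw [mem_closedBall]; by_contra hcon; exact hz (hψ0 z (not_le.1 hcon).le)))
  set v : ℂ → ℝ := fun z => Real.log (h z) / N with hv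
  have hvC : ContDiff ℝ 1 v := ((hhC.of_le (by norm_num)).log hne).div_const N
  set S := {z | z ∈ closedBall x0 (3 * R) ∧ Real.exp (N / 2) ≤ g z} with hS
  have hSm : MeasurableSet S := measurableSet_closedBall.inter (measurableSet_le measurable_const hgm)
  have hSf : volume S < ⊤ := (measure_mono (fun z hz => hz.1)).trans_lt (measure_closedBall_lt_top (x := x0) (r := 3 * R))
  have hΘS : ∀ z ∈ closedBall x0 (3 * R), z ∉ S → Θ (v z) = 0 := by
    intro z hz hzS
    apply Real.smoothTransition.zero_of_nonpos
    have h1 : g z < Real.exp (N / 2) := by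
      by_contra hcon; exact hzS ⟨hz, not_lt.1 hcon⟩
    have h2 : h z < Real.exp (N / 2) := (hhg z hz).trans_lt h1
    have h3 : Real.log (h z) ≤ N / 2 := by
      rw [Real.log_le_iff_le_exp (hhp z)]; exact h2.le
    have h4 : v z ≤ 1 / 2 := by
      simp only [hv]
      rw [div_le_iff₀ hN]; linarith
    linarith
  set χ : ℂ → ℝ := fun z => ψ z * Θ (v z) with hχ
  have hχC : ContDiff ℝ 1 χ := hψC.mul (hΘC.comp hvC)
  have hχS : HasCompactSupport χ := hψS.mul_right
  have hχ01 : ∀ z, 0 ≤ χ z ∧ χ z ≤ 1 := fun z => ⟨mul_nonneg (hψ01 z).1 (hΘ01 _).1,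
    mul_le_one₀ (hψ01 z).2 (hΘ01 _).1 (hΘ01 _).2⟩
  have hIS : Integrable (S.indicator (fun _ => (1:ℝ))) := by
    rw [integrable_indicator_iff hSm]
    exact integrableOn_const hSf.ne
  have hIv : ∫ z, S.indicator (fun _ => (1:ℝ)) z ≤ m := by
    rw [integral_indicator hSm, setIntegral_const]
    simpa [Measure.real] using hm
  have hm0 : 0 ≤ m := ENNReal.toReal_nonneg.trans hm
  refine ⟨χ, hχC, hχS, hχ01, ⟨thickening δ K', isOpen_thickening, self_subset_thickening hδ0 K', ?_⟩, ?_, ?_⟩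
  · intro z hz
    obtain ⟨y, hy, hyz⟩ := mem_thickening_iff.1 hz
    have h1 : ψ z = 1 := hψ1 z (by
      rw [mem_closedBall]
      have := mem_closedBall.1 (hK'R hy)
      linarith [dist_triangle z y x0])
    have h2 : Real.exp N ≤ h z := by
      apply hlow
      intro w hw
      apply hWg; apply hδ'W
      rw [mem_thickening_iff]
      exact ⟨y, hy, by have := mem_ball.1 hw; linarith [dist_triangle w z y]⟩
    have h3 : 1 ≤ v z := by
      simp only [hv]
      rw [le_div_iff₀ hN, one_mul, Real.le_log_iff_exp_le (hhp z)]; exact h2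
    simp only [hχ, h1, one_mul]
    exact Real.smoothTransition.one_of_one_le (by linarith)
  · refine le_trans (integral_mono (int_sq hχC hχS) hIS fun z => ?_) hIv
    by_cases hz : z ∈ S
    · simp only [hz, indicator_of_mem]
      exact pow_le_one₀ (hχ01 z).1 (hχ01 z).2
    · simp only [hz, not_false_eq_true, indicator_of_notMem]
      by_cases hz2 : z ∈ closedBall x0 (3 * R)
      · simp [hχ, hΘS z hz2 hz]
      · simp [hχ, hψ0 z (not_le.1 hz2).le]
  · have i1 : Integrable (fun z => ψ z ^ 2 * ((fderiv ℝ h z 1 / h z) ^ 2 + (fderiv ℝ h z Complex.I / h z) ^ 2)) := by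
      have c1 : ∀ e : ℂ, Continuous (fun z => fderiv ℝ h z e / h z) := fun e =>
        ((hhC.continuous_fderiv (by simp)).clm_apply continuous_const).div hhC.continuous hne
      refine Continuous.integrable_of_hasCompactSupport ((hψC.continuous.pow 2).mul (((c1 1).pow 2).add ((c1 Complex.I).pow 2))) ?_
      refine hψS.mono fun z hz => ?_
      simp only [Function.mem_support] at hz ⊢
      contrapose! hz
      simp [hz]
    have hmain : ∫ z, ‖fderiv ℝ χ z‖ ^ 2 ≤ ∫ z, (2 * Cθ ^ 2 / N ^ 2 * (ψ z ^ 2 * ((fderiv ℝ h z 1 / h z) ^ 2 + (fderiv ℝ h z Complex.I / h z) ^ 2))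
        + 4 * A ^ 2 * S.indicator (fun _ => (1:ℝ)) z) := by
      refine integral_mono (int_dsq hχC hχS) ((i1.const_mul _).add (hIS.const_mul _)) fun z => ?_
      simp only
      refine (opnorm_sq_le _).trans ?_
      have hd : ∀ e, fderiv ℝ χ z e = Θ (v z) * fderiv ℝ ψ z e + ψ z * (deriv Θ (v z) / N) * (fderiv ℝ h z e / h z) := by
        intro e
        have d1 : HasFDerivAt ψ (fderiv ℝ ψ z) z := (hψC.differentiable (by simp) z).hasFDerivAt
        have d2 : HasFDerivAt h (fderiv ℝ h z) z := (hhC.differentiable (by simp) z).hasFDerivAt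
        have d3 : HasFDerivAt v (N⁻¹ • ((h z)⁻¹ • fderiv ℝ h z)) z := by
          have := (d2.log (hne z)).const_mul N⁻¹
          refine this.congr_of_eventuallyEq (Eventually.of_forall fun w => ?_)
          simp only [hv]; ring
        have d4 : HasFDerivAt (fun z => Θ (v z)) (deriv Θ (v z) • (N⁻¹ • ((h z)⁻¹ • fderiv ℝ h z))) z :=
          HasDerivAt.comp_hasFDerivAt (h₂ := Θ) z ((hΘC.differentiable (by simp)) (v z)).hasDerivAt d3
        have d5 : HasFDerivAt χ _ z := d1.mul d4
        rw [d5.fderiv]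
        simp
        field_simp
        ring
      have hD : (deriv Θ (v z)) ^ 2 ≤ Cθ ^ 2 := by
        rw [← sq_abs]
        have := hCθ (v z)
        gcongr
      have hpart : Θ (v z) ^ 2 * (fderiv ℝ ψ z 1 ^ 2 + fderiv ℝ ψ z Complex.I ^ 2) ≤ 2 * A ^ 2 * S.indicator (fun _ => (1:ℝ)) z := by
        by_cases hz : z ∈ S
        · simp only [hz, indicator_of_mem, mul_one]
          have b : ∀ e : ℂ, ‖e‖ = 1 → fderiv ℝ ψ z e ^ 2 ≤ A ^ 2 := by
            intro e he
            rw [← sq_abs]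
            have := (fderiv ℝ ψ z).le_opNorm e
            rw [he, mul_one, Real.norm_eq_abs] at this
            have := this.trans (hA z)
            gcongr
          have b1 := b 1 (by simp)
          have b2 := b Complex.I (by simp)
          have b3 : Θ (v z) ^ 2 ≤ 1 := pow_le_one₀ (hΘ01 _).1 (hΘ01 _).2
          have b4 : 0 ≤ fderiv ℝ ψ z 1 ^ 2 + fderiv ℝ ψ z Complex.I ^ 2 := by positivity
          have := mul_le_mul_of_nonneg_right b3 b4
          linarith
        · simp only [hz, not_false_eq_true, indicator_of_notMem, mul_zero]
          by_cases hz2 : z ∈ closedBall x0 (3 * R)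
          · simp [hΘS z hz2 hz]
          · have : ψ =ᶠ[𝓝 z] fun _ => 0 := by
              filter_upwards [isClosed_closedBall.isOpen_compl.mem_nhds hz2] with w hw
              have hw2 : ¬ dist w x0 ≤ 3 * R := hw
              exact hψ0 w (not_le.1 hw2).le
            simp [this.fderiv_eq]
      rw [hd, hd]
      set a := fderiv ℝ h z 1 / h z
      set b := fderiv ℝ h z Complex.I / h z
      set p := fderiv ℝ ψ z 1
      set q := fderiv ℝ ψ z Complex.I
      have e1 : 2 * Cθ ^ 2 / N ^ 2 * (ψ z ^ 2 * (a ^ 2 + b ^ 2)) = 2 * Cθ ^ 2 * ((ψ z / N) ^ 2 * (a ^ 2 + b ^ 2)) := by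
        field_simp
      have e2 : ψ z * (deriv Θ (v z) / N) = ψ z / N * deriv Θ (v z) := by ring
      have e3 : 0 ≤ (ψ z / N) ^ 2 * (a ^ 2 + b ^ 2) := by positivity
      have e4 := mul_le_mul_of_nonneg_right hD e3
      rw [e1, e2]
      nlinarith [sq_nonneg (Θ (v z) * p - ψ z / N * deriv Θ (v z) * a), sq_nonneg (Θ (v z) * q - ψ z / N * deriv Θ (v z) * b)]
    rw [integral_add (i1.const_mul _) (hIS.const_mul _), integral_const_mul, integral_const_mul] at hmain
    have f1 := mul_le_mul_of_nonneg_left hcac (show 0 ≤ 2 * Cθ ^ 2 / N ^ 2 by positivity)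
    have f2 := mul_le_mul_of_nonneg_left hIv (show 0 ≤ 4 * A ^ 2 by positivity)
    rw [← hT0] at f1
    have f3 : (8 * Cθ ^ 2 * T0 + 4 * A ^ 2) / N ^ 2 = 2 * Cθ ^ 2 / N ^ 2 * (4 * T0) + 4 * A ^ 2 / N ^ 2 := by ring
    have f4 : 0 ≤ 4 * A ^ 2 / N ^ 2 := by positivity
    have f5 : 0 ≤ 8 * Cθ ^ 2 * T0 * m := by positivity
    rw [f3]
    linarith


lemma meas_usc {u : ℂ → EReal} {s : Set ℂ} (hs : MeasurableSet s) (hu : UpperSemicontinuousOn u s) (b : EReal) :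
    MeasurableSet (s ∩ u ⁻¹' Iio b) := by
  obtain ⟨v, hv, h⟩ := upperSemicontinuousOn_iff_preimage_Iio.1 hu b
  rw [h]
  exact hs.inter hv.measurableSet

lemma trunc_props {u : ℂ → EReal} {U : Set ℂ} (hu : SubharmonicOn u U) {x0 : ℂ} {r : ℝ} (hr : 0 < r)
    (hrU : closedBall x0 r ⊆ U) : ∃ M : ℝ, 0 ≤ M ∧ ∀ n : ℕ, ∃ g : ℂ → ℝ, Measurable g ∧
      (∀ z, 1 ≤ g z) ∧ (∀ z, g z ≤ M + 1 + n) ∧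
      (∀ z ∈ closedBall x0 r, ((M + 1 - g z : ℝ) : EReal) = max (u z) (-(n : ℝ) : EReal)) ∧
      (∀ c : ℂ, ∀ ρ : ℝ, 0 < ρ → closedBall c ρ ⊆ closedBall x0 r →
        ∫ θ in (-Real.pi)..Real.pi, g (c + ρ * Complex.exp (θ * Complex.I)) ≤ 2 * Real.pi * g c) := by
  classical
  obtain ⟨husc, htop, hmean⟩ := hu
  have hpi := Real.pi_pos
  have husc' := husc.mono hrU
  obtain ⟨a, ha, hmax⟩ := husc'.exists_isMaxOn (nonempty_closedBall.2 hr.le) (isCompact_closedBall x0 r)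
  set M : ℝ := max (u a).toReal 0 with hM
  have hM0 : 0 ≤ M := le_max_right _ _
  have huM : ∀ z ∈ closedBall x0 r, u z ≤ M := by
    intro z hz
    refine (hmax hz).trans ((EReal.le_coe_toReal (htop a (hrU ha)).ne).trans ?_)
    exact EReal.coe_le_coe_iff.2 (le_max_left _ _)
  refine ⟨M, hM0, fun n => ?_⟩
  set g : ℂ → ℝ := fun z => if z ∈ closedBall x0 r then M + 1 - (max (u z) (-(n : ℝ) : EReal)).toReal else 1 with hg
  have hT : ∀ z ∈ closedBall x0 r, (((max (u z) (-(n : ℝ) : EReal)).toReal : ℝ) : EReal) = max (u z) (-(n : ℝ) : EReal) := by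
    intro z hz
    apply EReal.coe_toReal
    · refine ne_of_lt (max_lt (htop z (hrU hz)) ?_)
      rw [← EReal.coe_neg]; exact EReal.coe_lt_top _
    · refine ne_of_gt (lt_of_lt_of_le ?_ (le_max_right _ _))
      rw [← EReal.coe_neg]; exact EReal.bot_lt_coe _
  have hTM : ∀ z ∈ closedBall x0 r, (max (u z) (-(n : ℝ) : EReal)).toReal ≤ M := by
    intro z hz
    rw [← EReal.coe_le_coe_iff, hT z hz]
    refine max_le (huM z hz) ?_
    rw [← EReal.coe_neg, EReal.coe_le_coe_iff]
    have : (0:ℝ) ≤ n := Nat.cast_nonneg n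
    linarith
  have hTn : ∀ z ∈ closedBall x0 r, -(n:ℝ) ≤ (max (u z) (-(n : ℝ) : EReal)).toReal := by
    intro z hz
    rw [← EReal.coe_le_coe_iff, hT z hz, EReal.coe_neg]
    exact le_max_right _ _
  have hgin : ∀ z ∈ closedBall x0 r, g z = M + 1 - (max (u z) (-(n : ℝ) : EReal)).toReal := fun z hz => by
    simp only [hg]; rw [if_pos hz]
  have hgout : ∀ z ∉ closedBall x0 r, g z = 1 := fun z hz => by
    simp only [hg]; rw [if_neg hz]
  have hg1 : ∀ z, 1 ≤ g z := by
    intro z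
    by_cases hz : z ∈ closedBall x0 r
    · rw [hgin z hz]; linarith [hTM z hz]
    · rw [hgout z hz]
  have hgB : ∀ z, g z ≤ M + 1 + n := by
    intro z
    by_cases hz : z ∈ closedBall x0 r
    · rw [hgin z hz]; linarith [hTn z hz]
    · rw [hgout z hz]
      have : (0:ℝ) ≤ n := Nat.cast_nonneg n
      linarith
  have hgm : Measurable g := by
    apply measurable_of_Ioi
    intro b
    have hcase : MeasurableSet (closedBall x0 r ∩ g ⁻¹' Ioi b) := by
      by_cases hb : (M + 1 - b) ≤ -n
      · convert MeasurableSet.empty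
        ext z
        simp only [mem_inter_iff, mem_preimage, mem_Ioi, mem_empty_iff_false, iff_false, not_and, not_lt]
        intro hz
        linarith [hgB z]
      · push Not at hb
        convert meas_usc measurableSet_closedBall husc' (((M + 1 - b : ℝ)) : EReal) using 1
        ext z
        simp only [mem_inter_iff, mem_preimage, mem_Ioi, mem_Iio]
        refine and_congr_right fun hz => ?_
        rw [hgin z hz]
        constructor
        · intro h
          refine (le_max_left (u z) (-(n : ℝ) : EReal)).trans_lt ?_
          rw [← hT z hz, EReal.coe_lt_coe_iff]; linarith
        · intro h
          have : max (u z) (-(n : ℝ) : EReal) < ((M + 1 - b : ℝ) : EReal) := by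
            refine max_lt h ?_
            rw [← EReal.coe_neg, EReal.coe_lt_coe_iff]; exact hb
          rw [← hT z hz, EReal.coe_lt_coe_iff] at this
          linarith
    have hcase2 : MeasurableSet ((closedBall x0 r)ᶜ ∩ g ⁻¹' Ioi b) := by
      by_cases hb : b < 1
      · convert (measurableSet_closedBall (x := x0) (ε := r)).compl using 1
        ext z
        simp only [mem_inter_iff, mem_preimage, mem_Ioi, and_iff_left_iff_imp]
        intro _
        linarith [hg1 z]
      · convert MeasurableSet.empty
        ext z
        simp only [mem_inter_iff, mem_preimage, mem_Ioi, mem_empty_iff_false, iff_false, not_and]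
        intro hz
        rw [hgout z hz]; exact hb
    have := hcase.union hcase2
    rwa [← union_inter_distrib_right, union_compl_self, univ_inter] at this
  refine ⟨g, hgm, hg1, hgB, fun z hz => ?_, fun c ρ hρ hcρ => ?_⟩
  · rw [← hT z hz, hgin z hz]
    congr 1; ring
  · have hc : c ∈ closedBall x0 r := hcρ (mem_closedBall_self hρ.le)
    have hcirc : ∀ θ : ℝ, c + ρ * Complex.exp (θ * Complex.I) ∈ closedBall x0 r := by
      intro θ
      apply hcρ
      rw [mem_closedBall, dist_self_add_left, norm_polar, abs_of_pos hρ]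
    have h1 := (hmean c (hrU hc) ρ hρ (hcρ.trans hrU)).trans (iInf_le _ n)
    have hper : Function.Periodic (fun θ : ℝ => g (c + ρ * Complex.exp (θ * Complex.I))) (2 * Real.pi) := by
      intro θ
      have h := periodic_circleMap c ρ θ
      simp only [circleMap] at h
      simp only [h]
    have h2 := hper.intervalIntegral_add_eq 0 (-Real.pi)
    rw [zero_add, show -Real.pi + 2 * Real.pi = Real.pi by ring] at h2
    rw [← h2]
    have hm2 : Measurable (fun θ : ℝ => g (c + ρ * Complex.exp (θ * Complex.I))) := by fun_prop
    have hi : IntervalIntegrable (fun θ : ℝ => g (c + ρ * Complex.exp (θ * Complex.I))) volume 0 (2 * Real.pi) := by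
      refine (intervalIntegrable_const (c := M + 1 + n)).mono_fun' hm2.aestronglyMeasurable (Eventually.of_forall fun θ => ?_)
      have a1 := hg1 (c + ρ * Complex.exp (θ * Complex.I))
      have a2 := hgB (c + ρ * Complex.exp (θ * Complex.I))
      show ‖g (c + ρ * Complex.exp (θ * Complex.I))‖ ≤ M + 1 + n
      rw [Real.norm_of_nonneg (by linarith)]
      exact a2
    have h3 : circleAvgTrunc u c ρ n = (M + 1) - (2 * Real.pi)⁻¹ * ∫ θ in (0:ℝ)..(2 * Real.pi), g (c + ρ * Complex.exp (θ * Complex.I)) := by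
      rw [circleAvgTrunc]
      have : ∀ θ : ℝ, (max (u (c + ρ * Complex.exp (θ * Complex.I))) (-(n : ℝ) : EReal)).toReal = (M + 1) - g (c + ρ * Complex.exp (θ * Complex.I)) := by
        intro θ
        rw [hgin _ (hcirc θ)]; ring
      simp_rw [this]
      rw [intervalIntegral.integral_sub intervalIntegrable_const hi, intervalIntegral.integral_const]
      simp only [sub_zero, smul_eq_mul]
      rw [mul_sub, ← mul_assoc, inv_mul_cancel₀ (by positivity), one_mul]
    have h4 : ∫ θ in (0:ℝ)..(2 * Real.pi), g (c + ρ * Complex.exp (θ * Complex.I)) ≤ 2 * Real.pi * (M + 1 + n) := by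
      have := intervalIntegral.integral_mono_on (by positivity) hi (intervalIntegrable_const (c := M + 1 + n)) (fun θ _ => hgB (c + ρ * Complex.exp (θ * Complex.I)))
      rw [intervalIntegral.integral_const] at this
      simpa using this
    have h5 : (max (u c) (-(n : ℝ) : EReal)).toReal ≤ circleAvgTrunc u c ρ n := by
      rw [← EReal.coe_le_coe_iff, hT c hc]
      refine max_le h1 ?_
      rw [← EReal.coe_neg, EReal.coe_le_coe_iff, h3]
      have := mul_le_mul_of_nonneg_left h4 (show 0 ≤ (2 * Real.pi)⁻¹ by positivity)
      rw [← mul_assoc, inv_mul_cancel₀ (by positivity), one_mul] at this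
      linarith
    rw [h3] at h5
    have h6 : (2 * Real.pi)⁻¹ * ∫ θ in (0:ℝ)..(2 * Real.pi), g (c + ρ * Complex.exp (θ * Complex.I)) ≤ g c := by
      rw [hgin c hc]; linarith
    rwa [inv_mul_le_iff₀ (by positivity)] at h6


lemma meas_bot {u : ℂ → EReal} {s : Set ℂ} (hs : MeasurableSet s) (hu : UpperSemicontinuousOn u s) :
    MeasurableSet (s ∩ u ⁻¹' {⊥}) := by
  have : s ∩ u ⁻¹' {⊥} = s ∩ ⋂ n : ℕ, (s ∩ u ⁻¹' Iio ((-(n : ℝ) : ℝ) : EReal)) := by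
    ext z
    simp only [mem_inter_iff, mem_preimage, mem_singleton_iff, mem_iInter, mem_Iio]
    refine and_congr_right fun hz => ?_
    constructor
    · intro h n
      rw [h]
      exact ⟨hz, EReal.bot_lt_coe _⟩
    · intro h
      rw [EReal.eq_bot_iff_forall_lt]
      intro y
      obtain ⟨n, hn⟩ := exists_nat_gt (-y)
      refine (h n).2.trans ?_
      rw [EReal.coe_lt_coe_iff]; linarith
  rw [this]
  exact hs.inter (MeasurableSet.iInter fun n => meas_usc hs hu _)

lemma null_ball {u : ℂ → EReal} {U : Set ℂ} (hu : SubharmonicOn u U) {y : ℂ} {ρ : ℝ} (hρ : 0 < ρ)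
    (hU : closedBall y ρ ⊆ U) (hy : u y ≠ ⊥) : volume (ball y ρ ∩ u ⁻¹' {⊥}) = 0 := by
  have hpi := Real.pi_pos
  obtain ⟨M, hM0, hM⟩ := trunc_props hu hρ hU
  set A := ball y ρ ∩ u ⁻¹' {⊥} with hA
  have hAm : MeasurableSet A := meas_bot measurableSet_ball (hu.1.mono (ball_subset_closedBall.trans hU))
  set A' := (fun w => y + w) ⁻¹' A with hA'
  have hA'm : MeasurableSet A' := (measurable_const_add y) hAm
  have hAA' : volume A' = volume A := measure_preimage_add volume y A
  have hyU : y ∈ U := hU (mem_closedBall_self hρ.le)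
  have ht : ((u y).toReal : EReal) = u y := EReal.coe_toReal (hu.2.1 y hyU).ne hy
  set t := (u y).toReal with htdef
  set k : ℂ → ℝ := (ball (0:ℂ) ρ).indicator (fun _ => 1) with hk
  have hkm : Measurable k := measurable_const.indicator measurableSet_ball
  have hki : Integrable k := by
    rw [hk, integrable_indicator_iff measurableSet_ball]
    exact integrableOn_const measure_ball_lt_top.ne
  have hkn : ∀ z, 0 ≤ k z := fun z => indicator_nonneg (fun _ _ => zero_le_one) z
  have hfin : volume A' < ⊤ := by
    rw [hAA']; exact (measure_mono inter_subset_left).trans_lt measure_ball_lt_top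
  set C0 := ∫ z, k z with hC0
  have hC00 : 0 ≤ C0 := integral_nonneg hkn
  have hest : ∀ n : ℕ, (n : ℝ) * (volume A').toReal ≤ C0 * (M + 1 - t) := by
    intro n
    obtain ⟨g, hgm, hg1, hgB, hgT, hsup⟩ := hM n
    have hmeas : Measurable (fun w => k w * g (y + w)) := hkm.mul (hgm.comp (measurable_const_add y))
    have hint : Integrable (fun w => k w * g (y + w)) := by
      refine (hki.mul_const (M + 1 + n)).mono' hmeas.aestronglyMeasurable (Eventually.of_forall fun w => ?_)
      rw [Real.norm_of_nonneg (mul_nonneg (hkn w) (by linarith [hg1 (y + w)]))]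
      exact mul_le_mul_of_nonneg_left (hgB _) (hkn w)
    have e1 := polar_integral hmeas.stronglyMeasurable hint
    have e2 := polar_integral (hkm.mul_const (g y)).stronglyMeasurable (hki.mul_const (g y))
    have hle : ∫ w, k w * g (y + w) ≤ C0 * g y := by
      rw [hC0, ← integral_mul_const, e1, e2]
      refine setIntegral_mono_on (polar_radial_integrable hmeas.stronglyMeasurable hint)
        (polar_radial_integrable (hkm.mul_const (g y)).stronglyMeasurable (hki.mul_const (g y)))
        measurableSet_Ioi fun s hs => ?_
      have hs : 0 < s := hs
      simp only [smul_eq_mul]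
      apply mul_le_mul_of_nonneg_left _ hs.le
      by_cases hsρ : s < ρ
      · have hk1 : ∀ θ : ℝ, k (s * Complex.exp (θ * Complex.I)) = 1 := by
          intro θ
          apply indicator_of_mem
          rw [mem_ball_zero_iff, norm_polar, abs_of_pos hs]; exact hsρ
        simp only [hk1, one_mul]
        have := hsup y s hs (closedBall_subset_closedBall hsρ.le)
        rw [intervalIntegral.integral_const]
        refine this.trans (le_of_eq ?_)
        rw [smul_eq_mul]; ring
      · have hk1 : ∀ θ : ℝ, k (s * Complex.exp (θ * Complex.I)) = 0 := by
          intro θ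
          apply indicator_of_notMem
          rw [mem_ball_zero_iff, norm_polar, abs_of_pos hs]; exact hsρ
        simp [hk1]
    have hgy : g y ≤ M + 1 - t := by
      have := hgT y (mem_closedBall_self hρ.le)
      have h2 : (t : EReal) ≤ ((M + 1 - g y : ℝ) : EReal) := by
        rw [this, ht]; exact le_max_left _ _
      rw [EReal.coe_le_coe_iff] at h2
      linarith
    have hlow : (n : ℝ) * (volume A').toReal ≤ ∫ w, k w * g (y + w) := by
      have : (n : ℝ) * (volume A').toReal = ∫ w, A'.indicator (fun _ => (n:ℝ)) w := by
        rw [integral_indicator hA'm, setIntegral_const, smul_eq_mul, mul_comm]; rfl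
      rw [this]
      refine integral_mono ((integrable_indicator_iff hA'm).2 (integrableOn_const hfin.ne)) hint fun w => ?_
      by_cases hw : w ∈ A'
      · have h1 : y + w ∈ ball y ρ := hw.1
        have h2 : u (y + w) = ⊥ := hw.2
        have h3 : k w = 1 := by
          apply indicator_of_mem
          simpa using h1
        have h4 := hgT (y + w) (ball_subset_closedBall h1)
        rw [h2, max_eq_right bot_le, ← EReal.coe_neg, EReal.coe_eq_coe_iff] at h4
        simp only [hw, indicator_of_mem, h3, one_mul]
        linarith
      · simp only [hw, not_false_eq_true, indicator_of_notMem]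
        exact mul_nonneg (hkn w) (by linarith [hg1 (y + w)])
    exact hlow.trans (hle.trans (mul_le_mul_of_nonneg_left hgy hC00))
  rw [← hAA']
  by_contra hne
  have hpos : 0 < (volume A').toReal := ENNReal.toReal_pos hne hfin.ne
  obtain ⟨n, hn⟩ := exists_nat_gt (C0 * (M + 1 - t) / (volume A').toReal)
  rw [div_lt_iff₀ hpos] at hn
  exact absurd (hest n) (not_le.2 hn)

lemma null_local {u : ℂ → EReal} {U : Set ℂ} (hUo : IsOpen U) (hUc : IsConnected U) (hu : SubharmonicOn u U)
    (hx : ∃ x ∈ U, u x ≠ ⊥) : ∀ y ∈ U, ∃ ρ > 0, volume (ball y ρ ∩ u ⁻¹' {⊥}) = 0 := by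
  set T := {y | ∃ ρ > 0, volume (ball y ρ ∩ u ⁻¹' {⊥}) = 0} with hT
  have hTo : IsOpen T := by
    rw [Metric.isOpen_iff]
    rintro y ⟨ρ, hρ, h⟩
    refine ⟨ρ, hρ, fun z hz => ?_⟩
    obtain ⟨ρ', hρ', hs⟩ := exists_ball_subset_ball hz
    exact ⟨ρ', hρ', measure_mono_null (inter_subset_inter_left _ hs) h⟩
  set T2 := U \ T with hT2
  have hT2o : IsOpen T2 := by
    rw [Metric.isOpen_iff]
    rintro y ⟨hy, hyT⟩
    obtain ⟨ρ, hρ, hρU⟩ := Metric.isOpen_iff.1 hUo y hy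
    have hbot : ∀ z ∈ ball y (ρ / 4), u z = ⊥ := by
      intro z hz
      by_contra hne
      rw [mem_ball] at hz
      have := null_ball hu (y := z) (ρ := ρ / 2) (by linarith) (fun w hw => hρU (by
        rw [mem_closedBall] at hw; rw [mem_ball]
        linarith [dist_triangle w z y])) hne
      refine hyT ⟨ρ / 4, by linarith, measure_mono_null (inter_subset_inter_left _ ?_) this⟩
      intro w hw
      rw [mem_ball] at hw ⊢
      linarith [dist_triangle w y z, dist_comm z y]
    refine ⟨ρ / 4, by linarith, fun z hz => ⟨hρU (ball_subset_ball (by linarith) hz), ?_⟩⟩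
    rintro ⟨ρ', hρ', h⟩
    have hz2 : z ∈ ball y (ρ / 4) ∩ ball z ρ' := ⟨hz, mem_ball_self hρ'⟩
    have hpos := (isOpen_ball.inter isOpen_ball).measure_pos volume ⟨z, hz2⟩
    refine hpos.ne' (measure_mono_null ?_ h)
    rintro w ⟨h1, h2⟩
    exact ⟨h2, hbot w h1⟩
  have hsub : U ⊆ T ∪ T2 := fun y hy => by
    by_cases h : y ∈ T
    · exact Or.inl h
    · exact Or.inr ⟨hy, h⟩
  obtain ⟨x, hxU, hxb⟩ := hx
  obtain ⟨ρ, hρ, hρU⟩ := Metric.isOpen_iff.1 hUo x hxU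
  have hxT : x ∈ T := ⟨ρ / 2, by linarith, null_ball hu (by linarith) ((closedBall_subset_ball (by linarith)).trans hρU) hxb⟩
  have := hUc.isPreconnected.subset_left_of_subset_union hTo hT2o (disjoint_left.2 fun y h1 h2 => h2.2 h1) hsub ⟨x, hxU, hxT⟩
  exact this

lemma polar_smallCap_local {u : ℂ → EReal} {U : Set ℂ} (hUo : IsOpen U) (hUc : IsConnected U) (hu : SubharmonicOn u U)
    (hx : ∃ x ∈ U, u x ≠ ⊥) {x0 : ℂ} (hx0 : x0 ∈ U) :
    ∃ R > 0, ∀ K' : Set ℂ, IsCompact K' → K' ⊆ closedBall x0 R → (∀ z ∈ K', u z = ⊥) → SmallCap K' := by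
  obtain ⟨ρ1, hρ1, hnull⟩ := null_local hUo hUc hu hx x0 hx0
  obtain ⟨ρ2, hρ2, hρ2U⟩ := Metric.isOpen_iff.1 hUo x0 hx0
  set R := min (ρ1 / 5) (ρ2 / 5) with hR
  have hR0 : 0 < R := lt_min (by linarith) (by linarith)
  have hR1 : R ≤ ρ1 / 5 := min_le_left _ _
  have hR2 : R ≤ ρ2 / 5 := min_le_right _ _
  refine ⟨R, hR0, fun K' hK' hK'R hK'u ε hε => ?_⟩
  have hU4 : closedBall x0 (4 * R) ⊆ U := (closedBall_subset_ball (by linarith)).trans hρ2U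
  obtain ⟨C, hC0, hC⟩ := key_cap x0 hR0
  obtain ⟨M, hM0, hM⟩ := trunc_props hu (r := 4 * R) (by linarith) hU4
  have husc4 : UpperSemicontinuousOn u (closedBall x0 (4 * R)) := hu.1.mono hU4
  have h34 : closedBall x0 (3 * R) ⊆ closedBall x0 (4 * R) := closedBall_subset_closedBall (by linarith)
  set m := min ε (ε / (2 * (C + 1))) with hm
  have hm0 : 0 < m := lt_min hε (by positivity)
  -- choose j
  obtain ⟨j, hj⟩ : ∃ j : ℕ, (volume (closedBall x0 (3 * R) ∩ u ⁻¹' Iio ((-(j : ℝ) : ℝ) : EReal))).toReal ≤ m := by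
    have hanti : Antitone (fun j : ℕ => closedBall x0 (3 * R) ∩ u ⁻¹' Iio ((-(j : ℝ) : ℝ) : EReal)) := by
      intro a b hab
      refine inter_subset_inter_right _ (preimage_mono (Iio_subset_Iio ?_))
      rw [EReal.coe_le_coe_iff]
      have : (a:ℝ) ≤ b := by exact_mod_cast hab
      linarith
    have hlim := tendsto_measure_iInter_atTop (μ := volume)
      (fun j : ℕ => (meas_usc measurableSet_closedBall (husc4.mono h34) ((-(j : ℝ) : ℝ) : EReal)).nullMeasurableSet)
      hanti ⟨0, ((measure_mono inter_subset_left).trans_lt (measure_closedBall_lt_top (x := x0) (r := 3 * R))).ne⟩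
    have hz : volume (⋂ j : ℕ, closedBall x0 (3 * R) ∩ u ⁻¹' Iio ((-(j : ℝ) : ℝ) : EReal)) = 0 := by
      refine measure_mono_null ?_ hnull
      intro z hz
      rw [mem_iInter] at hz
      refine ⟨closedBall_subset_ball (by linarith) (hz 0).1, ?_⟩
      show u z = ⊥
      rw [EReal.eq_bot_iff_forall_lt]
      intro y
      obtain ⟨n, hn⟩ := exists_nat_gt (-y)
      have h2 : u z < ((-(n : ℝ) : ℝ) : EReal) := (hz n).2
      refine h2.trans ?_
      rw [EReal.coe_lt_coe_iff]; linarith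
    rw [hz] at hlim
    have := (hlim.eventually (gt_mem_nhds (show (0:ℝ≥0∞) < ENNReal.ofReal m by simpa using hm0))).exists
    obtain ⟨j, hj⟩ := this
    refine ⟨j, ?_⟩
    exact ENNReal.toReal_le_of_le_ofReal hm0.le hj.le
  -- choose N
  obtain ⟨N, hN0, hN1, hN2⟩ : ∃ N : ℝ, 0 < N ∧ C / N ^ 2 ≤ ε / 2 ∧ M + 2 + j ≤ Real.exp (N / 2) := by
    have t1 : Tendsto (fun N : ℝ => C / N ^ 2) atTop (𝓝 0) := tendsto_const_nhds.div_atTop (tendsto_pow_atTop (by norm_num))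
    have t2 : Tendsto (fun N : ℝ => Real.exp (N / 2)) atTop atTop := Real.tendsto_exp_atTop.comp (tendsto_id.atTop_div_const (by norm_num))
    exact ((eventually_gt_atTop 0).and ((t1.eventually (ge_mem_nhds (by positivity : (0:ℝ) < ε / 2))).and (t2.eventually_ge_atTop _))).exists
  obtain ⟨n, hn⟩ := exists_nat_ge (Real.exp N)
  obtain ⟨g, hgm, hg1, hgB, hgT, hsup⟩ := hM n
  have hj0 : (0:ℝ) ≤ j := Nat.cast_nonneg j
  obtain ⟨χ, c1, c2, c3, c4, c5, c6⟩ := hC g (M + 1 + n) N m K' hgm hg1 hgB hsup hN0 hK' hK'R (by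
    obtain ⟨v, hv, hveq⟩ := upperSemicontinuousOn_iff_preimage_Iio.1 (hu.1.mono (ball_subset_closedBall.trans hU4)) ((-(n:ℝ) + 1 : ℝ) : EReal)
    refine ⟨ball x0 (4 * R) ∩ u ⁻¹' Iio ((-(n:ℝ) + 1 : ℝ) : EReal), ?_, ?_, ?_⟩
    · rw [hveq]; exact isOpen_ball.inter hv
    · intro z hz
      refine ⟨closedBall_subset_ball (by linarith) (hK'R hz), ?_⟩
      show u z < _
      rw [hK'u z hz]; exact EReal.bot_lt_coe _
    · rintro z ⟨h1, h2⟩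
      have h3 := hgT z (ball_subset_closedBall h1)
      have h4 : ((M + 1 - g z : ℝ) : EReal) < ((-(n:ℝ) + 1 : ℝ) : EReal) := by
        rw [h3]
        refine max_lt h2 ?_
        rw [← EReal.coe_neg, EReal.coe_lt_coe_iff]; linarith
      rw [EReal.coe_lt_coe_iff] at h4
      linarith) (by
    refine le_trans (ENNReal.toReal_mono ?_ (measure_mono ?_)) hj
    · exact ((measure_mono inter_subset_left).trans_lt (measure_closedBall_lt_top (x := x0) (r := 3 * R))).ne
    · rintro z ⟨h1, h2⟩
      refine ⟨h1, ?_⟩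
      show u z < _
      refine (le_max_left (u z) (-(n : ℝ) : EReal)).trans_lt ?_
      rw [← hgT z (h34 h1), EReal.coe_lt_coe_iff]
      linarith)
  refine ⟨χ, c1, c2, c3, c4, c5.trans (min_le_left _ _), c6.trans ?_⟩
  have : C * m ≤ ε / 2 := by
    have h1 : m ≤ ε / (2 * (C + 1)) := min_le_right _ _
    calc C * m ≤ (C + 1) * (ε / (2 * (C + 1))) := by gcongr; linarith
      _ = ε / 2 := by field_simp
  linarith

lemma polar_smallCap {P K : Set ℂ} (hP : PolarSet P) (hK : IsCompact K) (hKP : K ⊆ P) : SmallCap K := by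
  have := hK.induction_on (p := fun s => SmallCap (s ∩ K)) (by simpa using SmallCap.empty)
    (fun s t hst h => h.mono (inter_subset_inter_left _ hst))
    (fun s t hs ht => by rw [union_inter_distrib_right]; exact hs.union ht)
    (by
      intro x hx
      obtain ⟨U, hUo, hUc, hxU, u, hu, hne, hbot⟩ := hP x (hKP hx)
      obtain ⟨R, hR, h⟩ := polar_smallCap_local hUo hUc hu hne hxU
      obtain ⟨ρ, hρ, hρU⟩ := Metric.isOpen_iff.1 hUo x hxU
      set R' := min R (ρ / 2) with hR'
      have hR'0 : 0 < R' := lt_min hR (by linarith)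
      refine ⟨closedBall x R', mem_nhdsWithin_of_mem_nhds (closedBall_mem_nhds x hR'0), ?_⟩
      refine h _ (hK.inter_left isClosed_closedBall) ?_ ?_
      · exact inter_subset_left.trans (closedBall_subset_closedBall (min_le_left _ _))
      · rintro z ⟨h1, h2⟩
        refine hbot z ⟨hKP h2, hρU ?_⟩
        rw [mem_closedBall] at h1; rw [mem_ball]
        have : R' ≤ ρ / 2 := min_le_right _ _
        linarith)
  simpa using this


lemma param_holo {E : Type*} [NormedAddCommGroup E] [NormedSpace ℂ E] [ProperSpace E]
    {U : Set E} (hU : IsOpen U) {Φ : E → ℝ → ℂ}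
    (hc : ContinuousOn (Function.uncurry Φ) (U ×ˢ univ))
    (hd : ∀ θ, DifferentiableOn ℂ (fun p => Φ p θ) U) (a b : ℝ) :
    DifferentiableOn ℂ (fun p => ∫ θ in a..b, Φ p θ) U := by
  intro p0 hp0
  obtain ⟨R', hR', hR'U⟩ := Metric.isOpen_iff.1 hU p0 hp0
  set R := R' / 4 with hR
  have hR0 : 0 < R := by positivity
  have hsub : closedBall p0 (2 * R) ⊆ U :=
    (closedBall_subset_ball (by rw [hR]; linarith)).trans hR'U
  have hsec : ∀ p ∈ U, Continuous (Φ p) := by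
    intro p hp
    have := hc.comp_continuous (f := fun θ : ℝ => (p, θ)) (by fun_prop) (fun θ => ⟨hp, mem_univ _⟩)
    exact this
  have hcomp : IsCompact (closedBall p0 (2 * R) ×ˢ uIcc a b) :=
    (isCompact_closedBall _ _).prod isCompact_uIcc
  obtain ⟨M, hM⟩ := hcomp.exists_bound_of_continuousOn
    (hc.mono (prod_mono hsub (subset_univ _)))
  have hbound : ∀ θ ∈ uIoc a b, ∀ x ∈ ball p0 R,
      ‖fderiv ℂ (fun p => Φ p θ) x‖ ≤ 2 * M / R := by
    intro θ hθ x hx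
    have hxs : ball x R ⊆ closedBall p0 (2 * R) := by
      intro y hy
      rw [mem_ball] at hx hy
      rw [mem_closedBall]
      linarith [dist_triangle y x p0]
    refine Complex.norm_fderiv_le_div_of_mapsTo_ball ((hd θ).mono (hxs.trans hsub)) ?_ hR0
    intro y hy
    have h1 := hM (y, θ) ⟨hxs hy, uIoc_subset_uIcc hθ⟩
    have h2 := hM (x, θ) ⟨hxs (mem_ball_self hR0), uIoc_subset_uIcc hθ⟩
    simp only [Function.uncurry] at h1 h2
    rw [mem_closedBall, dist_eq_norm]
    linarith [norm_sub_le (Φ y θ) (Φ x θ)]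
  have hp0' : closedBall p0 R ⊆ U := (closedBall_subset_closedBall (by linarith)).trans hsub
  have hcont : Continuous (fun θ => fderiv ℂ (fun p => Φ p θ) p0) := by
    rw [continuous_iff_continuousAt]
    intro θ0
    rw [Metric.continuousAt_iff']
    intro ε hε
    have hsw : ContinuousOn (Function.uncurry (fun θ p => Φ p θ)) (univ ×ˢ closedBall p0 R) := by
      have := hc.comp (f := fun q : ℝ × E => (q.2, q.1)) (s := univ ×ˢ closedBall p0 R)
        (by fun_prop) (fun q hq => ⟨hp0' hq.2, mem_univ _⟩)
      exact this
    obtain ⟨v, hv, hv2⟩ := (isCompact_closedBall p0 R).mem_uniformity_of_prod hsw (mem_univ θ0)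
      (Metric.dist_mem_uniformity (show 0 < ε * R / 4 by positivity))
    rw [nhdsWithin_univ] at hv
    filter_upwards [hv] with θ hθ
    have hdU : ∀ θ, DifferentiableAt ℂ (fun p => Φ p θ) p0 := fun θ =>
      (hd θ).differentiableAt (hU.mem_nhds hp0)
    rw [dist_eq_norm, ← fderiv_sub (hdU θ) (hdU θ0)]
    refine (Complex.norm_fderiv_le_div_of_mapsTo_ball (R₁ := R) (R₂ := ε * R / 2) ?_ ?_ hR0).trans_lt ?_
    · exact ((hd θ).sub (hd θ0)).mono (ball_subset_closedBall.trans hp0')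
    · intro y hy
      have h1 := hv2 θ hθ y (ball_subset_closedBall hy)
      have h2 := hv2 θ hθ p0 (mem_closedBall_self hR0.le)
      simp only [mem_setOf_eq, dist_eq_norm] at h1 h2
      rw [mem_closedBall, dist_eq_norm]
      have := norm_sub_le (Φ y θ - Φ y θ0) (Φ p0 θ - Φ p0 θ0)
      simp only [Pi.sub_apply]
      linarith
    · rw [div_lt_iff₀ hR0]; nlinarith
  have := intervalIntegral.hasFDerivAt_integral_of_dominated_of_fderiv_le (μ := volume) (𝕜 := ℂ)
    (F := Φ) (F' := fun p θ => fderiv ℂ (fun p => Φ p θ) p) (x₀ := p0) (s := ball p0 R)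
    (bound := fun _ => 2 * M / R) (a := a) (b := b)
    (ball_mem_nhds _ hR0)
    (by
      filter_upwards [ball_mem_nhds p0 hR0] with x hx
      exact (hsec x (hp0' (ball_subset_closedBall hx))).aestronglyMeasurable)
    ((hsec p0 hp0).intervalIntegrable _ _)
    hcont.aestronglyMeasurable
    (Eventually.of_forall hbound)
    (by simp)
    (Eventually.of_forall fun θ _ x hx =>
      ((hd θ).differentiableAt (hU.mem_nhds (hp0' (ball_subset_closedBall hx)))).hasFDerivAt)
  exact this.differentiableAt.differentiableWithinAt

lemma circle_param {E : Type*} [NormedAddCommGroup E] [NormedSpace ℂ E] [ProperSpace E]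
    {D : Set (E × ℂ)} (hD : IsOpen D) {f : E × ℂ → ℂ} (hf : DifferentiableOn ℂ f D)
    {V : Set E} (hV : IsOpen V) {r s : ℝ} (hs : 0 < s) (hrs : r < s)
    (hVs : V ×ˢ sphere (0:ℂ) s ⊆ D) :
    DifferentiableOn ℂ (fun p : E × ℂ => ∮ ζ in C(0, s), (ζ - p.2)⁻¹ * f (p.1, ζ))
      (V ×ˢ ball (0:ℂ) r) := by
  have hne : ∀ p ∈ V ×ˢ ball (0:ℂ) r, ∀ θ, circleMap 0 s θ - p.2 ≠ 0 := by
    intro p hp θ h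
    have h1 : ‖circleMap 0 s θ‖ = s := by simp [abs_of_pos hs]
    rw [sub_eq_zero.1 h] at h1
    have := hp.2
    rw [mem_ball_zero_iff] at this
    linarith
  have hmem : ∀ p ∈ V ×ˢ ball (0:ℂ) r, ∀ θ, (p.1, circleMap 0 s θ) ∈ D := by
    intro p hp θ
    exact hVs ⟨hp.1, circleMap_mem_sphere _ hs.le _⟩
  unfold circleIntegral
  refine param_holo (hV.prod isOpen_ball) ?_ ?_ _ _
  · simp only [deriv_circleMap, smul_eq_mul, Function.uncurry_def]
    refine ContinuousOn.mul (by fun_prop) (ContinuousOn.mul ?_ ?_)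
    · refine ContinuousOn.inv₀ (by fun_prop) ?_
      intro x hx
      exact hne x.1 hx.1 x.2
    · exact hf.continuousOn.comp (f := fun x : (E × ℂ) × ℝ => (x.1.1, circleMap 0 s x.2))
        (by fun_prop) (fun x hx => hmem x.1 hx.1 x.2)
  · intro θ
    simp only [smul_eq_mul]
    refine DifferentiableOn.const_mul (DifferentiableOn.mul ?_ ?_) _
    · exact DifferentiableOn.inv (by fun_prop) (fun p hp => hne p hp θ)
    · exact hf.comp (f := fun p : E × ℂ => (p.1, circleMap 0 s θ)) (by fun_prop)
        (fun p hp => hmem p hp θ)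


lemma cauchy_fiber {O : Set ℂ} (hO : IsOpen O) {h : ℂ → ℂ} (hh : DifferentiableOn ℂ h O)
    (hL2 : ∫⁻ z in O, ‖h z‖ₑ ^ 2 < ⊤) {T : ℝ} (hOT : O ⊆ ball 0 T) {s t : ℝ} (hs : 0 < s)
    (hst : s < t) (hsO : sphere 0 s ⊆ O) (hK : SmallCap (closedBall 0 t \ O)) {w : ℂ}
    (hw : w ∈ O) (hws : ‖w‖ < s) :
    ∮ ζ in C(0, s), (ζ - w)⁻¹ * h ζ = 2 * Real.pi * Complex.I * h w := by
  have hG : DifferentiableOn ℂ (dslope h w) O :=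
    (Complex.differentiableOn_dslope (hO.mem_nhds hw)).2 hh
  obtain ⟨δ', hδ', hδO⟩ := Metric.isOpen_iff.1 hO w hw
  set δ := δ' / 2 with hδ
  have hδ0 : 0 < δ := by positivity
  have hsub : closedBall w δ ⊆ O := (closedBall_subset_ball (by rw [hδ]; linarith)).trans hδO
  obtain ⟨M, hM⟩ := (isCompact_closedBall w δ).exists_bound_of_continuousOn
    (hG.continuousOn.mono hsub)
  have hM0 : 0 ≤ M := (norm_nonneg _).trans (hM w (mem_closedBall_self hδ0.le))
  have hne : ∀ ζ, ζ ≠ w → dslope h w ζ = (ζ - w)⁻¹ * (h ζ - h w) := by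
    intro ζ hζ
    rw [dslope_of_ne _ hζ, slope_def_field, div_eq_inv_mul]
  have hbd : ∀ z, ‖dslope h w z‖ ≤ (M + ‖h w‖ / δ) + ‖h z‖ / δ := by
    intro z
    by_cases hz : z ∈ closedBall w δ
    · have := hM z hz
      have h1 : 0 ≤ ‖h w‖ / δ := by positivity
      have h2 : 0 ≤ ‖h z‖ / δ := by positivity
      linarith
    · rw [mem_closedBall, not_le, dist_eq_norm] at hz
      have hzw : z ≠ w := by
        rintro rfl
        simp at hz; linarith
      rw [hne z hzw, norm_mul, norm_inv]
      have h1 : ‖z - w‖⁻¹ ≤ δ⁻¹ := inv_anti₀ hδ0 hz.le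
      calc ‖z - w‖⁻¹ * ‖h z - h w‖ ≤ δ⁻¹ * (‖h z‖ + ‖h w‖) := by
            gcongr; exact norm_sub_le _ _
        _ ≤ _ := by
            rw [div_eq_inv_mul, div_eq_inv_mul]; linarith
  set A := 2 * (M + ‖h w‖ / δ) ^ 2 with hA
  set B := 2 / δ ^ 2 with hB
  have hsq : ∀ z, ‖dslope h w z‖ₑ ^ 2 ≤ ENNReal.ofReal A + ENNReal.ofReal B * ‖h z‖ₑ ^ 2 := by
    intro z
    have h1 : ‖dslope h w z‖ ^ 2 ≤ A + B * ‖h z‖ ^ 2 := by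
      have h2 : ‖dslope h w z‖ ^ 2 ≤ ((M + ‖h w‖ / δ) + ‖h z‖ / δ) ^ 2 :=
        pow_le_pow_left₀ (norm_nonneg _) (hbd z) 2
      have h3 : B * ‖h z‖ ^ 2 = 2 * (‖h z‖ / δ) ^ 2 := by
        rw [hB]; field_simp
      rw [h3, hA]
      nlinarith [sq_nonneg ((M + ‖h w‖ / δ) - ‖h z‖ / δ)]
    rw [← ofReal_norm_eq_enorm, ← ofReal_norm_eq_enorm, ← ENNReal.ofReal_pow (norm_nonneg _),
      ← ENNReal.ofReal_pow (norm_nonneg _), ← ENNReal.ofReal_mul (by positivity),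
      ← ENNReal.ofReal_add (by positivity) (by positivity)]
    exact ENNReal.ofReal_le_ofReal h1
  have hGL : ∫⁻ z in O, ‖dslope h w z‖ₑ ^ 2 < ⊤ := by
    refine (lintegral_mono hsq).trans_lt ?_
    rw [lintegral_add_left measurable_const, lintegral_const_mul' _ _ ENNReal.ofReal_ne_top]
    refine ENNReal.add_lt_top.2 ⟨?_, ENNReal.mul_lt_top ENNReal.ofReal_lt_top hL2⟩
    rw [setLIntegral_const]
    exact ENNReal.mul_lt_top ENNReal.ofReal_lt_top
      ((measure_mono hOT).trans_lt measure_ball_lt_top)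
  have h0 := circle_zero hO hG hGL hs hst hsO hK
  have hws' : ∀ ζ ∈ sphere (0:ℂ) s, ζ ≠ w := by
    intro ζ hζ hh
    rw [mem_sphere_zero_iff_norm, hh] at hζ
    linarith
  have hinv : ContinuousOn (fun ζ => (ζ - w)⁻¹) (sphere (0:ℂ) s) :=
    ContinuousOn.inv₀ (by fun_prop) (fun ζ hζ => sub_ne_zero.2 (hws' ζ hζ))
  have e1 : ∮ ζ in C(0, s), dslope h w ζ
      = ∮ ζ in C(0, s), ((ζ - w)⁻¹ * h ζ - (ζ - w)⁻¹ * h w) := by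
    refine circleIntegral.integral_congr hs.le ?_
    intro ζ hζ
    simp only [hne ζ (hws' ζ hζ)]; ring
  have e2 : ∮ ζ in C(0, s), ((ζ - w)⁻¹ * h ζ - (ζ - w)⁻¹ * h w)
      = (∮ ζ in C(0, s), (ζ - w)⁻¹ * h ζ) - ∮ ζ in C(0, s), (ζ - w)⁻¹ * h w :=
    circleIntegral.integral_sub
      ((hinv.mul (hh.continuousOn.mono hsO)).circleIntegrable hs.le)
      ((hinv.mul continuousOn_const).circleIntegrable hs.le)
  have e3 : ∮ ζ in C(0, s), (ζ - w)⁻¹ * h w = 2 * Real.pi * Complex.I * h w := by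
    have := circleIntegral.integral_smul_const (fun ζ => (ζ - w)⁻¹) (h w) 0 s
    simp only [smul_eq_mul] at this
    rw [this, circleIntegral.integral_sub_inv_of_mem_ball (mem_ball_zero_iff.2 hws)]
  rw [e1, e2, e3] at h0
  exact sub_eq_zero.1 h0

lemma final_ext {E : Type*} [NormedAddCommGroup E] [NormedSpace ℂ E] [ProperSpace E]
    [MeasureSpace E] [BorelSpace E] [SecondCountableTopology E] [SFinite (volume : Measure E)]
    [(volume : Measure E).IsOpenPosMeasure]
    (D : Set (E × ℂ)) (hopen : IsOpen D)
    (r t : ℝ) (hr : 0 < r) (hrt : r < t)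
    (K : E → Set ℂ)
    (hK : ∀ z' : E, K z' = {zn : ℂ | ‖zn‖ < t ∧ (z', zn) ∉ D})
    (h0 : PolarSet (K 0))
    (V : Set E) (hV : V ∈ 𝓝 (0 : E))
    (hae : ∀ᵐ z' ∂(volume : Measure E), z' ∈ V → PolarSet (K z')) :
    ∃ V' : Set E, IsOpen V' ∧ (0 : E) ∈ V' ∧ V' ⊆ V ∧
      ∀ f ∈ L2h D, ∃ F : (E × ℂ) → ℂ,
        DifferentiableOn ℂ F (V' ×ˢ Metric.ball (0 : ℂ) r) ∧
        Set.EqOn F f ((V' ×ˢ Metric.ball (0 : ℂ) r) ∩ D) := by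
  have hfib : ∀ z : E, IsOpen {w : ℂ | (z, w) ∈ D} := fun z =>
    hopen.preimage (f := fun w : ℂ => (z, w)) (by fun_prop)
  set t' := (r + t) / 2 with ht'
  have hrt' : r < t' := by rw [ht']; linarith
  have htt' : t' < t := by rw [ht']; linarith
  have hcomp : ∀ z : E, IsCompact (closedBall 0 t' \ {w : ℂ | (z, w) ∈ D}) := fun z =>
    (isCompact_closedBall _ _).diff (hfib z)
  have hsubK : ∀ z : E, closedBall 0 t' \ {w : ℂ | (z, w) ∈ D} ⊆ K z := by
    intro z w hw
    rw [hK]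
    exact ⟨(mem_closedBall_zero_iff.1 hw.1).trans_lt htt', hw.2⟩
  obtain ⟨s, hs, hsK⟩ := exists_circle (polar_smallCap h0 (hcomp 0) (hsubK 0)) hr hrt'
  have hs0 : 0 < s := hr.trans hs.1
  have hsph : ({(0:E)} : Set E) ×ˢ sphere (0:ℂ) s ⊆ D := by
    rintro ⟨z, w⟩ ⟨hz, hw⟩
    rw [mem_singleton_iff] at hz
    simp only at hz hw
    subst hz
    by_contra hnot
    refine hsK w ⟨?_, hnot⟩ (mem_sphere_zero_iff_norm.1 hw)
    rw [mem_closedBall_zero_iff, mem_sphere_zero_iff_norm.1 hw]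
    exact hs.2.le
  obtain ⟨V1, W1, hV1, hW1, h0V1, hsW1, hVW⟩ :=
    generalized_tube_lemma isCompact_singleton (isCompact_sphere (0:ℂ) s) hopen hsph
  obtain ⟨V2, hV2V, hV2, h0V2⟩ := _root_.mem_nhds_iff.1 hV
  refine ⟨V1 ∩ V2, hV1.inter hV2, ⟨h0V1 rfl, h0V2⟩, inter_subset_right.trans hV2V, ?_⟩
  intro f hf
  obtain ⟨hfd, hfL⟩ := hf
  have hVs : (V1 ∩ V2) ×ˢ sphere (0:ℂ) s ⊆ D :=
    (prod_mono inter_subset_left hsW1).trans hVW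
  have hFd := circle_param hopen hfd (hV1.inter hV2) hs0 hs.1 hVs
  set F : E × ℂ → ℂ := fun p => (2 * Real.pi * Complex.I)⁻¹ *
    ∮ ζ in C(0, s), (ζ - p.2)⁻¹ * f (p.1, ζ) with hF
  have hFd' : DifferentiableOn ℂ F ((V1 ∩ V2) ×ˢ ball (0 : ℂ) r) := hFd.const_mul _
  refine ⟨F, hFd', ?_⟩
  have hfibL : ∀ᵐ z ∂(volume : Measure E), ∫⁻ w in {w : ℂ | (z, w) ∈ D}, ‖f (z, w)‖ₑ ^ 2 < ⊤ := by
    have hm : Measurable (D.indicator f) := meas_indicator hopen hfd.continuousOn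
    have hm2 : Measurable (fun p => ‖D.indicator f p‖ₑ ^ 2) := hm.enorm.pow_const 2
    have e : ∫⁻ z in D, (‖f z‖₊ : ℝ≥0∞) ^ 2 = ∫⁻ p, ‖D.indicator f p‖ₑ ^ 2 := by
      rw [← lintegral_indicator hopen.measurableSet]
      congr 1; ext p
      by_cases hp : p ∈ D <;> simp [hp, enorm_eq_nnnorm]
    rw [e, Measure.volume_eq_prod, lintegral_prod _ hm2.aemeasurable] at hfL
    filter_upwards [ae_lt_top hm2.lintegral_prod_right' hfL.ne] with z hz
    refine lt_of_eq_of_lt ?_ hz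
    rw [← lintegral_indicator (hfib z).measurableSet]
    congr 1; ext w
    by_cases hp : (z, w) ∈ D <;> simp [indicator, hp]
  have hgood : ∀ᵐ z ∂(volume : Measure E), z ∈ V1 ∩ V2 → ∀ w : ℂ, ‖w‖ < r → (z, w) ∈ D →
      F (z, w) = f (z, w) := by
    filter_upwards [hae, hfibL] with z hz1 hz2 hz w hw hwD
    have hOo : IsOpen ({w : ℂ | (z, w) ∈ D} ∩ ball 0 t) := (hfib z).inter isOpen_ball
    have hK' : closedBall 0 t' \ ({w : ℂ | (z, w) ∈ D} ∩ ball 0 t)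
        = closedBall 0 t' \ {w : ℂ | (z, w) ∈ D} := by
      ext x
      simp only [Set.mem_sdiff, mem_inter_iff, not_and]
      constructor
      · rintro ⟨h1, h2⟩
        exact ⟨h1, fun h3 => h2 h3 (closedBall_subset_ball htt' h1)⟩
      · rintro ⟨h1, h2⟩
        exact ⟨h1, fun h3 => absurd h3 h2⟩
    have hd : DifferentiableOn ℂ (fun w => f (z, w)) ({w : ℂ | (z, w) ∈ D} ∩ ball 0 t) :=
      hfd.comp (f := fun w : ℂ => (z, w)) (by fun_prop) (fun w hw => hw.1)
    have := cauchy_fiber hOo hd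
      ((lintegral_mono_set inter_subset_left).trans_lt hz2) inter_subset_right hs0 hs.2
      (fun ζ hζ => ⟨hVs ⟨hz, hζ⟩, by
        rw [mem_ball_zero_iff, mem_sphere_zero_iff_norm.1 hζ]; exact hs.2.trans htt'⟩)
      (by rw [hK']; exact polar_smallCap (hz1 (hV2V hz.2)) (hcomp z) (hsubK z))
      (w := w) ⟨hwD, mem_ball_zero_iff.2 (hw.trans hrt)⟩ (hw.trans hs.1)
    simp only [hF, this]
    rw [inv_mul_cancel_left₀]
    exact Complex.two_pi_I_ne_zero
  rintro ⟨z0, w0⟩ ⟨⟨hz0, hw0⟩, hD0⟩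
  simp only at hz0 hw0
  by_contra hne
  have hO : IsOpen (((V1 ∩ V2) ×ˢ ball (0 : ℂ) r) ∩ D) :=
    ((hV1.inter hV2).prod isOpen_ball).inter hopen
  have hmem : (z0, w0) ∈ ((V1 ∩ V2) ×ˢ ball (0 : ℂ) r) ∩ D := ⟨⟨hz0, hw0⟩, hD0⟩
  have hcF : ContinuousAt F (z0, w0) :=
    (hFd'.continuousOn.mono inter_subset_left).continuousAt (hO.mem_nhds hmem)
  have hcf : ContinuousAt f (z0, w0) := hfd.continuousOn.continuousAt (hopen.mem_nhds hD0)
  have hev : ∀ᶠ p in 𝓝 (z0, w0), F p ≠ f p := ((hcF.sub hcf).tendsto.eventually_ne (sub_ne_zero.2 hne)).mono fun p hp => sub_ne_zero.1 hp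
  have hev2 : ∀ᶠ p in 𝓝 (z0, w0), F p ≠ f p ∧ p ∈ ((V1 ∩ V2) ×ˢ ball (0 : ℂ) r) ∩ D :=
    hev.and (hO.mem_nhds hmem)
  have hev3 : ∀ᶠ z in 𝓝 z0, F (z, w0) ≠ f (z, w0) ∧ (z, w0) ∈ ((V1 ∩ V2) ×ˢ ball (0 : ℂ) r) ∩ D :=
    (show ContinuousAt (fun z : E => (z, w0)) z0 by fun_prop).eventually hev2
  obtain ⟨z, hz, hz'⟩ := ((Measure.dense_of_ae hgood).inter_nhds_nonempty hev3)
  exact hz'.1 (hz hz'.2.1.1 w0 (mem_ball_zero_iff.1 hw0) hz'.2.2)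

/-- **Lemma 9.** Let `D` be a domain in `ℂⁿ = ℂ^{n-1} × ℂ`, `n ≥ 2`, and `0 < r < t`. For
`z' ∈ ℂ^{n-1}` let `K(z') = {zₙ : |zₙ| < t, (z', zₙ) ∉ D}`. If `K(0')` is polar and for a.e.
`z'` in some neighborhood `V` of `0'` the set `K(z')` is polar, then there is a neighborhood
`V' ⊆ V` of `0'` such that every `f ∈ L²ₕ(D)` extends holomorphically to `V' × rE`. -/
theorem extension_of_ae_polar_fibers {n : ℕ} (hn : 2 ≤ n)
    (D : Set ((Fin (n - 1) → ℂ) × ℂ)) (hopen : IsOpen D) (hconn : IsConnected D)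
    (r t : ℝ) (hr : 0 < r) (hrt : r < t)
    (K : (Fin (n - 1) → ℂ) → Set ℂ)
    (hK : ∀ z' : Fin (n - 1) → ℂ, K z' = {zn : ℂ | ‖zn‖ < t ∧ (z', zn) ∉ D})
    (h0 : PolarSet (K 0))
    (V : Set (Fin (n - 1) → ℂ)) (hV : V ∈ 𝓝 (0 : Fin (n - 1) → ℂ))
    (hae : ∀ᵐ z' ∂(volume : Measure (Fin (n - 1) → ℂ)), z' ∈ V → PolarSet (K z')) :
    ∃ V' : Set (Fin (n - 1) → ℂ), IsOpen V' ∧ (0 : Fin (n - 1) → ℂ) ∈ V' ∧ V' ⊆ V ∧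
      ∀ f ∈ L2h D, ∃ F : ((Fin (n - 1) → ℂ) × ℂ) → ℂ,
        DifferentiableOn ℂ F (V' ×ˢ Metric.ball (0 : ℂ) r) ∧
        Set.EqOn F f ((V' ×ˢ Metric.ball (0 : ℂ) r) ∩ D) := by
  exact final_ext D hopen r t hr hrt K hK h0 V hV hae
end

section
/- Let D be a bounded domain in ℂ and let w ∈ ∂D be a regular boundary point. For p ∈ D set D(p) := { z ∈ D : g_D(p, z) < -1 } and r(p) := diam D(p). Then r(p) → 0 as D ∋ p → w. -/
open MeasureTheory Filter Topology Metric Set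
open scoped ENNReal NNReal

lemma gsd_approx_span (c : ℂ) (R : ℝ) (hR : 0 < R) (g : C(AddCircle (2 * Real.pi), ℂ))
    (hg : g ∈ Submodule.span ℂ (Set.range (@fourier (2 * Real.pi)))) :
    ∀ a : ℂ, ∃ P : ℂ → ℂ, Differentiable ℂ P ∧ ∀ x : AddCircle (2 * Real.pi),
      (P (c + R * (AddCircle.toCircle x : ℂ))).re = (a * g x).re := by
  have hR' : (R : ℂ) ≠ 0 := by exact_mod_cast hR.ne'
  induction hg using Submodule.span_induction with
  | mem x hx =>
    obtain ⟨n, rfl⟩ := hx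
    intro a
    rcases Int.eq_nat_or_neg n with ⟨m, rfl | rfl⟩
    · refine ⟨fun z => a * ((z - c) / R) ^ m, by fun_prop, fun x => ?_⟩
      have : (c + R * (AddCircle.toCircle x : ℂ) - c) / R = (AddCircle.toCircle x : ℂ) := by
        field_simp; ring
      simp only [this, fourier_apply]
      simp [AddCircle.toCircle_nsmul]
    · refine ⟨fun z => (starRingEnd ℂ a) * ((z - c) / R) ^ m, by fun_prop, fun x => ?_⟩
      have : (c + R * (AddCircle.toCircle x : ℂ) - c) / R = (AddCircle.toCircle x : ℂ) := by
        field_simp; ring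
      simp only [this]
      rw [fourier_neg, ← Complex.conj_re (a * _), map_mul, Complex.conj_conj, fourier_apply]
      simp [AddCircle.toCircle_nsmul]
  | zero => intro a; exact ⟨0, differentiable_const 0, by simp⟩
  | add x y _ _ hx hy =>
    intro a
    obtain ⟨P, hP, hP'⟩ := hx a
    obtain ⟨Q, hQ, hQ'⟩ := hy a
    refine ⟨fun z => P z + Q z, hP.add hQ, fun t => ?_⟩
    simp only [Complex.add_re, hP', hQ', ContinuousMap.add_apply, mul_add]
  | smul b x _ hx =>
    intro a
    obtain ⟨P, hP, hP'⟩ := hx (a * b)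
    refine ⟨P, hP, fun t => ?_⟩
    rw [hP', ContinuousMap.smul_apply, smul_eq_mul, mul_assoc]

lemma gsd_approx (c : ℂ) (R : ℝ) (hR : 0 < R) (φ : ℂ → ℝ) (hφ : Continuous φ) (ε : ℝ)
    (hε : 0 < ε) : ∃ P : ℂ → ℂ, Differentiable ℂ P ∧ ∀ z ∈ sphere c R,
      |(P z).re - φ z| < ε := by
  have : Fact (0 < 2 * Real.pi) := ⟨Real.two_pi_pos⟩
  let Φ : C(AddCircle (2 * Real.pi), ℂ) :=
    ⟨fun x => (φ (c + R * (AddCircle.toCircle x : ℂ)) : ℂ), by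
      have := @AddCircle.continuous_toCircle (2 * Real.pi)
      fun_prop⟩
  have hΦ : Φ ∈ (Submodule.span ℂ (Set.range (@fourier (2 * Real.pi)))).topologicalClosure := by
    rw [span_fourier_closure_eq_top]; trivial
  rw [← SetLike.mem_coe, Submodule.topologicalClosure_coe, Metric.mem_closure_iff] at hΦ
  obtain ⟨g, hg, hd⟩ := hΦ ε hε
  obtain ⟨P, hP, hP'⟩ := gsd_approx_span c R hR g hg 1
  refine ⟨P, hP, fun z hz => ?_⟩
  have hz' : ‖(z - c) / R‖ = 1 := by
    rw [mem_sphere_iff_norm] at hz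
    rw [norm_div, hz, Complex.norm_real, Real.norm_of_nonneg hR.le, div_self hR.ne']
  obtain ⟨x, hx⟩ := (AddCircle.homeomorphCircle (T := 2 * Real.pi) (by positivity)).surjective
    ⟨(z - c) / R, mem_sphere_zero_iff_norm.2 hz'⟩
  have hx' : (AddCircle.toCircle x : ℂ) = (z - c) / R := by
    have := congrArg (fun y : Circle => (y : ℂ)) hx
    simpa [AddCircle.homeomorphCircle_apply] using this
  have hR' : (R : ℂ) ≠ 0 := by exact_mod_cast hR.ne'
  have hzz : c + R * (AddCircle.toCircle x : ℂ) = z := by rw [hx']; field_simp; ring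
  have h1 := hP' x
  rw [hzz, one_mul] at h1
  rw [h1]
  have h2 : dist (Φ x) (g x) < ε := (ContinuousMap.dist_apply_le_dist x).trans_lt hd
  have h3 : Φ x = (φ z : ℂ) := by
    change ((φ (c + R * (AddCircle.toCircle x : ℂ)) : ℝ) : ℂ) = _
    rw [hzz]
  rw [h3, dist_comm, dist_eq_norm] at h2
  have := Complex.abs_re_le_norm (g x - φ z)
  simp only [Complex.sub_re, Complex.ofReal_re] at this
  linarith

/-- average of the squared distance -/
lemma gsd_avg_sq (c w : ℂ) (R : ℝ) :
    Real.circleAverage (fun z => ‖z - w‖ ^ 2) c R = ‖c - w‖ ^ 2 + R ^ 2 := by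
  have h1 : Real.circleAverage (fun z => ‖z - w‖ ^ 2) c R =
      Real.circleAverage (Complex.reCLM ∘
        fun z => ((‖c - w‖ ^ 2 + R ^ 2 : ℝ) : ℂ) + 2 * ((z - c) * (starRingEnd ℂ) (c - w))) c R := by
    apply Real.circleAverage_congr_sphere
    intro z hz
    rw [mem_sphere_iff_norm] at hz
    have : z - w = (z - c) + (c - w) := by ring
    have h2 : ‖z - c‖ ^ 2 = R ^ 2 := by rw [hz, sq_abs]
    simp only [Function.comp, Complex.reCLM_apply]
    rw [this]
    rw [← h2]
    simp only [← Complex.normSq_eq_norm_sq, Complex.normSq_add]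
    simp [-Complex.ofReal_add]
    ring
  have hd : Differentiable ℂ fun z : ℂ =>
      ((‖c - w‖ ^ 2 + R ^ 2 : ℝ) : ℂ) + 2 * ((z - c) * (starRingEnd ℂ) (c - w)) := by fun_prop
  rw [h1, ContinuousLinearMap.circleAverage_comp_comm _
    (hd.continuous.continuousOn.circleIntegrable'), hd.diffContOnCl.circleAverage]
  simp [-Complex.ofReal_add]

lemma gsd_maxprinciple (w : ℂ) (r : ℝ) (hr : 0 < r) (f : ℂ → ℝ)
    (husc : UpperSemicontinuousOn f (closedBall w r))
    (hbd : ∀ z ∈ sphere w r, f z ≤ 0)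
    (hsub : ∀ c ∈ ball w r, 0 < f c → ∀ s > 0, ∃ R, 0 < R ∧ R < s ∧ ∃ g : ℂ → ℝ,
      CircleIntegrable g c R ∧ (∀ z ∈ sphere c R, g z ≤ f z) ∧ f c ≤ Real.circleAverage g c R) :
    ∀ z ∈ closedBall w r, f z ≤ 0 := by
  intro z₀ hz₀
  by_contra! hpos
  set δ := f z₀ / (2 * r ^ 2) with hδ
  have hδ0 : 0 < δ := by positivity
  have hδr : δ * r ^ 2 < f z₀ := by rw [hδ]; field_simp; linarith
  have hcont : Continuous fun z : ℂ => δ * ‖z - w‖ ^ 2 := by fun_prop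
  obtain ⟨c, hc, hmax⟩ := UpperSemicontinuousOn.exists_isMaxOn ⟨z₀, hz₀⟩ (isCompact_closedBall w r)
    (husc.add (hcont.upperSemicontinuous.upperSemicontinuousOn _))
  have hm : ∀ z ∈ closedBall w r, f z + δ * ‖z - w‖ ^ 2 ≤ f c + δ * ‖c - w‖ ^ 2 := fun z hz => hmax hz
  have h1 := hm z₀ hz₀
  have h2 : 0 ≤ δ * ‖z₀ - w‖ ^ 2 := by positivity
  have hcr : ‖c - w‖ ≤ r := by simpa [dist_eq_norm] using hc
  have h3 : δ * ‖c - w‖ ^ 2 ≤ δ * r ^ 2 := by gcongr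
  have hfc : 0 < f c := by linarith
  have hcb : c ∈ ball w r := by
    rw [mem_ball, dist_eq_norm]
    refine lt_of_le_of_ne hcr fun h => ?_
    have := hbd c (by rw [mem_sphere_iff_norm, h])
    linarith
  obtain ⟨R, hR, hRs, g, hg, hgf, hfg⟩ := hsub c hcb hfc (r - ‖c - w‖) (by
    rw [mem_ball, dist_eq_norm] at hcb; linarith)
  have hint : CircleIntegrable (fun z : ℂ => δ * ‖z - w‖ ^ 2) c R :=
    hcont.continuousOn.circleIntegrable'
  have h4 : Real.circleAverage (g + fun z : ℂ => δ * ‖z - w‖ ^ 2) c R ≤ f c + δ * ‖c - w‖ ^ 2 := by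
    apply Real.circleAverage_mono_on_of_le_circle (hg.add hint)
    intro z hz
    rw [abs_of_pos hR] at hz
    have hzb : z ∈ closedBall w r := by
      rw [mem_closedBall, dist_eq_norm]
      rw [mem_sphere_iff_norm] at hz
      have : ‖z - w‖ ≤ ‖z - c‖ + ‖c - w‖ := by simpa using norm_add_le (z - c) (c - w)
      linarith
    have := hm z hzb
    have := hgf z hz
    simp only [Pi.add_apply]; linarith
  rw [Real.circleAverage_add hg hint] at h4
  have h5 : Real.circleAverage (fun z : ℂ => δ * ‖z - w‖ ^ 2) c R = δ * (‖c - w‖ ^ 2 + R ^ 2) := by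
    rw [← gsd_avg_sq]
    exact Real.circleAverage_fun_smul (a := δ) (f := fun z : ℂ => ‖z - w‖ ^ 2)
  rw [h5] at h4
  have : 0 < δ * R ^ 2 := by positivity
  nlinarith


lemma gsd_harnack (w : ℂ) (r : ℝ) (hr : 0 < r) (P : ℂ → ℂ) (hP : Differentiable ℂ P)
    (hpos : ∀ z ∈ sphere w r, 0 ≤ (P z).re) (p : ℂ) (hp : ‖p - w‖ ≤ r / 2) :
    (P p).re ≤ 3 * Real.circleAverage (fun z => (P z).re) w r := by
  have hpb : p ∈ ball w r := by rw [mem_ball, dist_eq_norm]; linarith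
  have h := (hP.diffContOnCl (s := ball w r)).circleAverage_re_herglotzRieszKernel_smul hpb
  have hk : ContinuousOn (Complex.re ∘ herglotzRieszKernel w p) (sphere w |r|) :=
    Complex.continuous_re.comp_continuousOn (continuousOn_herglotzRieszKernel_sphere hpb)
  have hint : CircleIntegrable ((Complex.re ∘ herglotzRieszKernel w p) • P) w r :=
    (hk.smul hP.continuous.continuousOn).circleIntegrable'
  have h2 := ContinuousLinearMap.circleAverage_comp_comm Complex.reCLM hint
  rw [h] at h2
  have h3 : (P p).re = Real.circleAverage
      (Complex.reCLM ∘ ((Complex.re ∘ herglotzRieszKernel w p) • P)) w r := by rw [h2]; rfl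
  rw [h3]
  have h4 : 3 * Real.circleAverage (fun z => (P z).re) w r =
      Real.circleAverage (fun z => 3 * (P z).re) w r :=
    (Real.circleAverage_fun_smul (a := (3 : ℝ)) (f := fun z => (P z).re)).symm
  rw [h4]
  have hPc := hP.continuous
  apply Real.circleAverage_mono
  · exact (Complex.continuous_re.comp_continuousOn
      (hk.smul hP.continuous.continuousOn)).circleIntegrable'
  · exact (by fun_prop : Continuous fun z => 3 * (P z).re).continuousOn.circleIntegrable'
  · intro z hz
    rw [abs_of_pos hr] at hz
    have h5 := re_herglotzRieszKernel_le hz hpb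
    have h6 : (r + ‖p - w‖) / (r - ‖p - w‖) ≤ 3 := by
      rw [div_le_iff₀ (by linarith)]; linarith
    have h7 := hpos z hz
    simp only [Function.comp, Pi.smul_apply', Complex.reCLM_apply, Complex.smul_re, smul_eq_mul]
    exact mul_le_mul_of_nonneg_right (h5.trans h6) h7

lemma gsd_barrier (V : Set ℂ) (u : ℂ → EReal) (w : ℂ) (hu : SubharmonicOn u V)
    (hneg : ∀ z ∈ V, u z < 0) (hlim : Tendsto u (𝓝[V] w) (𝓝 (0 : EReal))) :
    ∃ b : ℂ → ℝ, UpperSemicontinuousOn b V ∧ (∀ z ∈ V, b z < 0) ∧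
      (∀ c ∈ V, ∀ R : ℝ, 0 < R → closedBall c R ⊆ V → CircleIntegrable b c R ∧
        b c ≤ Real.circleAverage b c R) ∧ Tendsto b (𝓝[V] w) (𝓝 (0 : ℝ)) := by
  obtain ⟨husc, -, hsub⟩ := hu
  let b : ℂ → ℝ := fun z => (max (u z) (-((1 : ℕ) : ℝ) : EReal)).toReal
  have hcoe : ∀ z ∈ V, ((b z : ℝ) : EReal) = max (u z) (-((1 : ℕ) : ℝ) : EReal) := by
    intro z hz
    apply EReal.coe_toReal
    · exact (max_lt ((hneg z hz).trans (by simp)) (by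
        have : (-((1 : ℕ) : ℝ) : EReal) = ((-1 : ℝ) : EReal) := by norm_num
        rw [this]; exact EReal.coe_lt_top _)).ne
    · refine (lt_of_lt_of_le ?_ (le_max_right _ _)).ne'
      have : (-((1 : ℕ) : ℝ) : EReal) = ((-1 : ℝ) : EReal) := by norm_num
      rw [this]; exact EReal.bot_lt_coe _
  have hb1 : ∀ z ∈ V, -1 ≤ b z := by
    intro z hz
    have := hcoe z hz
    have h : ((-1 : ℝ) : EReal) ≤ (b z : EReal) := by
      rw [this]; refine le_trans (le_of_eq ?_) (le_max_right _ _); norm_num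
    exact_mod_cast h
  have hb0 : ∀ z ∈ V, b z < 0 := by
    intro z hz
    have := hcoe z hz
    have h : (b z : EReal) < ((0 : ℝ) : EReal) := by
      rw [this]; refine max_lt (by simpa using hneg z hz) ?_
      have : (-((1 : ℕ) : ℝ) : EReal) = ((-1 : ℝ) : EReal) := by norm_num
      rw [this]; exact_mod_cast (by norm_num : (-1 : ℝ) < 0)
    exact_mod_cast h
  have huscb : UpperSemicontinuousOn b V := by
    intro z hz y hy
    by_cases hy1 : -1 < y
    · have h1 : u z < (y : EReal) := by
        refine lt_of_le_of_lt ?_ (EReal.coe_lt_coe_iff.2 hy)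
        rw [hcoe z hz]; exact le_max_left _ _
      filter_upwards [husc z hz _ h1, self_mem_nhdsWithin] with x hx hxV
      have h : (b x : EReal) < (y : EReal) := by
        rw [hcoe x hxV]
        refine max_lt hx ?_
        have : (-((1 : ℕ) : ℝ) : EReal) = ((-1 : ℝ) : EReal) := by norm_num
        rw [this]; exact_mod_cast hy1
      exact_mod_cast h
    · exact absurd (hb1 z hz) (by push Not at hy1; linarith)
  refine ⟨b, huscb, hb0, ?_, ?_⟩
  · intro c hc R hR hcb
    have hmem : ∀ θ, circleMap c R θ ∈ V := fun θ => hcb (circleMap_mem_closedBall c hR.le θ)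
    have hu1 : UpperSemicontinuous (b ∘ circleMap c R) := by
      rw [← upperSemicontinuousOn_univ_iff]
      exact huscb.comp (continuous_circleMap c R).continuousOn (fun θ _ => hmem θ)
    have hint : CircleIntegrable b c R := by
      have hm := hu1.measurable
      unfold CircleIntegrable
      rw [intervalIntegrable_iff]
      apply Measure.integrableOn_of_bounded (M := 1)
        (by rw [uIoc_of_le Real.two_pi_pos.le, Real.volume_Ioc]; exact ENNReal.ofReal_ne_top) hm.aestronglyMeasurable
      refine Eventually.of_forall fun θ => ?_
      rw [Real.norm_eq_abs, abs_le]
      exact ⟨hb1 _ (hmem θ), (hb0 _ (hmem θ)).le.trans zero_le_one⟩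
    refine ⟨hint, ?_⟩
    have h1 := (hsub c hc R hR hcb).trans (iInf_le _ 1)
    have h2 : circleAvgTrunc u c R 1 = Real.circleAverage b c R := rfl
    rw [h2] at h1
    have h3 : (b c : EReal) ≤ ((Real.circleAverage b c R : ℝ) : EReal) := by
      rw [hcoe c hc]
      refine max_le h1 ?_
      have : (-((1 : ℕ) : ℝ) : EReal) = ((-1 : ℝ) : EReal) := by norm_num
      rw [this]
      have h4 : Real.circleAverage (fun _ => (-1 : ℝ)) c R ≤ Real.circleAverage b c R := by
        apply Real.circleAverage_mono (circleIntegrable_const _ _ _) hint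
        intro z hz
        rw [abs_of_pos hR] at hz
        exact hb1 z (hcb (sphere_subset_closedBall hz))
      rw [Real.circleAverage_const] at h4
      exact_mod_cast h4
    exact_mod_cast h3
  · rw [tendsto_order]
    constructor
    · intro a ha
      have h1 : ((a : ℝ) : EReal) < 0 := by exact_mod_cast ha
      filter_upwards [(tendsto_order.1 hlim).1 _ h1, self_mem_nhdsWithin] with x hx hxV
      have : (a : EReal) < (b x : EReal) := by
        rw [hcoe x hxV]; exact lt_of_lt_of_le hx (le_max_left _ _)
      exact_mod_cast this
    · intro a ha
      filter_upwards [self_mem_nhdsWithin] with x hxV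
      exact (hb0 x hxV).trans ha

lemma gsd_compact (D : Set ℂ) (hD : IsOpen D) (w : ℂ) (r : ℝ) (ε : ℝ) (hε : 0 < ε) :
    ∃ L : Set ℂ, IsCompact L ∧ L ⊆ D ∧ L ⊆ sphere w |r| ∧ ∀ φ : ℂ → ℝ, Continuous φ →
      (∀ z, 0 ≤ φ z ∧ φ z ≤ 1) → (∀ z ∈ sphere w |r|, z ∉ D → φ z = 0) → (∀ z ∈ L, φ z = 0) →
      Real.circleAverage φ w r ≤ ε := by
  set V : Set ℝ := circleMap w r ⁻¹' D ∩ Ioc 0 (2 * Real.pi) with hV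
  have hVm : MeasurableSet V :=
    ((hD.preimage (continuous_circleMap w r)).measurableSet).inter measurableSet_Ioc
  have hfin : volume V ≠ ⊤ := by
    refine (lt_of_le_of_lt (measure_mono inter_subset_right) ?_).ne
    rw [Real.volume_Ioc]; exact ENNReal.ofReal_lt_top
  obtain ⟨K, hKV, hK, hKm⟩ := hVm.exists_isCompact_sdiff_lt hfin
    (ε := ENNReal.ofReal ε) (by simpa using hε)
  refine ⟨circleMap w r '' K, hK.image (continuous_circleMap w r), ?_, ?_, ?_⟩
  · rintro _ ⟨θ, hθ, rfl⟩; exact (hKV hθ).1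
  · rintro _ ⟨θ, hθ, rfl⟩; exact circleMap_mem_sphere' w r θ
  intro φ hφ h01 hφD hφL
  have h1 : ∫ θ in (0:ℝ)..(2 * Real.pi), φ (circleMap w r θ) ≤ ε := by
    rw [intervalIntegral.integral_of_le Real.two_pi_pos.le]
    have hint : IntegrableOn ((V \ K).indicator fun _ => (1 : ℝ)) (Ioc 0 (2 * Real.pi)) volume := by
      apply Integrable.indicator
      · simp
      · exact hVm.diff hK.measurableSet
    have hle : ∫ θ in Ioc 0 (2 * Real.pi), φ (circleMap w r θ) ≤
        ∫ θ in Ioc 0 (2 * Real.pi), (V \ K).indicator (fun _ => (1 : ℝ)) θ := by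
      apply setIntegral_mono_on _ hint measurableSet_Ioc
      · intro θ hθ
        by_cases hm : θ ∈ V \ K
        · rw [indicator_of_mem hm]; exact (h01 _).2
        · rw [indicator_of_notMem hm]
          by_cases hd : circleMap w r θ ∈ D
          · have : θ ∈ K := by
              by_contra hk; exact hm ⟨⟨hd, hθ⟩, hk⟩
            exact (hφL _ ⟨θ, this, rfl⟩).le
          · exact (hφD _ (circleMap_mem_sphere' w r θ) hd).le
      · have : Continuous fun θ => φ (circleMap w r θ) := hφ.comp (continuous_circleMap w r)
        exact (this.integrableOn_Icc).mono_set Ioc_subset_Icc_self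
    refine hle.trans ?_
    rw [setIntegral_indicator (hVm.diff hK.measurableSet)]
    simp only [integral_const, smul_eq_mul, mul_one]
    rw [Measure.real, Measure.restrict_apply_univ]
    refine ENNReal.toReal_le_of_le_ofReal hε.le ?_
    exact (measure_mono inter_subset_right).trans hKm.le
  rw [Real.circleAverage_def, smul_eq_mul]
  have h2 : (2 * Real.pi)⁻¹ ≤ 1 := by
    apply inv_le_one_of_one_le₀; linarith [Real.pi_gt_three]
  have h3 : 0 ≤ ∫ θ in (0:ℝ)..(2 * Real.pi), φ (circleMap w r θ) :=
    intervalIntegral.integral_nonneg Real.two_pi_pos.le fun θ _ => (h01 _).1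
  calc _ ≤ 1 * ∫ θ in (0:ℝ)..(2 * Real.pi), φ (circleMap w r θ) := by gcongr
    _ ≤ ε := by linarith

lemma gsd_bouligand (D U : Set ℂ) (hD : IsOpen D) (hU : IsOpen U) (w : ℂ) (b : ℂ → ℝ)
    (husc : UpperSemicontinuousOn b (U ∩ D)) (hneg : ∀ z ∈ U ∩ D, b z < 0)
    (hsub : ∀ c ∈ U ∩ D, ∀ R : ℝ, 0 < R → closedBall c R ⊆ U ∩ D → CircleIntegrable b c R ∧
        b c ≤ Real.circleAverage b c R) (hlim : Tendsto b (𝓝[U ∩ D] w) (𝓝 (0 : ℝ)))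
    (r : ℝ) (hr : 0 < r) (hrU : closedBall w r ⊆ U) (ε₀ : ℝ) (hε₀ : 0 < ε₀) :
    ∃ ρ > 0, ρ ≤ r / 2 ∧ ∀ G : ℂ → ℝ, Continuous G →
      (∀ c R, 0 < R → G c ≤ Real.circleAverage G c R) →
      (∀ z ∈ closedBall w r, 0 ≤ G z ∧ G z ≤ 1) →
      (∀ z ∈ closedBall w r, z ∉ D → G z = 0) → ∀ p ∈ ball w ρ, G p ≤ ε₀ := by
  obtain ⟨ε, hε, hεε⟩ : ∃ ε > 0, 11 * ε = ε₀ := ⟨ε₀ / 11, by positivity, by ring⟩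
  obtain ⟨L, hLc, hLD, hLs, hLφ⟩ := gsd_compact D hD w r ε hε
  rw [abs_of_pos hr] at hLs hLφ
  obtain ⟨t, ht, htL⟩ : ∃ t > 0, ∀ z ∈ L, t * b z ≤ -1 := by
    rcases L.eq_empty_or_nonempty with rfl | hne
    · exact ⟨1, one_pos, by simp⟩
    have hLU : L ⊆ U ∩ D := fun z hz => ⟨hrU (sphere_subset_closedBall (hLs hz)), hLD hz⟩
    obtain ⟨a, ha, hmax⟩ := UpperSemicontinuousOn.exists_isMaxOn hne hLc (husc.mono hLU)
    have hba := hneg a (hLU ha)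
    refine ⟨1 / (- b a), by apply one_div_pos.2; linarith, fun z hz => ?_⟩
    have : b z ≤ b a := hmax hz
    rw [div_mul_eq_mul_div, div_le_iff₀ (by linarith)]
    linarith
  obtain ⟨ρ₁, hρ₁, hρb⟩ : ∃ ρ₁ > 0, ∀ p ∈ ball w ρ₁, p ∈ U ∩ D → -ε < t * b p := by
    have h1 := (tendsto_order.1 hlim).1 (-(ε / t)) (by have := div_pos hε ht; linarith)
    rw [eventually_nhdsWithin_iff, Metric.eventually_nhds_iff] at h1
    obtain ⟨ρ₁, hρ₁, h⟩ := h1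
    refine ⟨ρ₁, hρ₁, fun p hp hpD => ?_⟩
    have := mul_lt_mul_of_pos_left (h hp hpD) ht
    have h2 : t * (-(ε / t)) = -ε := by field_simp
    linarith
  refine ⟨min ρ₁ (r / 2), by positivity, min_le_right _ _, ?_⟩
  intro G hGc hGsub hG01 hG0 p hp
  have hp1 : p ∈ ball w ρ₁ := ball_subset_ball (min_le_left _ _) hp
  have hp2 : p ∈ ball w (r / 2) := ball_subset_ball (min_le_right _ _) hp
  have hpr : p ∈ closedBall w r :=
    ball_subset_closedBall (ball_subset_ball (by linarith) hp2)
  by_cases hpD : p ∉ D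
  · rw [hG0 p hpr hpD]; exact hε₀.le
  push Not at hpD
  classical
  let f : ℂ → ℝ := fun z => if z ∈ D then max (G z + t * b z) 0 else 0
  have hfD : ∀ z ∈ D, f z = max (G z + t * b z) 0 := fun z hz => if_pos hz
  have hfn : ∀ z, z ∉ D → f z = 0 := fun z hz => if_neg hz
  have hf0 : ∀ z, 0 ≤ f z := by
    intro z; by_cases hz : z ∈ D
    · rw [hfD z hz]; exact le_max_right _ _
    · rw [hfn z hz]
  have hfG : ∀ z ∈ closedBall w r, f z ≤ G z := by
    intro z hz
    by_cases hzD : z ∈ D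
    · rw [hfD z hzD]
      refine max_le ?_ (hG01 z hz).1
      have := mul_neg_of_pos_of_neg ht (hneg z ⟨hrU hz, hzD⟩)
      linarith
    · rw [hfn z hzD]; exact (hG01 z hz).1
  have hfusc : UpperSemicontinuousOn f (closedBall w r) := by
    intro z hz y hy
    by_cases hzD : z ∈ D
    · have hy0 : 0 < y := (hf0 z).trans_lt hy
      have hzU : z ∈ U ∩ D := ⟨hrU hz, hzD⟩
      have h1 : G z + t * b z < y := by
        rw [hfD z hzD] at hy; exact (le_max_left _ _).trans_lt hy
      obtain ⟨d, hd, hdd⟩ : ∃ d > 0, G z + t * b z + 2 * d = y :=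
        ⟨(y - (G z + t * b z)) / 2, by linarith, by ring⟩
      have h2 : ∀ᶠ x in 𝓝 z, G x < G z + d :=
        (hGc.tendsto z).eventually_lt_const (by linarith)
      have h3 : ∀ᶠ x in 𝓝[U ∩ D] z, b x < b z + d / t :=
        husc z hzU _ (by have := div_pos hd ht; linarith)
      rw [(hU.inter hD).nhdsWithin_eq hzU] at h3
      apply mem_nhdsWithin_of_mem_nhds
      filter_upwards [h2, h3, hD.mem_nhds hzD] with x hx2 hx3 hxD
      change f x < y
      rw [hfD x hxD]
      refine max_lt ?_ hy0
      have := mul_lt_mul_of_pos_left hx3 ht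
      have h5 : t * (b z + d / t) = t * b z + d := by field_simp
      linarith
    · have h1 : G z < y := by rw [hG0 z hz hzD, ← hfn z hzD]; exact hy
      have h2 : ∀ᶠ x in 𝓝 z, G x < y := (hGc.tendsto z).eventually_lt_const h1
      filter_upwards [mem_nhdsWithin_of_mem_nhds h2, self_mem_nhdsWithin] with x hx hxb
      exact (hfG x hxb).trans_lt hx
  have hfL : ∀ z ∈ L, f z = 0 := by
    intro z hz
    rw [hfD z (hLD hz)]
    apply max_eq_right
    have := htL z hz
    have := (hG01 z (sphere_subset_closedBall (hLs hz))).2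
    linarith
  -- the closed sets
  have hF : IsClosed (sphere w r ∩ f ⁻¹' Ici ε) :=
    (UpperSemicontinuousOn.isCompact_inter_preimage_Ici
      (hfusc.mono sphere_subset_closedBall) (isCompact_sphere w r) ε).isClosed
  have hC : IsClosed ((sphere w r ∩ Dᶜ) ∪ L) :=
    (isClosed_sphere.inter hD.isClosed_compl).union hLc.isClosed
  have hdisj : Disjoint ((sphere w r ∩ Dᶜ) ∪ L) (sphere w r ∩ f ⁻¹' Ici ε) := by
    rw [Set.disjoint_left]
    rintro z hz ⟨-, hz2⟩
    have hz2' : ε ≤ f z := hz2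
    rcases hz with hz | hz
    · rw [hfn z hz.2] at hz2'; linarith
    · rw [hfL z hz] at hz2'; linarith
  obtain ⟨φ, hφ0, hφ1, hφ01⟩ := exists_continuous_zero_one_of_isClosed hC hF hdisj
  have hφavg : Real.circleAverage φ w r ≤ ε :=
    hLφ φ φ.continuous (fun z => hφ01 z) (fun z hz hzD => hφ0 (Or.inl ⟨hz, hzD⟩))
      (fun z hz => hφ0 (Or.inr hz))
  obtain ⟨P, hP, hPφ⟩ := gsd_approx w r hr φ φ.continuous ε hε
  have hPc := hP.continuous
  have hmp := gsd_maxprinciple w r hr (fun z => f z + (-(P z).re - 2 * ε))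
    (hfusc.add ((by fun_prop : Continuous fun z => -(P z).re - 2 * ε).upperSemicontinuous.upperSemicontinuousOn _))
    (by
      intro z hz
      have h1 := abs_lt.1 (hPφ z hz)
      by_cases hfz : ε ≤ f z
      · have h2 : φ z = 1 := hφ1 ⟨hz, hfz⟩
        have h3 := (hfG z (sphere_subset_closedBall hz)).trans
          (hG01 z (sphere_subset_closedBall hz)).2
        linarith
      · have := (hφ01 z).1
        linarith)
    (by
      intro c hc hcpos s hs
      have hcr : c ∈ closedBall w r := ball_subset_closedBall hc
      have hPavg : ∀ R, Real.circleAverage (fun z => -(P z).re - 2 * ε) c R = -(P c).re - 2 * ε := by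
        intro R
        have hd : Differentiable ℂ fun z => - P z - ((2 * ε : ℝ) : ℂ) := by fun_prop
        have h1 := ContinuousLinearMap.circleAverage_comp_comm Complex.reCLM
          (hd.continuous.continuousOn.circleIntegrable' (c := c) (R := R))
        rw [hd.diffContOnCl.circleAverage] at h1
        have h2 : (Complex.reCLM ∘ fun z => - P z - ((2 * ε : ℝ) : ℂ)) =
            fun z => -(P z).re - 2 * ε := by
          ext z; simp
        rw [h2] at h1
        rw [h1]; simp
      have hPint : ∀ R, CircleIntegrable (fun z => -(P z).re - 2 * ε) c R := fun R =>
        (by fun_prop : Continuous fun z => -(P z).re - 2 * ε).continuousOn.circleIntegrable'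
      by_cases hcf : f c = 0
      · refine ⟨s / 2, by positivity, by linarith, fun z => -(P z).re - 2 * ε, hPint _, ?_, ?_⟩
        · intro z _; have := hf0 z; linarith
        · rw [hPavg]; simp [hcf]
      · have hcD : c ∈ D := by
          by_contra h; exact hcf (hfn c h)
        have hcU : c ∈ U ∩ D := ⟨hrU hcr, hcD⟩
        obtain ⟨R₀, hR₀, hRD⟩ := Metric.isOpen_iff.1 (hU.inter hD) c hcU
        set R := min (s / 2) (R₀ / 2) with hRdef
        have hR : 0 < R := by positivity
        have hRs : R < s := (min_le_left _ _).trans_lt (by linarith)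
        have hRball : closedBall c R ⊆ U ∩ D :=
          (closedBall_subset_ball ((min_le_right _ _).trans_lt (by linarith))).trans hRD
        obtain ⟨hbi, hbs⟩ := hsub c hcU R hR hRball
        have hGi : CircleIntegrable G c R := hGc.continuousOn.circleIntegrable'
        have htbi : CircleIntegrable (t • b) c R := hbi.const_smul
        refine ⟨R, hR, hRs, (G + t • b) + fun z => -(P z).re - 2 * ε, (hGi.add htbi).add (hPint R),
          ?_, ?_⟩
        · intro z hz
          have hzD := (hRball (sphere_subset_closedBall hz)).2
          simp only [Pi.add_apply, Pi.smul_apply, smul_eq_mul]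
          rw [hfD z hzD]
          gcongr
          exact le_max_left _ _
        · rw [Real.circleAverage_add (hGi.add htbi) (hPint R), Real.circleAverage_add hGi htbi,
            hPavg, Real.circleAverage_smul, smul_eq_mul]
          have h1 : f c = G c + t * b c := by
            rw [hfD c hcD] at hcf ⊢
            rcases max_choice (G c + t * b c) 0 with h | h
            · exact h
            · exact absurd h hcf
          have h2 := hGsub c R hR
          have h3 := mul_le_mul_of_nonneg_left hbs ht.le
          simp only [h1]
          linarith)
    p hpr
  have hH := gsd_harnack w r hr (fun z => P z + (ε : ℂ)) (hP.add_const _)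
    (by
      intro z hz
      have h1 := abs_lt.1 (hPφ z hz)
      have := (hφ01 z).1
      simp only [Complex.add_re, Complex.ofReal_re]
      linarith) p (by rw [← dist_eq_norm]; exact (mem_ball.1 hp2).le)
  have hA : Real.circleAverage (fun z => (P z + (ε : ℂ)).re) w r ≤
      Real.circleAverage (fun z => φ z + 2 * ε) w r := by
    apply Real.circleAverage_mono
    · exact (by fun_prop : Continuous fun z => (P z + (ε : ℂ)).re).continuousOn.circleIntegrable'
    · exact (by fun_prop : Continuous fun z => φ z + 2 * ε).continuousOn.circleIntegrable'
    · intro z hz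
      rw [abs_of_pos hr] at hz
      have h1 := abs_lt.1 (hPφ z hz)
      simp only [Complex.add_re, Complex.ofReal_re]
      linarith
  have hB : Real.circleAverage (fun z => φ z + 2 * ε) w r = Real.circleAverage φ w r + 2 * ε := by
    have h := Real.circleAverage_add (f₁ := φ) (f₂ := fun _ => 2 * ε) (c := w) (R := r)
      φ.continuous.continuousOn.circleIntegrable' (circleIntegrable_const _ _ _)
    rw [Real.circleAverage_const] at h
    exact h
  simp only [Complex.add_re, Complex.ofReal_re] at hH hA
  have h5 := hρb p hp1 ⟨hrU hpr, hpD⟩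
  have h6 : G p + t * b p ≤ f p := by rw [hfD p hpD]; exact le_max_left _ _
  linarith

lemma gsd_avg_mono (f g : ℂ → ℝ) (c : ℂ) (R : ℝ) (hR : 0 < R) (s : Set ℂ) (hs : s.Countable)
    (hf : CircleIntegrable f c R) (hg : CircleIntegrable g c R)
    (hfg : ∀ z ∈ sphere c R, z ∉ s → f z ≤ g z) :
    Real.circleAverage f c R ≤ Real.circleAverage g c R := by
  unfold Real.circleAverage
  rw [smul_eq_mul, smul_eq_mul]
  apply mul_le_mul_of_nonneg_left _ (by positivity)
  apply intervalIntegral.integral_mono_ae Real.two_pi_pos.le hf hg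
  have h0 : volume (circleMap c R ⁻¹' s) = 0 :=
    (hs.preimage_circleMap c hR.ne').measure_zero _
  have h1 : ∀ᵐ θ, θ ∉ circleMap c R ⁻¹' s := measure_eq_zero_iff_ae_notMem.1 h0
  filter_upwards [h1] with θ hθ
  exact hfg _ (circleMap_mem_sphere c hR.le θ) hθ

lemma gsd_log_avg (a c : ℂ) (R : ℝ) (hR : 0 < R) :
    Real.log R ≤ Real.circleAverage (fun z => Real.log ‖z - a‖) c R ∧
    (c ≠ a → Real.log ‖c - a‖ ≤ Real.circleAverage (fun z => Real.log ‖z - a‖) c R) := by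
  have h := circleAverage_log_norm_sub_const_eq_log_radius_add_posLog (c := c) (a := a) hR.ne'
  rw [h]
  constructor
  · linarith [Real.posLog_nonneg (x := R⁻¹ * ‖c - a‖)]
  · intro hca
    have h1 : 0 < ‖c - a‖ := norm_pos_iff.2 (sub_ne_zero.2 hca)
    have h2 : Real.log (R⁻¹ * ‖c - a‖) ≤ Real.posLog (R⁻¹ * ‖c - a‖) := le_max_right _ _
    rw [Real.log_mul (by positivity) h1.ne', Real.log_inv] at h2
    linarith

lemma gsd_pot {ι : Type*} [Fintype ι] (a : ι → ℂ) (k : ι → ℝ) (hk : ∀ i, 0 ≤ k i)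
    (hk1 : ∑ i, k i = 1) (M : ℝ) : ∃ G : ℂ → ℝ, Continuous G ∧ (∀ z, M ≤ G z) ∧
      (∀ z, (∀ i, z ≠ a i) → G z = max (∑ i, k i * Real.log ‖z - a i‖) M) ∧
      (∀ c R, 0 < R → G c ≤ Real.circleAverage G c R) ∧
      (∀ c R, 0 < R → Real.log R ≤ Real.circleAverage G c R) ∧
      (∀ z A, M ≤ A → (∀ i, ‖z - a i‖ ≤ Real.exp A) → G z ≤ A) := by
  let Pr : ℂ → ℝ := fun z => ∏ i, ‖z - a i‖ ^ (k i)
  have hPr : ∀ z, 0 ≤ Pr z := fun z => Finset.prod_nonneg fun i _ => by positivity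
  have hmax : ∀ z, 0 < max (Pr z) (Real.exp M) := fun z => lt_max_of_lt_right (Real.exp_pos M)
  let G : ℂ → ℝ := fun z => Real.log (max (Pr z) (Real.exp M))
  have hPc : Continuous Pr := by
    apply continuous_finsetProd
    intro i _
    exact (by fun_prop : Continuous fun z => ‖z - a i‖).rpow_const fun _ => Or.inr (hk i)
  have hGc : Continuous G := (hPc.max continuous_const).log fun z => (hmax z).ne'
  have hGM : ∀ z, M ≤ G z := fun z => by
    rw [← Real.log_exp M]; exact Real.log_le_log (Real.exp_pos M) (le_max_right _ _)
  have hGS : ∀ z, (∀ i, z = a i → k i = 0) → G z = max (∑ i, k i * Real.log ‖z - a i‖) M := by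
    intro z hz
    have hne : ∀ i, 0 < ‖z - a i‖ ^ (k i) := by
      intro i
      by_cases h : z = a i
      · rw [hz i h, Real.rpow_zero]; exact one_pos
      · have : 0 < ‖z - a i‖ := norm_pos_iff.2 (sub_ne_zero.2 h)
        positivity
    have hpos : 0 < Pr z := Finset.prod_pos fun i _ => hne i
    have hlog : Real.log (Pr z) = ∑ i, k i * Real.log ‖z - a i‖ := by
      change Real.log (∏ i, ‖z - a i‖ ^ (k i)) = _
      rw [Real.log_prod (fun i _ => (hne i).ne')]
      refine Finset.sum_congr rfl fun i _ => ?_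
      by_cases h : z = a i
      · simp [hz i h]
      · exact Real.log_rpow (norm_pos_iff.2 (sub_ne_zero.2 h)) _
    change Real.log (max (Pr z) (Real.exp M)) = _
    rw [← hlog]
    rcases le_total (Pr z) (Real.exp M) with h | h
    · rw [max_eq_right h, Real.log_exp, max_eq_right]
      exact (Real.log_le_iff_le_exp hpos).2 h
    · rw [max_eq_left h, max_eq_left]
      exact (Real.le_log_iff_exp_le hpos).2 h
  have hGi : ∀ c R, CircleIntegrable G c R := fun c R => hGc.continuousOn.circleIntegrable'
  have hki : ∀ c R, ∀ i ∈ (Finset.univ : Finset ι),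
      CircleIntegrable (fun z => k i * Real.log ‖z - a i‖) c R := fun c R i _ =>
    (circleIntegrable_log_norm_sub_const (a := a i) (c := c) R).const_mul (k i)
  have hSavg : ∀ c R, 0 < R →
      ∑ i, k i * Real.circleAverage (fun z => Real.log ‖z - a i‖) c R ≤
        Real.circleAverage G c R := by
    intro c R hR
    have h1 : Real.circleAverage (fun z => ∑ i, k i * Real.log ‖z - a i‖) c R =
        ∑ i, k i * Real.circleAverage (fun z => Real.log ‖z - a i‖) c R := by
      rw [Real.circleAverage_fun_sum (hki c R)]
      refine Finset.sum_congr rfl fun i _ => ?_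
      exact Real.circleAverage_fun_smul (a := k i) (f := fun z => Real.log ‖z - a i‖)
    rw [← h1]
    refine gsd_avg_mono _ _ c R hR (range a) (finite_range a).countable ?_ (hGi c R) ?_
    · exact CircleIntegrable.fun_sum _ (hki c R)
    · intro z _ hz
      rw [hGS z fun i hi => absurd ⟨i, hi.symm⟩ hz]
      exact le_max_left _ _
  refine ⟨G, hGc, hGM, fun z hz => hGS z fun i hi => absurd hi (hz i), ?_, ?_, ?_⟩
  · intro c R hR
    have hM : M ≤ Real.circleAverage G c R := by
      have := Real.circleAverage_mono (c := c) (R := R) (circleIntegrable_const M c R) (hGi c R)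
        (fun z _ => hGM z)
      rwa [Real.circleAverage_const] at this
    by_cases h : ∀ i, c = a i → k i = 0
    · rw [hGS c h]
      refine max_le (le_trans ?_ (hSavg c R hR)) hM
      apply Finset.sum_le_sum
      intro i _
      by_cases hi : c = a i
      · simp [h i hi]
      · exact mul_le_mul_of_nonneg_left ((gsd_log_avg (a i) c R hR).2 hi) (hk i)
    · push Not at h
      obtain ⟨i, hi, hki⟩ := h
      have : Pr c = 0 := Finset.prod_eq_zero (Finset.mem_univ i) (by
        rw [hi, sub_self, norm_zero, Real.zero_rpow hki])
      have : G c = M := by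
        change Real.log (max (Pr c) (Real.exp M)) = _
        rw [this, max_eq_right (Real.exp_pos M).le, Real.log_exp]
      rw [this]; exact hM
  · intro c R hR
    refine le_trans ?_ (hSavg c R hR)
    calc Real.log R = ∑ i, k i * Real.log R := by rw [← Finset.sum_mul, hk1, one_mul]
      _ ≤ _ := Finset.sum_le_sum fun i _ =>
        mul_le_mul_of_nonneg_left (gsd_log_avg (a i) c R hR).1 (hk i)
  · intro z A hMA hz
    change Real.log (max (Pr z) (Real.exp M)) ≤ A
    rw [Real.log_le_iff_le_exp (hmax z)]
    refine max_le ?_ (Real.exp_le_exp.2 hMA)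
    calc Pr z ≤ ∏ i, Real.exp A ^ (k i) := Finset.prod_le_prod (fun i _ => by positivity)
          fun i _ => Real.rpow_le_rpow (norm_nonneg _) (hz i) (hk i)
      _ = Real.exp A := by
        rw [← Real.rpow_sum_of_pos (Real.exp_pos A), hk1, Real.rpow_one]

lemma gsd_dual (D : Set ℂ) (hbd : Bornology.IsBounded D) (w : ℂ) (r : ℝ) (hr : 0 < r)
    (hBou : ∀ ε₀ > (0 : ℝ), ∃ ρ > 0, ρ ≤ r / 2 ∧ ∀ G : ℂ → ℝ, Continuous G →
      (∀ c R, 0 < R → G c ≤ Real.circleAverage G c R) →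
      (∀ z ∈ closedBall w r, 0 ≤ G z ∧ G z ≤ 1) →
      (∀ z ∈ closedBall w r, z ∉ D → G z = 0) → ∀ p ∈ ball w ρ, G p ≤ ε₀)
    (η : ℝ) (hη : 0 < η) : ∃ ρ > 0, ρ ≤ r / 2 ∧ ∀ p ∈ ball w ρ, ∀ (ι : Type) [Fintype ι]
      (a : ι → ℂ) (k : ι → ℝ), (∀ i, 0 ≤ k i) → ∑ i, k i = 1 → (∀ i, a i ∈ D) →
      (∀ i, a i ≠ p) → ∃ ζ ∈ closedBall w r, ζ ∉ D ∧
        ∑ i, k i * Real.log ‖p - a i‖ - η ≤ ∑ i, k i * Real.log ‖ζ - a i‖ := by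
  obtain ⟨B, hB⟩ := hbd.subset_closedBall w
  set A := Real.log (r + |B|) with hA
  have hAD : ∀ z ∈ closedBall w r, ∀ a ∈ D, ‖z - a‖ ≤ Real.exp A := by
    intro z hz a ha
    rw [hA, Real.exp_log (by positivity), ← dist_eq_norm]
    have h1 := mem_closedBall.1 hz
    have h2 := mem_closedBall.1 (hB ha)
    have h3 := dist_triangle_right z a w
    linarith [le_abs_self B]
  obtain ⟨ρ₁, hρ₁, hρ₁r, h1⟩ := hBou (1 / 2) (by norm_num)
  set M₀ := 2 * Real.log (ρ₁ / 2) - A with hM₀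
  obtain ⟨ρ₂, hρ₂, hρ₂r, h2⟩ := hBou (η / (2 * (|A - M₀| + 1))) (by positivity)
  refine ⟨ρ₂, hρ₂, hρ₂r, ?_⟩
  intro p hp ι _ a k hk hk1 haD hap
  by_contra! hcon
  set M := ∑ i, k i * Real.log ‖p - a i‖ - η with hM
  have hpr : p ∈ closedBall w r :=
    ball_subset_closedBall (ball_subset_ball (by linarith) hp)
  have hMA : M ≤ A - η := by
    have : ∑ i, k i * Real.log ‖p - a i‖ ≤ ∑ i, k i * A := by
      refine Finset.sum_le_sum fun i _ => mul_le_mul_of_nonneg_left ?_ (hk i)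
      rw [Real.log_le_iff_le_exp (norm_pos_iff.2 (sub_ne_zero.2 (hap i).symm))]
      exact hAD p hpr _ (haD i)
    rw [← Finset.sum_mul, hk1, one_mul] at this
    linarith
  obtain ⟨G, hGc, hGM, hGS, hGsub, hGlog, hGA⟩ := gsd_pot a k hk hk1 M
  have hAM : 0 < A - M := by linarith
  let F : ℂ → ℝ := fun z => (A - M)⁻¹ * (G z - M)
  have hF1 : Continuous F := by fun_prop
  have hGi : ∀ c R, CircleIntegrable G c R := fun c R => hGc.continuousOn.circleIntegrable'
  have hF2 : ∀ c R, 0 < R → F c ≤ Real.circleAverage F c R := by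
    intro c R hR
    have e : Real.circleAverage F c R = (A - M)⁻¹ * (Real.circleAverage G c R - M) := by
      have e1 := Real.circleAverage_fun_smul (a := (A - M)⁻¹) (f := fun z => G z - M)
        (c := c) (R := R)
      have e2 := Real.circleAverage_fun_sub (hGi c R) (circleIntegrable_const M c R)
      rw [Real.circleAverage_const] at e2
      rw [e2] at e1
      exact e1
    rw [e]
    apply mul_le_mul_of_nonneg_left _ (by positivity)
    linarith [hGsub c R hR]
  have hF3 : ∀ z ∈ closedBall w r, 0 ≤ F z ∧ F z ≤ 1 := by
    intro z hz
    constructor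
    · exact mul_nonneg (by positivity) (by linarith [hGM z])
    · change (A - M)⁻¹ * (G z - M) ≤ 1
      rw [inv_mul_le_iff₀ hAM]
      linarith [hGA z A (by linarith) fun i => hAD z hz _ (haD i)]
  have hF4 : ∀ z ∈ closedBall w r, z ∉ D → F z = 0 := by
    intro z hz hzD
    change (A - M)⁻¹ * (G z - M) = 0
    rw [hGS z fun i h => hzD (h ▸ haD i), max_eq_right (hcon z hz hzD).le]
    simp
  have hGle : ∀ z ε, F z ≤ ε → G z ≤ M + (A - M) * ε := by
    intro z ε h
    have : (A - M)⁻¹ * (G z - M) ≤ ε := h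
    rw [inv_mul_le_iff₀ hAM] at this
    linarith
  have hM0 : M₀ ≤ M := by
    have h3 := hGlog w (ρ₁ / 2) (by positivity)
    have h4 : Real.circleAverage G w (ρ₁ / 2) ≤ M + (A - M) * (1 / 2) := by
      apply Real.circleAverage_mono_on_of_le_circle (hGi _ _)
      intro z hz
      rw [abs_of_pos (by positivity)] at hz
      apply hGle
      apply h1 F hF1 hF2 hF3 hF4
      rw [mem_ball, mem_sphere.1 hz]; linarith
    linarith
  have h5 := hGle p _ (h2 F hF1 hF2 hF3 hF4 p hp)
  have h6 : (A - M) * (η / (2 * (|A - M₀| + 1))) ≤ η / 2 := by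
    have : A - M ≤ |A - M₀| + 1 := by linarith [le_abs_self (A - M₀)]
    calc _ ≤ (|A - M₀| + 1) * (η / (2 * (|A - M₀| + 1))) := by gcongr
      _ = η / 2 := by field_simp
  have h7 : ∑ i, k i * Real.log ‖p - a i‖ ≤ G p := by
    rw [hGS p fun i => (hap i).symm]; exact le_max_left _ _
  linarith

lemma gsd_hb {X : Type*} [TopologicalSpace X] [CompactSpace X] [Nonempty X] (T : Set C(X, ℝ)) (hTne : T.Nonempty)
    (hT : ∀ g ∈ convexHull ℝ T, ∃ x, 0 ≤ g x) : ∃ L : C(X, ℝ) →L[ℝ] ℝ, L 1 = 1 ∧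
      (∀ g : C(X, ℝ), (∀ x, 0 ≤ g x) → 0 ≤ L g) ∧ ∀ g ∈ T, 0 ≤ L g := by
  let s : Set C(X, ℝ) := {g | ∀ x, g x < 0}
  have hsc : Convex ℝ s := by
    intro f hf g hg a b ha hb hab x
    have h1 := hf x
    have h2 := hg x
    simp only [ContinuousMap.add_apply, ContinuousMap.smul_apply, smul_eq_mul]
    rcases ha.eq_or_lt with rfl | ha'
    · have : b = 1 := by linarith
      subst this; linarith
    · nlinarith [mul_neg_of_pos_of_neg ha' h1, mul_nonneg hb (neg_nonneg.2 h2.le)]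
  have hso : IsOpen s := by
    have := ContinuousMap.isOpen_setOfPred_mapsTo (X := X) (Y := ℝ) isCompact_univ (isOpen_Iio (a := 0))
    convert this using 1
    ext g; simp [s, MapsTo]
  have hdisj : Disjoint s (convexHull ℝ T) := by
    rw [Set.disjoint_left]
    intro g hg hgT
    obtain ⟨x, hx⟩ := hT g hgT
    exact absurd (hg x) (not_lt.2 hx)
  obtain ⟨f, u, hfs, hft⟩ := geometric_hahn_banach_open hsc hso (convex_convexHull ℝ T) hdisj
  have hneg1 : ∀ t : ℝ, 0 < t → t * f (-1) < u := by
    intro t ht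
    have := hfs (t • (-1)) (by intro x; simpa using ht)
    simpa using this
  have hu0 : 0 ≤ u := by
    by_contra! h
    by_cases h1 : f (-1) < 0
    · have := hneg1 (u / (2 * f (-1))) (div_pos_of_neg_of_neg h (by linarith))
      have e : u / (2 * f (-1)) * f (-1) = u / 2 := by have hne := h1.ne; generalize f (-1) = x at hne; field_simp
      linarith
    · have := hneg1 1 one_pos
      linarith
  -- f ≤ 0 on s
  have hfs0 : ∀ g ∈ s, f g ≤ 0 := by
    intro g hg
    by_contra! h
    have := hfs (((u + 1) / f g) • g) (by
      intro x
      have : 0 < (u + 1) / f g := by positivity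
      simpa using mul_neg_of_pos_of_neg this (hg x))
    rw [map_smul, smul_eq_mul, div_mul_cancel₀ _ h.ne'] at this
    linarith
  have hpos : ∀ g : C(X, ℝ), (∀ x, 0 ≤ g x) → 0 ≤ f g := by
    intro g hg
    by_contra! h
    have hf1 : f (-1) ≤ 0 := hfs0 (-1) (by intro x; simp)
    have h1 : 0 ≤ f 1 := by rw [map_neg] at hf1; linarith
    obtain ⟨t, ht, ht2⟩ : ∃ t > 0, t * f 1 < - f g := by
      refine ⟨- f g / (2 * (f 1 + 1)), by apply div_pos <;> linarith, ?_⟩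
      rw [div_mul_eq_mul_div, div_lt_iff₀ (by linarith)]
      nlinarith
    have := hfs0 (-(g + t • 1)) (by
      intro x
      have := hg x
      simp
      linarith)
    rw [map_neg, map_add, map_smul, smul_eq_mul] at this
    linarith
  have hf1 : 0 < f 1 := by
    rcases (hpos 1 (by intro x; simp)).lt_or_eq with h | h
    · exact h
    exfalso
    have hz : ∀ g : C(X, ℝ), f g ≤ 0 := by
      intro g
      have h2 := hpos (‖g‖ • 1 - g) (by
        intro x
        have := (le_abs_self _).trans (g.norm_coe_le_norm x)
        simp; linarith)
      rw [map_sub, map_smul, ← h, smul_zero] at h2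
      linarith
    have h3 := hfs (-1) (by intro x; simp)
    rw [map_neg, ← h, neg_zero] at h3
    obtain ⟨g, hg⟩ := hTne
    · have := hft g (subset_convexHull ℝ T hg)
      linarith [hz g]
  refine ⟨(f 1)⁻¹ • f, by simp [hf1.ne'], fun g hg => ?_, fun g hg => ?_⟩
  · simpa using mul_nonneg (inv_nonneg.2 hf1.le) (hpos g hg)
  · have := hft g (subset_convexHull ℝ T hg)
    simpa using mul_nonneg (inv_nonneg.2 hf1.le) (hu0.trans this)

lemma gsd_kern (K : Set ℂ) [CompactSpace K] : ∃ kern : ℂ → C(K, ℝ),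
    (∀ z ∉ K, ∀ ζ : K, kern z ζ = Real.log ‖(ζ : ℂ) - z‖) ∧ ContinuousOn kern Kᶜ ∧
    ∀ c R, 0 < R → closedBall c R ⊆ Kᶜ → Real.circleAverage kern c R = kern c := by
  classical
  let Φ : C((Kᶜ : Set ℂ) × K, ℝ) := ⟨fun q => Real.log ‖(q.2 : ℂ) - q.1‖, by
    apply Continuous.log
    · fun_prop
    · rintro ⟨z, ζ⟩
      rw [norm_ne_zero_iff, sub_ne_zero]
      intro h
      exact z.2 (h ▸ ζ.2)⟩
  let kern : ℂ → C(K, ℝ) := fun z => if h : z ∈ Kᶜ then Φ.curry ⟨z, h⟩ else 0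
  have hk : ∀ z ∉ K, ∀ ζ : K, kern z ζ = Real.log ‖(ζ : ℂ) - z‖ := by
    intro z hz ζ
    have : kern z = Φ.curry ⟨z, hz⟩ := dif_pos hz
    rw [this]; rfl
  have hc : ContinuousOn kern Kᶜ := by
    rw [continuousOn_iff_continuous_domRestrict]
    convert Φ.curry.continuous using 1
    ext z ζ
    rw [domRestrict_apply, hk z.1 z.2]
    rfl
  refine ⟨kern, hk, hc, ?_⟩
  intro c R hR hcR
  have hint : CircleIntegrable kern c R :=
    (hc.mono ((by rw [abs_of_pos hR]; exact sphere_subset_closedBall :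
      sphere c |R| ⊆ closedBall c R).trans hcR)).circleIntegrable'
  ext ζ
  have h1 := ContinuousLinearMap.circleAverage_comp_comm (ContinuousMap.evalCLM ℝ ζ) hint
  have h2 : Real.circleAverage (ContinuousMap.evalCLM ℝ ζ ∘ kern) c R =
      Real.circleAverage (fun z => Real.log ‖z - (ζ : ℂ)‖) c R := by
    apply Real.circleAverage_congr_sphere
    intro z hz
    rw [abs_of_pos hR] at hz
    simp only [Function.comp_apply, ContinuousMap.evalCLM_apply]
    rw [hk z (hcR (sphere_subset_closedBall hz)), norm_sub_rev]
  have hζ : R < ‖c - ζ‖ := by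
    by_contra! h
    exact hcR (mem_closedBall'.2 (by rwa [dist_eq_norm])) ζ.2
  have h3 : Real.circleAverage (fun z => Real.log ‖z - (ζ : ℂ)‖) c R =
      Real.log R + Real.posLog (R⁻¹ * ‖c - ζ‖) :=
    circleAverage_log_norm_sub_const_eq_log_radius_add_posLog hR.ne'
  rw [h2, h3, Real.posLog_eq_log, Real.log_mul (by positivity) (by linarith), Real.log_inv] at h1
  · rw [hk c (hcR (mem_closedBall_self hR.le)), norm_sub_rev]
    rw [ContinuousMap.evalCLM_apply] at h1
    linarith
  · rw [abs_of_nonneg (by positivity), ← div_eq_inv_mul, one_le_div hR]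
    exact hζ.le

lemma gsd_integrable_congr (f g : ℂ → ℝ) (c : ℂ) (R : ℝ) (hR : 0 < R) (s : Set ℂ)
    (hs : s.Countable) (hf : CircleIntegrable f c R) (hfg : ∀ z ∈ sphere c R, z ∉ s → f z = g z) :
    CircleIntegrable g c R := by
  have h0 : volume (circleMap c R ⁻¹' s) = 0 :=
    (hs.preimage_circleMap c hR.ne').measure_zero _
  have h1 : ∀ᵐ θ, θ ∉ circleMap c R ⁻¹' s := measure_eq_zero_iff_ae_notMem.1 h0
  refine IntervalIntegrable.congr_ae hf (ae_restrict_of_ae ?_)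
  filter_upwards [h1] with θ hθ
  exact hfg _ (circleMap_mem_sphere c hR.le θ) hθ

lemma gsd_green (D : Set ℂ) (hD : IsOpen D) (p : ℂ) (q : ℂ → ℝ) (hq : ContinuousOn q D)
    (hqm : ∀ c R, 0 < R → closedBall c R ⊆ D → Real.circleAverage q c R = q c)
    (hpD : p ∈ D) (hneg : ∀ z ∈ D, z ≠ p → Real.log ‖z - p‖ - q z < 0) (z₀ : ℂ) (hz₀ : z₀ ≠ p) :
    ((Real.log ‖z₀ - p‖ - q z₀ : ℝ) : EReal) ≤ greenFn D p z₀ := by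
  classical
  let h : ℂ → ℝ := fun z => Real.log ‖z - p‖ - q z
  let v : ℂ → EReal := fun z => if z = p then ⊥ else ((h z : ℝ) : EReal)
  have hvp : v p = ⊥ := if_pos rfl
  have hv : ∀ z, z ≠ p → v z = ((h z : ℝ) : EReal) := fun z hz => if_neg hz
  have hqc : ∀ z ∈ D, ContinuousAt q z := fun z hz => hq.continuousAt (hD.mem_nhds hz)
  have hqp : ∀ᶠ x in 𝓝 p, q p - 1 < q x := (hqc p hpD).eventually_const_lt (by linarith)
  refine le_sSup ⟨v, ⟨?_, ?_, ?_⟩, ?_, ?_, ?_⟩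
  · intro z hz y hy
    apply mem_nhdsWithin_of_mem_nhds
    by_cases hzp : z = p
    · subst hzp
      rw [hvp] at hy
      obtain ⟨m, -, hm⟩ := EReal.lt_iff_exists_real_btwn.1 hy
      have h1 : ∀ᶠ x in 𝓝 z, ‖x - z‖ < Real.exp (m + (q z - 1)) := by
        have : Tendsto (fun x => ‖x - z‖) (𝓝 z) (𝓝 ‖z - z‖) :=
          (by fun_prop : Continuous fun x => ‖x - z‖).tendsto z
        apply this.eventually_lt_const
        rw [sub_self, norm_zero]; exact Real.exp_pos _
      filter_upwards [h1, hqp] with x hx1 hx2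
      by_cases hxz : x = z
      · rw [hxz, hvp]; exact hy
      · rw [hv x hxz]
        refine lt_trans ?_ hm
        rw [EReal.coe_lt_coe_iff]
        change Real.log ‖x - z‖ - q x < m
        have := (Real.log_lt_iff_lt_exp (norm_pos_iff.2 (sub_ne_zero.2 hxz))).2 hx1
        linarith
    · rw [hv z hzp] at hy
      have hhc : ContinuousAt h z := by
        apply ContinuousAt.sub _ (hqc z hz)
        apply ContinuousAt.log
        · fun_prop
        · exact norm_ne_zero_iff.2 (sub_ne_zero.2 hzp)
      have h2 : ContinuousAt (fun x => ((h x : ℝ) : EReal)) z :=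
        continuous_coe_real_ereal.continuousAt.comp hhc
      filter_upwards [h2.eventually_lt_const hy, eventually_ne_nhds hzp] with x hx1 hx2
      rw [hv x hx2]; exact hx1
  · intro z _
    by_cases hzp : z = p
    · rw [hzp, hvp]; exact bot_lt_top
    · rw [hv z hzp]; exact EReal.coe_lt_top _
  · intro c hc R hR hcR
    refine le_iInf fun n => ?_
    by_cases hcp : c = p
    · rw [hcp, hvp]; exact bot_le
    rw [hv c hcp, EReal.coe_le_coe_iff]
    let f : ℂ → ℝ := fun z => (max (v z) (-(n : ℝ) : EReal)).toReal
    have hf : ∀ z, z ≠ p → f z = max (h z) (-(n : ℝ)) := by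
      intro z hz
      change (max (v z) (-(n : ℝ) : EReal)).toReal = _
      rw [hv z hz, ← EReal.coe_neg, ← EReal.coe_strictMono.monotone.map_max, EReal.toReal_coe]
    have hs : sphere c |R| ⊆ D := by
      rw [abs_of_pos hR]; exact sphere_subset_closedBall.trans hcR
    have hqi : CircleIntegrable q c R := (hq.mono hs).circleIntegrable'
    have hli : CircleIntegrable (fun z => Real.log ‖z - p‖) c R :=
      circleIntegrable_log_norm_sub_const R
    have hhi : CircleIntegrable h c R := hli.sub hqi
    have hmi : CircleIntegrable (fun z => max (h z) (-(n : ℝ))) c R := by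
      have h1 := (intervalIntegrable_iff.1 hhi)
      have h2 := (intervalIntegrable_iff.1 (circleIntegrable_const (-(n : ℝ)) c R))
      exact intervalIntegrable_iff.2 (h1.sup h2)
    have hfi : CircleIntegrable f c R :=
      gsd_integrable_congr _ _ c R hR {p} (countable_singleton p) hmi fun z _ hz => (hf z hz).symm
    have e : circleAvgTrunc v c R n = Real.circleAverage f c R := rfl
    rw [e]
    have h3 : h c ≤ Real.circleAverage h c R := by
      have : Real.circleAverage h c R = _ := Real.circleAverage_fun_sub hli hqi
      rw [this, hqm c R hR hcR]
      have := (gsd_log_avg p c R hR).2 hcp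
      change Real.log ‖c - p‖ - q c ≤ _
      linarith
    refine h3.trans (gsd_avg_mono _ _ c R hR {p} (countable_singleton p) hhi hfi ?_)
    intro z _ hz
    rw [hf z hz]; exact le_max_left _ _
  · intro z hz
    by_cases hzp : z = p
    · rw [hzp, hvp]; exact EReal.bot_lt_zero
    · rw [hv z hzp]; exact_mod_cast hneg z hz hzp
  · refine ⟨1 - q p, ?_⟩
    filter_upwards [hqp] with x hx
    by_cases hxp : x = p
    · rw [hxp, hvp]; exact bot_le
    · rw [hv x hxp, EReal.coe_le_coe_iff]
      change Real.log ‖x - p‖ - q x ≤ _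
      linarith
  · rw [hv z₀ hz₀]

lemma gsd_main (D : Set ℂ) (hopen : IsOpen D) (w : ℂ) (hwD : w ∉ D) (r : ℝ) (hr : 0 < r)
    (p : ℂ) (hp : p ∈ D) (hpw : dist p w ≤ r) (η : ℝ) (hη : 0 < η)
    (hdual : ∀ (ι : Type) [Fintype ι]
      (a : ι → ℂ) (k : ι → ℝ), (∀ i, 0 ≤ k i) → ∑ i, k i = 1 → (∀ i, a i ∈ D) →
      (∀ i, a i ≠ p) → ∃ ζ ∈ closedBall w r, ζ ∉ D ∧
        ∑ i, k i * Real.log ‖p - a i‖ - η ≤ ∑ i, k i * Real.log ‖ζ - a i‖)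
    (z : ℂ) (hz : z ∈ D) (hzp : z ≠ p) :
    ((Real.log ‖z - p‖ - Real.log (‖z - p‖ + 2 * r) - 2 * η : ℝ) : EReal) ≤ greenFn D p z := by
  set K : Set ℂ := closedBall w r ∩ Dᶜ with hKdef
  have hK : IsCompact K := (isCompact_closedBall w r).inter_right hopen.isClosed_compl
  have : CompactSpace K := isCompact_iff_compactSpace.1 hK
  have : Nonempty K := ⟨⟨w, mem_closedBall_self hr.le, hwD⟩⟩
  have hDK : D ⊆ Kᶜ := fun x hx hxK => hxK.2 hx
  obtain ⟨kern, hk, hkc, hkm⟩ := gsd_kern K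
  let T : Set C(K, ℝ) := (fun x => kern x + (η - Real.log ‖x - p‖) • 1) '' (D \ {p})
  obtain ⟨L, hL1, hLpos, hLT⟩ := gsd_hb T ⟨_, mem_image_of_mem _ ⟨hz, hzp⟩⟩ (by
    intro g hg
    rw [mem_convexHull_iff_exists_fintype] at hg
    obtain ⟨ι, _, k, y, hk0, hk1, hy, rfl⟩ := hg
    choose a haD ha using hy
    obtain ⟨ζ, hζ, hζD, hle⟩ := hdual ι a k hk0 hk1 (fun i => (haD i).1) (fun i => (haD i).2)
    refine ⟨⟨ζ, hζ, hζD⟩, ?_⟩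
    have hterm : ∀ i, (k i • y i) ⟨ζ, hζ, hζD⟩ =
        k i * Real.log ‖ζ - a i‖ + k i * η - k i * Real.log ‖p - a i‖ := by
      intro i
      rw [← ha i]
      simp only [ContinuousMap.add_apply, ContinuousMap.smul_apply, ContinuousMap.one_apply,
        smul_eq_mul, mul_one]
      rw [hk (a i) (hDK (haD i).1), norm_sub_rev p (a i)]
      ring
    rw [ContinuousMap.sum_apply, Finset.sum_congr rfl fun i _ => hterm i,
      Finset.sum_sub_distrib, Finset.sum_add_distrib, ← Finset.sum_mul, hk1]
    linarith)
  have hlow : ∀ x ∈ D, x ≠ p → Real.log ‖x - p‖ - η ≤ L (kern x) := by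
    intro x hx hxp
    have := hLT _ (mem_image_of_mem _ ⟨hx, hxp⟩)
    rw [map_add, map_smul, hL1, smul_eq_mul, mul_one] at this
    linarith
  have hup : L (kern z) ≤ Real.log (‖z - p‖ + 2 * r) := by
    have := hLpos (Real.log (‖z - p‖ + 2 * r) • 1 - kern z) (by
      intro ζ
      have hζ : (ζ : ℂ) ≠ z := fun h => ζ.2.2 (h ▸ hz)
      simp only [ContinuousMap.sub_apply, ContinuousMap.smul_apply, ContinuousMap.one_apply,
        smul_eq_mul, mul_one]
      rw [hk z (hDK hz), sub_nonneg]
      apply Real.log_le_log (norm_pos_iff.2 (sub_ne_zero.2 hζ))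
      have h1 : dist (ζ : ℂ) w ≤ r := ζ.2.1
      have h2 := dist_triangle4 (ζ : ℂ) w p z
      rw [dist_comm w p, dist_comm p z, dist_eq_norm, dist_eq_norm z p] at h2
      linarith)
    rw [map_sub, map_smul, hL1, smul_eq_mul, mul_one] at this
    linarith
  have hg := gsd_green D hopen p (fun x => L (kern x) + 2 * η)
    ((L.continuous.comp_continuousOn (hkc.mono hDK)).add continuousOn_const)
    (by
      intro c R hR hcR
      have hint : CircleIntegrable kern c R :=
        (hkc.mono ((by rw [abs_of_pos hR]; exact sphere_subset_closedBall :
          sphere c |R| ⊆ closedBall c R).trans (hcR.trans hDK))).circleIntegrable'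
      have h1 := ContinuousLinearMap.circleAverage_comp_comm L hint
      rw [hkm c R hR (hcR.trans hDK)] at h1
      have h2 := Real.circleAverage_fun_add (f₁ := L ∘ kern) (f₂ := fun _ => 2 * η) (c := c)
        (R := R) (L.continuous.comp_continuousOn (hkc.mono
        ((by rw [abs_of_pos hR]; exact sphere_subset_closedBall :
          sphere c |R| ⊆ closedBall c R).trans (hcR.trans hDK)))).circleIntegrable'
        (circleIntegrable_const _ _ _)
      rw [h1, Real.circleAverage_const] at h2
      exact h2)
    hp (by
      intro x hx hxp
      have := hlow x hx hxp
      linarith) z hzp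
  refine le_trans ?_ hg
  rw [EReal.coe_le_coe_iff]
  linarith

/-- If `D ⊆ ℂ` is a bounded domain and `w ∈ ∂D` is a regular boundary point, then the
diameter of the sublevel set `D(p) = {z ∈ D : g_D(p,z) < -1}` of the Green function tends
to `0` as `D ∋ p → w`. -/
theorem green_sublevel_diam_tendsto_zero (D : Set ℂ)
    (hopen : IsOpen D) (hconn : IsConnected D) (hbd : Bornology.IsBounded D)
    (w : ℂ) (hw : w ∈ frontier D) (hreg : RegularBoundaryPt D w) :
    Tendsto (fun p => Metric.diam {z | z ∈ D ∧ greenFn D p z < (-1 : EReal)})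
      (𝓝[D] w) (𝓝 (0 : ℝ)) := by
  obtain ⟨U, hU, hwU, u, hu, huneg, hulim⟩ := hreg
  obtain ⟨b, husc, hbneg, hbsub, hblim⟩ := gsd_barrier (U ∩ D) u w hu huneg hulim
  have hwD : w ∉ D := by
    rw [hopen.frontier_eq] at hw
    exact hw.2
  rw [Metric.tendsto_nhds]
  intro ε hε
  obtain ⟨e, he, hee⟩ : ∃ e > 0, 3 * e = ε := ⟨ε / 3, by positivity, by ring⟩
  obtain ⟨r₀, hr₀, hr₀U⟩ := Metric.isOpen_iff.1 hU w hwU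
  obtain ⟨r, hr, hrr, hre⟩ : ∃ r > 0, r < r₀ ∧ r ≤ e / 8 :=
    ⟨min (r₀ / 2) (e / 8), by positivity, (min_le_left _ _).trans_lt (by linarith),
      min_le_right _ _⟩
  have hrU : closedBall w r ⊆ U := (closedBall_subset_ball hrr).trans hr₀U
  obtain ⟨ρ, hρ, hρr, hdual⟩ := gsd_dual D hbd w r hr
    (gsd_bouligand D U hopen hU w b husc hbneg hbsub hblim r hr hrU) (1 / 8) (by norm_num)
  filter_upwards [mem_nhdsWithin_of_mem_nhds (ball_mem_nhds w hρ), self_mem_nhdsWithin]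
    with p hp hpD
  have hsub : {z | z ∈ D ∧ greenFn D p z < (-1 : EReal)} ⊆ closedBall p e := by
    rintro z ⟨hz, hzg⟩
    by_contra hze
    rw [mem_closedBall, not_le, dist_eq_norm] at hze
    have hd : 0 < ‖z - p‖ := he.trans hze
    have hzp : z ≠ p := fun h => by rw [h, sub_self, norm_zero] at hd; exact lt_irrefl _ hd
    have hm := gsd_main D hopen w hwD r hr p hpD ((mem_ball.1 hp).le.trans (by linarith)) (1 / 8)
      (by norm_num) (hdual p hp) z hz hzp
    have h1 := hm.trans_lt hzg
    have h2 : Real.log ‖z - p‖ - Real.log (‖z - p‖ + 2 * r) - 2 * (1 / 8) < -1 := by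
      rw [← EReal.coe_lt_coe_iff, EReal.coe_neg, EReal.coe_one]
      exact h1
    have h3 : Real.log ((‖z - p‖ + 2 * r) / ‖z - p‖) ≤ (‖z - p‖ + 2 * r) / ‖z - p‖ - 1 :=
      Real.log_le_sub_one_of_pos (by positivity)
    rw [Real.log_div (by positivity) hd.ne', add_div, div_self hd.ne'] at h3
    have h4 : 2 * r / ‖z - p‖ ≤ 1 / 4 := by
      rw [div_le_iff₀ hd]; linarith
    linarith
  have hdiam := diam_mono hsub isBounded_closedBall
  have h2 := diam_closedBall (x := p) he.le
  rw [Real.dist_eq, sub_zero, abs_of_nonneg diam_nonneg]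
  linarith
end
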